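/- Let G be an abelian group, k a commutative G-ring, n a natural number, and δ ∈ k invertible. Then there is an isomorphism of graded k-modules Tor_*^{GB_n(δ)}(𝟙,𝟙) ≅ Tor_*^{k[G^n ⋊ Σ_n]}(k,k) = H_*(G^n ⋊ Σ_n; k), where Σ_n acts on G^n by permuting the factors. -/

import Mathlib

open scoped TensorProduct

noncomputable section

/-! ### Bar-complex homology of an augmented algebra

For a `k`-algebra `A` with augmentation `ε : A →ₐ[k] k` (the algebra map corresponding to
the trivial module `𝟙 = k`), we form the (unnormalized) bar complex `C_q = A^{⊗ q}`
(tensors over `k`), with the usual differential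
`d(a₁⊗…⊗a_q) = ε(a₁)(a₂⊗…) + Σ (-1)^i (…a_i a_{i+1}…) + (-1)^q ε(a_q)(a₁⊗…)`,
whose homology is `Tor_*^A(𝟙,𝟙)`. -/

/-- The modules `A^{⊗ q}` of the bar complex. -/
def barC (k : Type) [CommRing k] (A : Type) [Ring A] [Algebra k A] : ℕ → ModuleCat k
  | 0 => ModuleCat.of k k
  | (q + 1) => ModuleCat.of k (A ⊗[k] (barC k A q))

variable (k : Type) [CommRing k] (A : Type) [Ring A] [Algebra k A] (ε : A →ₐ[k] k)

/-- Left multiplication of `A` on the leftmost bar factor (via `ε` in degree `0`). -/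
def barAct : ∀ q : ℕ, A →ₗ[k] ((barC k A q : Type) →ₗ[k] (barC k A q : Type))
  | 0 => (LinearMap.lsmul k k).comp ε.toLinearMap
  | (q + 1) =>
    show A →ₗ[k] ((A ⊗[k] (barC k A q : Type)) →ₗ[k] (A ⊗[k] (barC k A q : Type))) from
    { toFun := fun a => TensorProduct.map (LinearMap.mulLeft k a) LinearMap.id
      map_add' := by
        intro a b
        refine TensorProduct.ext' fun x y => ?_
        simp [add_mul, TensorProduct.add_tmul]
      map_smul' := by
        intro c a
        refine TensorProduct.ext' fun x y => ?_
        simp [TensorProduct.smul_tmul', smul_mul_assoc] }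

/-- All terms of the bar differential except the first face. -/
def barB : ∀ q : ℕ, ((A ⊗[k] (barC k A q : Type)) →ₗ[k] (barC k A q : Type))
  | 0 => - TensorProduct.lift ((LinearMap.lsmul k (barC k A 0 : Type)).comp ε.toLinearMap)
  | (q + 1) =>
    show (A ⊗[k] (A ⊗[k] (barC k A q : Type))) →ₗ[k] (A ⊗[k] (barC k A q : Type)) from
    TensorProduct.lift (LinearMap.mk₂ k
      (fun (a : A) (x : A ⊗[k] (barC k A q : Type)) =>
        -((show A →ₗ[k] ((A ⊗[k] (barC k A q : Type)) →ₗ[k] (A ⊗[k] (barC k A q : Type))) from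
            barAct k A ε (q + 1)) a x) - a ⊗ₜ[k] (barB q x))
      (by intro a b x
          have key : ∀ (f : A →ₗ[k] ((A ⊗[k] (barC k A q : Type)) →ₗ[k] (A ⊗[k] (barC k A q : Type))))
              (y : (barC k A q : Type)),
              -(f (a + b) x) - (a + b) ⊗ₜ[k] y
                = (-(f a x) - a ⊗ₜ[k] y) + (-(f b x) - b ⊗ₜ[k] y) := by
            intro f y
            simp only [map_add, LinearMap.add_apply, TensorProduct.add_tmul]
            try abel
          exact key _ _)
      (by intro c a x
          have key : ∀ (f : A →ₗ[k] ((A ⊗[k] (barC k A q : Type)) →ₗ[k] (A ⊗[k] (barC k A q : Type))))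
              (y : (barC k A q : Type)),
              -(f (c • a) x) - (c • a) ⊗ₜ[k] y = c • (-(f a x) - a ⊗ₜ[k] y) := by
            intro f y
            simp only [map_smul, LinearMap.smul_apply, smul_sub, smul_neg,
              TensorProduct.smul_tmul']
          exact key _ _)
      (by intro a x y
          simp only [map_add, LinearMap.map_add, TensorProduct.tmul_add]
          try abel)
      (by intro c a x
          simp only [map_smul, LinearMap.map_smul, TensorProduct.tmul_smul, smul_sub, smul_neg]
          try abel))

/-- The bar differential `C_{q+1} = A ⊗ C_q → C_q`. -/
def bard (q : ℕ) : (A ⊗[k] (barC k A q : Type)) →ₗ[k] (barC k A q : Type) :=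
  TensorProduct.lift ((LinearMap.lsmul k (barC k A q : Type)).comp ε.toLinearMap)
  + barB k A ε q

/-- Cycles of the bar complex. -/
def barCycles : ∀ q : ℕ, Submodule k (barC k A q : Type)
  | 0 => ⊤
  | (q + 1) =>
    show Submodule k (barC k A (q + 1) : Type) from LinearMap.ker (bard k A ε q)

/-- `Tor_q^A(𝟙, 𝟙)`, the homology of the algebra `A` with augmentation (trivial module) `ε`,
computed by the bar complex. -/
def barTor (q : ℕ) : Type :=
  (barCycles k A ε q) ⧸
    (Submodule.comap (barCycles k A ε q).subtype (LinearMap.range (bard k A ε q)))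

instance (q : ℕ) : AddCommGroup (barTor k A ε q) :=
  inferInstanceAs (AddCommGroup ((barCycles k A ε q) ⧸
    (Submodule.comap (barCycles k A ε q).subtype (LinearMap.range (bard k A ε q)))))

instance (q : ℕ) : Module k (barTor k A ε q) :=
  inferInstanceAs (Module k ((barCycles k A ε q) ⧸
    (Submodule.comap (barCycles k A ε q).subtype (LinearMap.range (bard k A ε q)))))

/-- The augmentation of a group algebra `k[G]`, corresponding to the trivial action of `G`
on `k`. -/
def groupAug (G : Type) [Group G] : MonoidAlgebra k G →ₐ[k] k :=
  MonoidAlgebra.lift k k G 1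

/-- Group homology `H_*(G; k) = Tor_*^{k[G]}(k, k)` (with the trivial action on `k`). -/
abbrev groupTor (G : Type) [Group G] (q : ℕ) : Type :=
  barTor k (MonoidAlgebra k G) (groupAug k G) q

section Groups

/-- The action of the symmetric group on `G^n` by permuting the factors. -/
def permMulAut (G : Type) [Group G] (n : ℕ) :
    Equiv.Perm (Fin n) →* MulAut (Fin n → G) where
  toFun σ :=
    { toFun := fun f => f ∘ σ.symm
      invFun := fun f => f ∘ σ
      left_inv := fun f => by funext i; simp
      right_inv := fun f => by funext i; simp
      map_mul' := fun f g => rfl }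
  map_one' := by ext f i; rfl
  map_mul' := fun σ τ => by ext f i; rfl

/-- The Artin braid relations, on `m` generators (so for the braid group on `m+1` strands). -/
def braidRels (m : ℕ) : Set (FreeGroup (Fin m)) :=
  { x | ∃ i j : Fin m,
      ((i : ℕ) + 1 = (j : ℕ) ∧
        x = .of i * .of j * .of i * (.of j * .of i * .of j)⁻¹) ∨
      ((i : ℕ) + 1 < (j : ℕ) ∧
        x = .of i * .of j * (.of j * .of i)⁻¹) }

/-- The braid group `B_n` on `n` strands, presented by the Artin generators
`σ_1, …, σ_{n-1}` and the braid relations. -/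
abbrev BraidGroup (n : ℕ) : Type := PresentedGroup (braidRels (n - 1))

private lemma swap_braid {α : Type} [DecidableEq α] (a b c : α)
    (hab : a ≠ b) (hac : a ≠ c) (hbc : b ≠ c) :
    Equiv.swap a b * Equiv.swap b c * Equiv.swap a b
      = Equiv.swap b c * Equiv.swap a b * Equiv.swap b c := by
  have h1 : Equiv.swap b c * Equiv.swap a b * Equiv.swap b c = Equiv.swap c a :=
    Equiv.swap_mul_swap_mul_swap hab hac
  have h2 : Equiv.swap b a * Equiv.swap c b * Equiv.swap b a = Equiv.swap a c :=
    Equiv.swap_mul_swap_mul_swap hbc.symm hac.symm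
  rw [Equiv.swap_comm b a, Equiv.swap_comm c b] at h2
  rw [h1, h2, Equiv.swap_comm]

private lemma swap_swap_comm {α : Type} [DecidableEq α] (a b c d : α)
    (hac : a ≠ c) (had : a ≠ d) (hbc : b ≠ c) (hbd : b ≠ d) :
    Equiv.swap a b * Equiv.swap c d = Equiv.swap c d * Equiv.swap a b := by
  have h := Equiv.swap_apply_apply (Equiv.swap c d) a b
  rw [Equiv.swap_apply_of_ne_of_ne hac had, Equiv.swap_apply_of_ne_of_ne hbc hbd] at h
  exact eq_mul_inv_iff_mul_eq.mp h

/-- The transpositions which are the images of the braid generators. -/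
def braidGen (n : ℕ) (i : Fin (n - 1)) : Equiv.Perm (Fin n) :=
  Equiv.swap ⟨(i : ℕ), by have := i.2; omega⟩ ⟨(i : ℕ) + 1, by have := i.2; omega⟩

private lemma braidGen_braid (n : ℕ) (i j : Fin (n - 1)) (hij : (i : ℕ) + 1 = (j : ℕ)) :
    braidGen n i * braidGen n j * braidGen n i
      = braidGen n j * braidGen n i * braidGen n j := by
  obtain ⟨i, hi⟩ := i
  obtain ⟨j, hj⟩ := j
  simp only at hij
  subst hij
  unfold braidGen
  exact swap_braid _ _ _ (by simp only [ne_eq, Fin.mk.injEq]; omega)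
    (by simp only [ne_eq, Fin.mk.injEq]; omega) (by simp only [ne_eq, Fin.mk.injEq]; omega)

private lemma braidGen_comm (n : ℕ) (i j : Fin (n - 1)) (hij : (i : ℕ) + 1 < (j : ℕ)) :
    braidGen n i * braidGen n j = braidGen n j * braidGen n i := by
  unfold braidGen
  exact swap_swap_comm _ _ _ _ (by simp only [ne_eq, Fin.mk.injEq]; omega)
    (by simp only [ne_eq, Fin.mk.injEq]; omega) (by simp only [ne_eq, Fin.mk.injEq]; omega)
    (by simp only [ne_eq, Fin.mk.injEq]; omega)

/-- The canonical projection from the braid group to the symmetric group. -/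
def braidToPerm (n : ℕ) : BraidGroup n →* Equiv.Perm (Fin n) :=
  PresentedGroup.toGroup (f := braidGen n) (by
    rintro r ⟨i, j, (⟨hij, rfl⟩ | ⟨hij, rfl⟩)⟩ <;>
      simp only [map_mul, map_inv, FreeGroup.lift_apply_of] <;> rw [mul_inv_eq_one]
    · exact braidGen_braid n i j hij
    · exact braidGen_comm n i j hij)

end Groups

section GBsection

/-! The `G`-equivariant Brauer algebra `GB_n(δ)`: generators `s i` (transpositions),
`e i` (cap-cup hooks) and `t g j` (labels); a middle loop whose labels multiply to `g`
is deleted at the cost of the factor `(ρ g) δ = g•δ ∈ k`. -/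

inductive GBGen (n : ℕ) (G : Type) : Type
  | s : Fin (n - 1) → GBGen n G
  | e : Fin (n - 1) → GBGen n G
  | t : G → Fin n → GBGen n G

variable (k G : Type) [CommRing k] [CommGroup G] (ρ : G →* RingAut k) (n : ℕ) (δ : k)

abbrev GBs (i : Fin (n - 1)) : FreeAlgebra k (GBGen n G) := FreeAlgebra.ι k (GBGen.s i)
abbrev GBe (i : Fin (n - 1)) : FreeAlgebra k (GBGen n G) := FreeAlgebra.ι k (GBGen.e i)
abbrev GBt (g : G) (j : Fin n) : FreeAlgebra k (GBGen n G) := FreeAlgebra.ι k (GBGen.t g j)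

/-- The diagrammatic relations. -/
inductive GBRel : FreeAlgebra k (GBGen n G) → FreeAlgebra k (GBGen n G) → Prop
  | s_sq (i : Fin (n - 1)) :
      GBRel (GBs k G n i * GBs k G n i) (1)
  | s_braid (i j : Fin (n - 1)) (h : (j : ℕ) = (i : ℕ) + 1) :
      GBRel (GBs k G n i * GBs k G n j * GBs k G n i) (GBs k G n j * GBs k G n i * GBs k G n j)
  | ss_comm (i j : Fin (n - 1)) (h : (i : ℕ) + 1 < (j : ℕ)) :
      GBRel (GBs k G n i * GBs k G n j) (GBs k G n j * GBs k G n i)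
  | e_sq (i : Fin (n - 1)) :
      GBRel (GBe k G n i * GBe k G n i) (δ • GBe k G n i)
  | e_hook (i j : Fin (n - 1)) (h : (j : ℕ) = (i : ℕ) + 1 ∨ (i : ℕ) = (j : ℕ) + 1) :
      GBRel (GBe k G n i * GBe k G n j * GBe k G n i) (GBe k G n i)
  | ee_comm (i j : Fin (n - 1)) (h : (i : ℕ) + 1 < (j : ℕ)) :
      GBRel (GBe k G n i * GBe k G n j) (GBe k G n j * GBe k G n i)
  | se_absorb (i : Fin (n - 1)) :
      GBRel (GBs k G n i * GBe k G n i) (GBe k G n i)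
  | es_absorb (i : Fin (n - 1)) :
      GBRel (GBe k G n i * GBs k G n i) (GBe k G n i)
  | se_comm (i j : Fin (n - 1)) (h : (i : ℕ) + 1 < (j : ℕ) ∨ (j : ℕ) + 1 < (i : ℕ)) :
      GBRel (GBs k G n i * GBe k G n j) (GBe k G n j * GBs k G n i)
  | ese (i j : Fin (n - 1)) (h : (j : ℕ) = (i : ℕ) + 1 ∨ (i : ℕ) = (j : ℕ) + 1) :
      GBRel (GBe k G n i * GBs k G n j * GBe k G n i) (GBe k G n i)
  | sse (i j : Fin (n - 1)) (h : (j : ℕ) = (i : ℕ) + 1 ∨ (i : ℕ) = (j : ℕ) + 1) :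
      GBRel (GBs k G n i * GBs k G n j * GBe k G n i) (GBe k G n j * GBe k G n i)
  | ess (i j : Fin (n - 1)) (h : (j : ℕ) = (i : ℕ) + 1 ∨ (i : ℕ) = (j : ℕ) + 1) :
      GBRel (GBe k G n i * GBs k G n j * GBs k G n i) (GBe k G n i * GBe k G n j)
  | t_mul (g h' : G) (j : Fin n) :
      GBRel (GBt k G n g j * GBt k G n h' j) (GBt k G n (g * h') j)
  | t_one (j : Fin n) :
      GBRel (GBt k G n 1 j) (1)
  | tt_comm (g h' : G) (j l : Fin n) (h : j ≠ l) :
      GBRel (GBt k G n g j * GBt k G n h' l) (GBt k G n h' l * GBt k G n g j)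
  | st_comm (g : G) (i : Fin (n - 1)) (l : Fin n) (h : (l : ℕ) ≠ (i : ℕ) ∧ (l : ℕ) ≠ (i : ℕ) + 1) :
      GBRel (GBs k G n i * GBt k G n g l) (GBt k G n g l * GBs k G n i)
  | st_slide (g : G) (i : Fin (n - 1)) (j j' : Fin n) (h : (j : ℕ) = (i : ℕ)) (h' : (j' : ℕ) = (i : ℕ) + 1) :
      GBRel (GBs k G n i * GBt k G n g j) (GBt k G n g j' * GBs k G n i)
  | st_slide' (g : G) (i : Fin (n - 1)) (j j' : Fin n) (h : (j : ℕ) = (i : ℕ)) (h' : (j' : ℕ) = (i : ℕ) + 1) :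
      GBRel (GBs k G n i * GBt k G n g j') (GBt k G n g j * GBs k G n i)
  | et_comm (g : G) (i : Fin (n - 1)) (l : Fin n) (h : (l : ℕ) ≠ (i : ℕ) ∧ (l : ℕ) ≠ (i : ℕ) + 1) :
      GBRel (GBe k G n i * GBt k G n g l) (GBt k G n g l * GBe k G n i)
  | cap_slide_l (g : G) (i : Fin (n - 1)) (j j' : Fin n) (h : (j : ℕ) = (i : ℕ)) (h' : (j' : ℕ) = (i : ℕ) + 1) :
      GBRel (GBt k G n g j * GBe k G n i) (GBt k G n g j' * GBe k G n i)
  | cap_slide_r (g : G) (i : Fin (n - 1)) (j j' : Fin n) (h : (j : ℕ) = (i : ℕ)) (h' : (j' : ℕ) = (i : ℕ) + 1) :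
      GBRel (GBe k G n i * GBt k G n g j) (GBe k G n i * GBt k G n g j')
  | loop (g : G) (i : Fin (n - 1)) (j : Fin n) (h : (j : ℕ) = (i : ℕ)) :
      GBRel (GBe k G n i * GBt k G n g j * GBe k G n i) ((ρ g δ) • GBe k G n i)

/-- The diagram algebra: the quotient of the free algebra on the diagram generators by
the diagrammatic relations. -/
abbrev GBAlg : Type := RingQuot (GBRel k G ρ n δ)

/-- The augmentation corresponding to the trivial module `𝟙`: a diagram acts by `1`
if it has `n` left-to-right connections, and by `0` otherwise. -/
noncomputable def GBaug : GBAlg k G ρ n δ →ₐ[k] k :=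
  RingQuot.liftAlgHom k ⟨FreeAlgebra.lift k
      (fun x => match x with
        | GBGen.s _ => (1 : k)
        | GBGen.e _ => (0 : k)
        | GBGen.t _ _ => (1 : k)),
    by rintro x y h
       induction h <;>
         simp [GBs, GBe, GBt, FreeAlgebra.lift_ι_apply]⟩

end GBsection

section
namespace GBH
section Bar
open CategoryTheory

variable {R : Type} [CommRing R] {B : Type} [Ring B] [Algebra R B]

/-- Left multiplication on the first tensor factor. -/
def stepAct (R B : Type) [CommRing R] [Ring B] [Algebra R B] (Y : Type) [AddCommGroup Y]
    [Module R Y] : B →ₗ[R] ((B ⊗[R] Y) →ₗ[R] (B ⊗[R] Y)) :=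
  (LinearMap.rTensorHom Y).comp (LinearMap.mul R B)

@[simp] lemma stepAct_tmul {Y : Type} [AddCommGroup Y] [Module R Y] (a b : B) (y : Y) :
    stepAct R B Y a (b ⊗ₜ y) = (a * b) ⊗ₜ y := rfl

/-- Inductive step of the bar differential. -/
def stepBeta {Y : Type} [AddCommGroup Y] [Module R Y] (β : (B ⊗[R] Y) →ₗ[R] Y) :
    (B ⊗[R] (B ⊗[R] Y)) →ₗ[R] (B ⊗[R] Y) :=
  TensorProduct.lift (stepAct R B Y) - LinearMap.lTensor B β

lemma stepBeta_tmul {Y : Type} [AddCommGroup Y] [Module R Y] (β : (B ⊗[R] Y) →ₗ[R] Y)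
    (a : B) (x : B ⊗[R] Y) : stepBeta β (a ⊗ₜ x) = stepAct R B Y a x - a ⊗ₜ β x := rfl

/-- The modules of the bar complex with coefficients in `M`. -/
def XC (R B : Type) [CommRing R] [Ring B] [Algebra R B] (M : Type) [AddCommGroup M]
    [Module R M] : ℕ → ModuleCat R
  | 0 => ModuleCat.of R M
  | (q + 1) => ModuleCat.of R (B ⊗[R] (XC R B M q))

variable {M : Type} [AddCommGroup M] [Module R M] (ρ : B →ₐ[R] Module.End R M)

def act : ∀ q : ℕ, B →ₗ[R] ((XC R B M q : Type) →ₗ[R] (XC R B M q : Type))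
  | 0 => ρ.toLinearMap
  | (q + 1) => stepAct R B (XC R B M q)

def beta : ∀ q : ℕ, (B ⊗[R] (XC R B M q : Type)) →ₗ[R] (XC R B M q : Type)
  | 0 => TensorProduct.lift ρ.toLinearMap
  | (q + 1) => stepBeta (beta q)

lemma beta_succ_tmul (q : ℕ) (a : B) (x : B ⊗[R] (XC R B M q : Type)) :
    (beta ρ (q+1) (a ⊗ₜ[R] x) : B ⊗[R] (XC R B M q : Type))
      = stepAct R B (XC R B M q) a x - a ⊗ₜ[R] (beta ρ q x) := rfl

lemma stepAct_mul {Y : Type} [AddCommGroup Y] [Module R Y] (a b : B) (x : B ⊗[R] Y) :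
    stepAct R B Y (a * b) x = stepAct R B Y a (stepAct R B Y b x) := by
  induction x using TensorProduct.induction_on with
  | zero => simp
  | tmul c z => simp [mul_assoc]
  | add x y hx hy => simp only [map_add, hx, hy]

lemma stepBeta_act {Y : Type} [AddCommGroup Y] [Module R Y] (β : (B ⊗[R] Y) →ₗ[R] Y)
    (a : B) (x : B ⊗[R] (B ⊗[R] Y)) :
    stepBeta β (stepAct R B _ a x) = stepAct R B Y a (stepBeta β x) := by
  induction x using TensorProduct.induction_on with
  | zero => simp
  | tmul b y => rw [stepAct_tmul, stepBeta_tmul, stepBeta_tmul, map_sub, stepAct_tmul, stepAct_mul]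
  | add x y hx hy => simp only [map_add, hx, hy]

lemma stepBeta_stepBeta {Y : Type} [AddCommGroup Y] [Module R Y] (β : (B ⊗[R] Y) →ₗ[R] Y)
    (h : ∀ x, β (stepBeta β x) = 0) (x : B ⊗[R] (B ⊗[R] (B ⊗[R] Y))) :
    stepBeta β (stepBeta (stepBeta β) x) = 0 := by
  induction x using TensorProduct.induction_on with
  | zero => simp
  | tmul b y => rw [stepBeta_tmul, map_sub, stepBeta_act, stepBeta_tmul, h]; simp
  | add x y hx hy => simp only [map_add, hx, hy, add_zero]

lemma lift_stepBeta {M : Type} [AddCommGroup M] [Module R M] (ρ : B →ₐ[R] Module.End R M)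
    (x : B ⊗[R] (B ⊗[R] M)) : TensorProduct.lift ρ.toLinearMap
      (stepBeta (TensorProduct.lift ρ.toLinearMap) x) = 0 := by
  induction x using TensorProduct.induction_on with
  | zero => simp
  | tmul b y =>
    induction y using TensorProduct.induction_on with
    | zero => simp
    | tmul c m => rw [stepBeta_tmul]; simp
    | add x y hx hy => simp only [TensorProduct.tmul_add, map_add, hx, hy, add_zero]
  | add x y hx hy => simp only [map_add, hx, hy, add_zero]

lemma beta_beta (q : ℕ) (x : B ⊗[R] (B ⊗[R] (XC R B M q : Type))) :
    beta ρ q (stepBeta (beta ρ q) x) = 0 := by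
  induction q with
  | zero => exact lift_stepBeta ρ x
  | succ q ih => exact stepBeta_stepBeta _ ih x

variable (ε : B →ₐ[R] R)

def augE (Y : Type) [AddCommGroup Y] [Module R Y] : (B ⊗[R] Y) →ₗ[R] Y :=
  TensorProduct.lift ((LinearMap.lsmul R Y).comp ε.toLinearMap)

@[simp] lemma augE_tmul {Y : Type} [AddCommGroup Y] [Module R Y] (a : B) (y : Y) :
    augE ε Y (a ⊗ₜ y) = ε a • y := rfl

/-- The bar differential. -/
def dd (q : ℕ) : (B ⊗[R] (XC R B M q : Type)) →ₗ[R] (XC R B M q : Type) :=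
  augE ε (XC R B M q) - beta ρ q

lemma augE_act {Y : Type} [AddCommGroup Y] [Module R Y] (a : B) (x : B ⊗[R] Y) :
    augE ε Y (stepAct R B Y a x) = ε a • augE ε Y x := by
  induction x using TensorProduct.induction_on with
  | zero => simp
  | tmul b y => simp [mul_smul]
  | add x y hx hy => rw [map_add, map_add, hx, hy, map_add, smul_add]

lemma dd_tmul (q : ℕ) (a : B) (x : XC R B M q) :
    dd ρ ε q (a ⊗ₜ x) = ε a • x - beta ρ q (a ⊗ₜ x) := rfl

lemma step_dd_dd {Y : Type} [AddCommGroup Y] [Module R Y] (β : (B ⊗[R] Y) →ₗ[R] Y)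
    (h : ∀ x, β (stepBeta β x) = 0) (x : B ⊗[R] (B ⊗[R] Y)) :
    (augE ε Y - β) ((augE ε (B ⊗[R] Y) - stepBeta β) x) = 0 := by
  induction x using TensorProduct.induction_on with
  | zero => simp
  | tmul a y =>
    have h1 := h (a ⊗ₜ y)
    simp only [stepBeta_tmul, map_sub] at h1
    have h2 := sub_eq_zero.mp h1
    simp only [LinearMap.sub_apply, map_sub, augE_tmul, stepBeta_tmul, augE_act, map_smul, h2,
      smul_sub]
    abel
  | add x y hx hy => rw [map_add, map_add, hx, hy, add_zero]

lemma dd_dd (q : ℕ) (x : B ⊗[R] (XC R B M (q+1) : Type)) :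
    dd ρ ε q (dd ρ ε (q+1) x) = 0 := step_dd_dd ε _ (beta_beta ρ q) x

/-- The bar complex. -/
def Bar : ChainComplex (ModuleCat R) ℕ :=
  ChainComplex.of (XC R B M) (fun q => ModuleCat.ofHom (dd ρ ε q)) (fun q => by
    ext x
    exact dd_dd ρ ε q x)

lemma Bar_d (q : ℕ) : (Bar ρ ε).d (q+1) q = ModuleCat.ofHom (dd ρ ε q) :=
  ChainComplex.of_d (XC R B M) (fun q => ModuleCat.ofHom (dd ρ ε q)) q

/-- Elementwise exactness of the bar complex in degree `q`. -/
def Ex : ℕ → Prop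
  | 0 => ∀ z : M, ∃ w : B ⊗[R] M, dd ρ ε 0 w = z
  | (q + 1) => ∀ z : (B ⊗[R] (XC R B M q : Type)), dd ρ ε q z = 0 →
      ∃ w : B ⊗[R] (B ⊗[R] (XC R B M q : Type)), dd ρ ε (q + 1) w = z

lemma exactAt_iff (q : ℕ) : (Bar ρ ε).ExactAt q ↔ Ex ρ ε q := by
  cases q with
  | zero =>
    rw [HomologicalComplex.exactAt_iff' _ 1 0 0 (by simp) (by simp),
      ShortComplex.moduleCat_exact_iff]
    have h0 : (Bar ρ ε).d 0 0 = 0 := HomologicalComplex.shape _ _ _ (by simp)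
    simp only [HomologicalComplex.shortComplexFunctor'_obj_f,
      HomologicalComplex.shortComplexFunctor'_obj_g, HomologicalComplex.sc', h0]
    rw [Bar_d ρ ε 0]
    constructor
    · intro h z
      exact h z rfl
    · intro h z _
      exact h z
  | succ q =>
    rw [HomologicalComplex.exactAt_iff' _ (q+2) (q+1) q (by simp) (by simp),
      ShortComplex.moduleCat_exact_iff]
    simp only [HomologicalComplex.shortComplexFunctor'_obj_f,
      HomologicalComplex.shortComplexFunctor'_obj_g, HomologicalComplex.sc']
    rw [Bar_d ρ ε (q+1), Bar_d ρ ε q]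
    rfl

section map
variable {B' : Type} [Ring B'] [Algebra R B'] {M' : Type} [AddCommGroup M'] [Module R M']
  (ρ' : B' →ₐ[R] Module.End R M') (ε' : B' →ₐ[R] R)

def Xmap (π : B →ₐ[R] B') (f : M →ₗ[R] M') :
    ∀ q : ℕ, (XC R B M q : Type) →ₗ[R] (XC R B' M' q : Type)
  | 0 => f
  | (q + 1) => TensorProduct.map π.toLinearMap (Xmap π f q)

lemma map_stepAct {Y Y' : Type} [AddCommGroup Y] [Module R Y] [AddCommGroup Y'] [Module R Y']
    (π : B →ₐ[R] B') (g : Y →ₗ[R] Y') (a : B) (x : B ⊗[R] Y) :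
    TensorProduct.map π.toLinearMap g (stepAct R B Y a x) =
      stepAct R B' Y' (π a) (TensorProduct.map π.toLinearMap g x) := by
  induction x using TensorProduct.induction_on with
  | zero => simp
  | tmul b y => simp
  | add x y hx hy => simp only [map_add, hx, hy]

lemma map_stepBeta {Y Y' : Type} [AddCommGroup Y] [Module R Y] [AddCommGroup Y'] [Module R Y']
    (π : B →ₐ[R] B') (g : Y →ₗ[R] Y') (β : (B ⊗[R] Y) →ₗ[R] Y) (β' : (B' ⊗[R] Y') →ₗ[R] Y')
    (h : ∀ x, g (β x) = β' (TensorProduct.map π.toLinearMap g x)) (x : B ⊗[R] (B ⊗[R] Y)) :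
    TensorProduct.map π.toLinearMap g (stepBeta β x) =
      stepBeta β' (TensorProduct.map π.toLinearMap (TensorProduct.map π.toLinearMap g) x) := by
  induction x using TensorProduct.induction_on with
  | zero => simp
  | tmul b y => simp [stepBeta_tmul, map_stepAct, h]
  | add x y hx hy => simp only [map_add, hx, hy]

lemma Xmap_beta (π : B →ₐ[R] B') (f : M →ₗ[R] M') (hf : ∀ a m, f (ρ a m) = ρ' (π a) (f m))
    (q : ℕ) (x : B ⊗[R] (XC R B M q : Type)) :
    Xmap π f q (beta ρ q x) = beta ρ' q (TensorProduct.map π.toLinearMap (Xmap π f q) x) := by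
  induction q with
  | zero =>
    induction x using TensorProduct.induction_on with
    | zero => simp
    | tmul b y => exact hf b y
    | add x y hx hy => simp only [map_add, hx, hy]
  | succ q ih => exact map_stepBeta π _ _ _ ih x

lemma map_augE {Y Y' : Type} [AddCommGroup Y] [Module R Y] [AddCommGroup Y'] [Module R Y']
    (π : B →ₐ[R] B') (hπ : ∀ a, ε' (π a) = ε a) (g : Y →ₗ[R] Y') (x : B ⊗[R] Y) :
    g (augE ε Y x) = augE ε' Y' (TensorProduct.map π.toLinearMap g x) := by
  induction x using TensorProduct.induction_on with
  | zero => simp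
  | tmul b y => simp [hπ]
  | add x y hx hy => simp only [map_add, hx, hy]

lemma Xmap_dd (π : B →ₐ[R] B') (hπ : ∀ a, ε' (π a) = ε a)
    (f : M →ₗ[R] M') (hf : ∀ a m, f (ρ a m) = ρ' (π a) (f m))
    (q : ℕ) (x : B ⊗[R] (XC R B M q : Type)) :
    Xmap π f q (dd ρ ε q x) = dd ρ' ε' q (TensorProduct.map π.toLinearMap (Xmap π f q) x) := by
  rw [dd, dd, LinearMap.sub_apply, LinearMap.sub_apply, map_sub, Xmap_beta ρ ρ' π f hf,
    map_augE ε ε' π hπ]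

def BarMap (π : B →ₐ[R] B') (hπ : ∀ a, ε' (π a) = ε a)
    (f : M →ₗ[R] M') (hf : ∀ a m, f (ρ a m) = ρ' (π a) (f m)) : Bar ρ ε ⟶ Bar ρ' ε' :=
  ChainComplex.ofHom (fun q => ModuleCat.ofHom (Xmap π f q)) (fun q => by
    rw [Bar_d, Bar_d]
    ext x
    exact (Xmap_dd ρ ε ρ' ε' π hπ f hf q x).symm)

end map

end Bar
end GBH
end

section
namespace GBH
section Seq
open CategoryTheory

variable {R : Type} [CommRing R] {B : Type} [Ring B] [Algebra R B]
variable {M₁ M₂ M₃ : Type} [AddCommGroup M₁] [Module R M₁] [AddCommGroup M₂] [Module R M₂]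
  [AddCommGroup M₃] [Module R M₃]
  (ρ₁ : B →ₐ[R] Module.End R M₁) (ρ₂ : B →ₐ[R] Module.End R M₂) (ρ₃ : B →ₐ[R] Module.End R M₃)
  (ε : B →ₐ[R] R)

lemma Xmap_inj [Module.Flat R B] (f : M₁ →ₗ[R] M₂) (hf : Function.Injective f) (q : ℕ) :
    Function.Injective (Xmap (AlgHom.id R B) f q) := by
  induction q with
  | zero => exact hf
  | succ q ih => exact Module.Flat.lTensor_preserves_injective_linearMap _ ih

lemma Xmap_surj (f : M₁ →ₗ[R] M₂) (hf : Function.Surjective f) (q : ℕ) :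
    Function.Surjective (Xmap (AlgHom.id R B) f q) := by
  induction q with
  | zero => exact hf
  | succ q ih => exact LinearMap.lTensor_surjective _ ih

lemma Xmap_exact (f : M₁ →ₗ[R] M₂) (g : M₂ →ₗ[R] M₃) (hfg : Function.Exact f g)
    (hg : Function.Surjective g) (q : ℕ) :
    Function.Exact (Xmap (AlgHom.id R B) f q) (Xmap (AlgHom.id R B) g q) := by
  induction q with
  | zero => exact hfg
  | succ q ih => exact lTensor_exact B ih (Xmap_surj g hg q)

variable (f : M₁ →ₗ[R] M₂) (hf : ∀ a m, f (ρ₁ a m) = ρ₂ a (f m))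
  (g : M₂ →ₗ[R] M₃) (hg : ∀ a m, g (ρ₂ a m) = ρ₃ a (g m))

/-- The short complex of bar complexes. -/
def SES (hfg : Function.Exact f g) (hs : Function.Surjective g) :
    ShortComplex (ChainComplex (ModuleCat R) ℕ) where
  X₁ := Bar ρ₁ ε
  X₂ := Bar ρ₂ ε
  X₃ := Bar ρ₃ ε
  f := BarMap ρ₁ ε ρ₂ ε (AlgHom.id R B) (fun _ => rfl) f hf
  g := BarMap ρ₂ ε ρ₃ ε (AlgHom.id R B) (fun _ => rfl) g hg
  zero := by
    ext q x
    exact (Xmap_exact f g hfg hs q).apply_apply_eq_zero x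

lemma SES_shortExact [Module.Flat R B] (hfg : Function.Exact f g) (hi : Function.Injective f)
    (hs : Function.Surjective g) : (SES ρ₁ ρ₂ ρ₃ ε f hf g hg hfg hs).ShortExact := by
  apply HomologicalComplex.shortExact_of_degreewise_shortExact
  intro q
  apply ModuleCat.shortComplex_shortExact
  · exact Xmap_exact f g hfg hs q
  · exact Xmap_inj f hi q
  · exact Xmap_surj g hs q


end Seq
end GBH
end

section
namespace GBH
section Seq
open CategoryTheory

variable {R : Type} [CommRing R] {B : Type} [Ring B] [Algebra R B]
variable {M₁ M₂ M₃ : Type} [AddCommGroup M₁] [Module R M₁] [AddCommGroup M₂] [Module R M₂]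
  [AddCommGroup M₃] [Module R M₃]
  (ρ₁ : B →ₐ[R] Module.End R M₁) (ρ₂ : B →ₐ[R] Module.End R M₂) (ρ₃ : B →ₐ[R] Module.End R M₃)
  (ε : B →ₐ[R] R)

/-- Two out of three, third term. -/
lemma Ex_X₃ [Module.Flat R B] (f : M₁ →ₗ[R] M₂) (g : M₂ →ₗ[R] M₃)
    (hfg : Function.Exact f g) (hi : Function.Injective f)
    (hs : Function.Surjective g) (hf : ∀ a m, f (ρ₁ a m) = ρ₂ a (f m))
    (hg : ∀ a m, g (ρ₂ a m) = ρ₃ a (g m)) (h1 : ∀ q, Ex ρ₁ ε q) (q : ℕ) (h2 : Ex ρ₂ ε q) :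
    Ex ρ₃ ε q := by
  rw [← exactAt_iff] at h2 ⊢
  have hS := SES_shortExact ρ₁ ρ₂ ρ₃ ε f hf g hg hfg hi hs
  refine hS.exactAt_X₃ q ?_ ?_
  · have hz := ((Bar ρ₂ ε).exactAt_iff_isZero_homology q).1 h2
    exact ⟨fun u v _ => hz.eq_of_src u v⟩
  · intro j _
    have hz := ((Bar ρ₁ ε).exactAt_iff_isZero_homology j).1 ((exactAt_iff ρ₁ ε j).2 (h1 j))
    exact ⟨fun u v _ => hz.eq_of_tgt u v⟩

lemma Xmap_comp (f : M₁ →ₗ[R] M₂) (g : M₂ →ₗ[R] M₃) (q : ℕ) (x : XC R B M₁ q) :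
    Xmap (AlgHom.id R B) (g.comp f) q x = Xmap (AlgHom.id R B) g q (Xmap (AlgHom.id R B) f q x) := by
  induction q with
  | zero => rfl
  | succ q ih =>
    have : ∀ x : B ⊗[R] (XC R B M₁ q : Type), LinearMap.lTensor B (Xmap (AlgHom.id R B) (g.comp f) q) x =
      LinearMap.lTensor B (Xmap (AlgHom.id R B) g q) (LinearMap.lTensor B (Xmap (AlgHom.id R B) f q) x) := by
      intro x
      rw [← LinearMap.lTensor_comp_apply]
      congr 2
      ext x
      exact ih x
    exact this x

section sum
variable {Λ : Type} {N : Λ → Type} [∀ l, AddCommGroup (N l)] [∀ l, Module R (N l)]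
  (σ : ∀ l, B →ₐ[R] Module.End R (N l))
  (i : ∀ l, N l →ₗ[R] M₁) (p : ∀ l, M₁ →ₗ[R] N l)

lemma Xsum (hs : ∀ m, ∃ s : Finset Λ, ∀ t, s ⊆ t → ∑ l ∈ t, i l (p l m) = m) (q : ℕ)
    (x : XC R B M₁ q) : ∃ s : Finset Λ, ∀ t, s ⊆ t →
      ∑ l ∈ t, Xmap (AlgHom.id R B) (i l) q (Xmap (AlgHom.id R B) (p l) q x) = x := by
  classical
  induction q with
  | zero => exact hs x
  | succ q ih =>
    have : ∀ x : B ⊗[R] (XC R B M₁ q : Type), ∃ s : Finset Λ, ∀ t, s ⊆ t →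
      ∑ l ∈ t, LinearMap.lTensor B (Xmap (AlgHom.id R B) (i l) q)
        (LinearMap.lTensor B (Xmap (AlgHom.id R B) (p l) q) x) = x := by
      intro x
      induction x using TensorProduct.induction_on with
      | zero => exact ⟨∅, by simp⟩
      | tmul b y =>
        obtain ⟨s, hs⟩ := ih y
        refine ⟨s, fun t ht => ?_⟩
        simp only [LinearMap.lTensor_tmul]
        rw [← TensorProduct.tmul_sum, hs t ht]
      | add x y hx hy =>
        obtain ⟨s, hs⟩ := hx
        obtain ⟨s', hs'⟩ := hy
        refine ⟨s ∪ s', fun t ht => ?_⟩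
        simp only [map_add, Finset.sum_add_distrib]
        rw [hs t (Finset.subset_union_left.trans ht), hs' t (Finset.subset_union_right.trans ht)]
    exact this x

lemma Ex_sum (hs : ∀ m, ∃ s : Finset Λ, ∀ t, s ⊆ t → ∑ l ∈ t, i l (p l m) = m)
    (hi : ∀ l a m, i l (σ l a m) = ρ₁ a (i l m)) (hp : ∀ l a m, p l (ρ₁ a m) = σ l a (p l m))
    (q : ℕ) (h : ∀ l, Ex (σ l) ε q) : Ex ρ₁ ε q := by
  cases q with
  | zero =>
    intro z
    obtain ⟨s, hs⟩ := hs z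
    choose w hw using fun l => h l (p l z)
    refine ⟨∑ l ∈ s, TensorProduct.map (AlgHom.id R B).toLinearMap (i l) (w l), ?_⟩
    refine (map_sum (dd ρ₁ ε 0) _ _).trans ?_
    refine Eq.trans ?_ (hs s subset_rfl)
    refine Finset.sum_congr rfl fun l _ => ?_
    have := Xmap_dd (σ l) ε ρ₁ ε (AlgHom.id R B) (fun _ => rfl) (i l) (hi l) 0 (w l)
    rw [hw l] at this
    exact this.symm
  | succ q =>
    intro z hz
    obtain ⟨s, hs⟩ := Xsum i p hs (q+1) z
    have hc : ∀ l, dd (σ l) ε q (TensorProduct.map (AlgHom.id R B).toLinearMap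
        (Xmap (AlgHom.id R B) (p l) q) z) = 0 := by
      intro l
      rw [← Xmap_dd ρ₁ ε (σ l) ε (AlgHom.id R B) (fun _ => rfl) (p l) (hp l) q z, hz, map_zero]
    choose w hw using fun l => h l _ (hc l)
    refine ⟨∑ l ∈ s, TensorProduct.map (AlgHom.id R B).toLinearMap (TensorProduct.map
      (AlgHom.id R B).toLinearMap (Xmap (AlgHom.id R B) (i l) q)) (w l), ?_⟩
    refine (map_sum (dd ρ₁ ε (q+1)) _ _).trans ?_
    refine Eq.trans ?_ (hs s subset_rfl)
    refine Finset.sum_congr rfl fun l _ => ?_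
    have := Xmap_dd (σ l) ε ρ₁ ε (AlgHom.id R B) (fun _ => rfl) (i l) (hi l) (q+1) (w l)
    rw [hw l] at this
    exact this.symm
end sum

/-! contraction -/
section contraction
variable (η : M₁ →ₗ[R] (B ⊗[R] M₁))

/-- The extra degeneracy at the right end. -/
def hh : ∀ q : ℕ, (XC R B M₁ q : Type) →ₗ[R] (B ⊗[R] (XC R B M₁ q : Type))
  | 0 => η
  | (q + 1) => LinearMap.lTensor B (hh q)

lemma stepAct_lTensor {Y Y' : Type} [AddCommGroup Y] [Module R Y] [AddCommGroup Y'] [Module R Y']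
    (h : Y →ₗ[R] Y') (a : B) (x : B ⊗[R] Y) :
    stepAct R B Y' a (LinearMap.lTensor B h x) = LinearMap.lTensor B h (stepAct R B Y a x) := by
  induction x using TensorProduct.induction_on with
  | zero => simp
  | tmul b y => simp
  | add x y hx hy => simp only [map_add, hx, hy]

lemma helper_neg_smul {Z : Type} [AddCommGroup Z] [Module R Z] (u v t : Z) (c : R) :
    u - (v + c • t) = u - v + (-c) • t := by
  rw [neg_smul]; abel

lemma helper_neg_one {Z : Type} [AddCommGroup Z] [Module R Z] (u t : Z) :
    u - t = u + (-1 : R) • t := by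
  rw [neg_smul, one_smul]; abel

lemma step_beta_h {Y : Type} [AddCommGroup Y] [Module R Y] (β : (B ⊗[R] Y) →ₗ[R] Y)
    (h : Y →ₗ[R] (B ⊗[R] Y)) (c : R)
    (hh : ∀ y, stepBeta β (LinearMap.lTensor B h y) = h (β y) + c • y)
    (y : B ⊗[R] (B ⊗[R] Y)) :
    stepBeta (stepBeta β) (LinearMap.lTensor B (LinearMap.lTensor B h) y) =
      LinearMap.lTensor B h (stepBeta β y) + (-c) • y := by
  induction y using TensorProduct.induction_on with
  | zero => simp
  | tmul a x =>
    rw [LinearMap.lTensor_tmul, stepBeta_tmul, stepBeta_tmul, stepAct_lTensor, hh, map_sub,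
      LinearMap.lTensor_tmul, TensorProduct.tmul_add, TensorProduct.tmul_smul]
    exact helper_neg_smul _ _ _ _
  | add x y hx hy => simp only [map_add, hx, hy, smul_add]; abel

variable (ι : M₁ →ₗ[R] B) (e : M₁) (hι : ∀ a m, ι (ρ₁ a m) = a * ι m) (he : ∀ m, ρ₁ (ι m) e = m)

lemma step_beta_h0 (hι : ∀ a m, ι (ρ₁ a m) = a * ι m) (he : ∀ m, ρ₁ (ι m) e = m) (y : B ⊗[R] M₁) :
    stepBeta (TensorProduct.lift ρ₁.toLinearMap) (LinearMap.lTensor B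
      ((TensorProduct.mk R B M₁).flip e ∘ₗ ι) y) = ((TensorProduct.mk R B M₁).flip e ∘ₗ ι)
        (TensorProduct.lift ρ₁.toLinearMap y) + (-1 : R) • y := by
  induction y using TensorProduct.induction_on with
  | zero => simp
  | tmul a m =>
    rw [LinearMap.lTensor_tmul, stepBeta_tmul]
    simp only [hι, he, LinearMap.comp_apply, LinearMap.flip_apply, TensorProduct.mk_apply,
      stepAct_tmul, TensorProduct.lift.tmul, AlgHom.toLinearMap_apply]
    exact helper_neg_one _ _
  | add x y hx hy => simp only [map_add, hx, hy, smul_add]; abel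

lemma beta_h (hι : ∀ a m, ι (ρ₁ a m) = a * ι m) (he : ∀ m, ρ₁ (ι m) e = m) (q : ℕ) :
    ∃ c : R, c * c = 1 ∧ ∀ y : B ⊗[R] (XC R B M₁ q : Type), stepBeta (beta ρ₁ q)
      (LinearMap.lTensor B (hh ((TensorProduct.mk R B M₁).flip e ∘ₗ ι) q) y) =
      hh ((TensorProduct.mk R B M₁).flip e ∘ₗ ι) q (beta ρ₁ q y) + c • y := by
  induction q with
  | zero => exact ⟨-1, by simp, step_beta_h0 ρ₁ ι e hι he⟩
  | succ q ih =>
    obtain ⟨c, hc, ih⟩ := ih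
    exact ⟨-c, by simpa using hc, step_beta_h _ _ c ih⟩

lemma augE_lTensor {Y : Type} [AddCommGroup Y] [Module R Y] (h : Y →ₗ[R] (B ⊗[R] Y))
    (y : B ⊗[R] Y) : augE ε (B ⊗[R] Y) (LinearMap.lTensor B h y) = h (augE ε Y y) := by
  induction y using TensorProduct.induction_on with
  | zero => simp
  | tmul a x => simp
  | add x y hx hy => simp only [map_add, hx, hy]

lemma step_contr {Y : Type} [AddCommGroup Y] [Module R Y] (β : (B ⊗[R] Y) →ₗ[R] Y)
    (h : Y →ₗ[R] (B ⊗[R] Y)) (c : R) (hc : c * c = 1)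
    (hh : ∀ y, stepBeta β (LinearMap.lTensor B h y) = h (β y) + c • y) (z : B ⊗[R] Y)
    (hz : (augE ε Y - β) z = 0) : ∃ w, (augE ε (B ⊗[R] Y) - stepBeta β) w = z := by
  refine ⟨-c • LinearMap.lTensor B h z, ?_⟩
  have hz' : augE ε Y z = β z := sub_eq_zero.mp hz
  rw [map_smul, LinearMap.sub_apply, augE_lTensor, hh, hz', sub_add_cancel_left, smul_neg, neg_smul,
    neg_neg, smul_smul, hc, one_smul]

lemma Ex_contr_succ (hι : ∀ a m, ι (ρ₁ a m) = a * ι m) (he : ∀ m, ρ₁ (ι m) e = m) (q : ℕ) :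
    Ex ρ₁ ε (q+1) := by
  intro z hz
  obtain ⟨c, hc, h⟩ := beta_h ρ₁ ι e hι he q
  exact step_contr ε _ _ c hc h z hz

lemma Ex_contr (hι : ∀ a m, ι (ρ₁ a m) = a * ι m) (he : ∀ m, ρ₁ (ι m) e = m)
    (h0 : ∀ m, ε (ι m) = 0) (q : ℕ) : Ex ρ₁ ε q := by
  cases q with
  | zero =>
    intro z
    refine ⟨-(ι z ⊗ₜ e), ?_⟩
    refine (map_neg (dd ρ₁ ε 0) _).trans ?_
    have h1 : dd ρ₁ ε 0 (ι z ⊗ₜ e) = ε (ι z) • e - ρ₁ (ι z) e := rfl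
    refine (congrArg Neg.neg h1).trans ?_
    rw [h0, he, zero_smul, zero_sub]
    exact neg_neg z
  | succ q => exact Ex_contr_succ ρ₁ ε ι e hι he q

end contraction
end Seq
end GBH
end

section
namespace GBH
section Comp
open CategoryTheory

variable {R : Type} [CommRing R] {A : Type} [Ring A] [Algebra R A] {B : Type} [Ring B] [Algebra R B]

/-- Restriction of a representation to a stable submodule. -/
def subRep {M : Type} [AddCommGroup M] [Module R M] (ρ : B →ₐ[R] Module.End R M)
    (V : Submodule R M) (hV : ∀ a, ∀ v ∈ V, ρ a v ∈ V) : B →ₐ[R] Module.End R V where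
  toFun a := (ρ a).restrict (hV a)
  map_one' := by ext v; simp
  map_mul' a b := by ext v; simp
  map_zero' := by ext v; simp
  map_add' a b := by ext v; simp
  commutes' r := by ext v; simp [Algebra.algebraMap_eq_smul_one]

@[simp] lemma subRep_coe {M : Type} [AddCommGroup M] [Module R M] (ρ : B →ₐ[R] Module.End R M)
    (V : Submodule R M) (hV : ∀ a, ∀ v ∈ V, ρ a v ∈ V) (a : B) (v : V) :
    (subRep ρ V hV a v : M) = ρ a v := rfl

variable (εA : A →ₐ[R] R) (εB : B →ₐ[R] R) (π : A →ₐ[R] B)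

lemma Ex_self_succ (q : ℕ) : Ex (Algebra.lmul R B) εB (q+1) :=
  Ex_contr_succ _ εB LinearMap.id (1 : B) (fun _ _ => rfl) (fun m => by simp) q

/-- The left ideal given by the kernel. -/
def kerRep : A →ₐ[R] Module.End R (LinearMap.ker π.toLinearMap) :=
  subRep (Algebra.lmul R A) _ (by intro a v hv; simp at hv ⊢; simp [hv])

lemma Ex_pi_succ [Module.Flat R A] (hs : Function.Surjective π)
    (hI : ∀ q, Ex (kerRep π) εA q) (q : ℕ) : Ex ((Algebra.lmul R B).comp π) εA (q+1) := by
  refine Ex_X₃ (kerRep π) (Algebra.lmul R A) _ εA (LinearMap.ker π.toLinearMap).subtype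
    π.toLinearMap ?_ (Submodule.subtype_injective _) hs ?_ ?_ hI _ (Ex_self_succ εA q)
  · intro x; simp
  · intro a m; rfl
  · intro a m; simp

/-- Free module. -/
def freeRep (N : Type) (σ : A →ₐ[R] Module.End R B) : A →ₐ[R] Module.End R (N →₀ B) where
  toFun a := Finsupp.mapRange.linearMap (σ a)
  map_one' := by ext; simp
  map_mul' a b := by ext; simp
  map_zero' := by ext; simp
  map_add' a b := by ext; simp
  commutes' r := by ext; simp [Algebra.algebraMap_eq_smul_one]

lemma Ex_free (N : Type) (σ : A →ₐ[R] Module.End R B) (q : ℕ) (h : Ex σ εA q) :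
    Ex (freeRep N σ) εA q := by
  classical
  refine Ex_sum (freeRep N σ) εA (fun _ : N => σ) (fun l => Finsupp.lsingle l)
    (fun l => Finsupp.lapply l) ?_ ?_ ?_ q (fun _ => h)
  · intro m
    refine ⟨m.support, fun t ht => ?_⟩
    conv_rhs => rw [← Finsupp.sum_single m]
    rw [Finsupp.sum_of_support_subset m ht _ (by simp)]
    rfl
  · intro l a m
    ext; simp [freeRep]
  · intro l a m
    simp [freeRep]

/-- The action map from the free module. -/
def freeMap {N : Type} [AddCommGroup N] [Module R N] (ρ : B →ₐ[R] Module.End R N) :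
    (N →₀ B) →ₗ[R] N := Finsupp.lsum R (fun n => (LinearMap.applyₗ n).comp ρ.toLinearMap)

@[simp] lemma freeMap_single {N : Type} [AddCommGroup N] [Module R N] (ρ : B →ₐ[R] Module.End R N)
    (n : N) (b : B) : freeMap ρ (Finsupp.single n b) = ρ b n := by
  simp [freeMap]

lemma freeMap_equi {N : Type} [AddCommGroup N] [Module R N] (ρ : B →ₐ[R] Module.End R N)
    (b : B) (x : N →₀ B) : freeMap ρ (freeRep N (Algebra.lmul R B) b x) = ρ b (freeMap ρ x) := by
  induction x using Finsupp.induction_linear with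
  | zero => simp
  | add x y hx hy => simp only [map_add, hx, hy]
  | single n c =>
    have : freeRep N (Algebra.lmul R B) b (Finsupp.single n c) = Finsupp.single n (b * c) :=
      Finsupp.mapRange_single (hf := map_zero _)
    rw [this, freeMap_single, freeMap_single, map_mul]; rfl

lemma freeMap_surj {N : Type} [AddCommGroup N] [Module R N] (ρ : B →ₐ[R] Module.End R N) :
    Function.Surjective (freeMap ρ) := fun n => ⟨Finsupp.single n 1, by simp⟩

/-- The comparison map. -/
def cmp (hε : ∀ a, εB (π a) = εA a) {N : Type} [AddCommGroup N] [Module R N]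
    (ρ : B →ₐ[R] Module.End R N) : Bar (ρ.comp π) εA ⟶ Bar ρ εB :=
  BarMap (ρ.comp π) εA ρ εB π hε LinearMap.id (fun _ _ => rfl)

lemma Xmap_surj' (hs : Function.Surjective π) {N : Type} [AddCommGroup N] [Module R N] (q : ℕ) :
    Function.Surjective (Xmap π (LinearMap.id : N →ₗ[R] N) q) := by
  induction q with
  | zero => exact fun x => ⟨x, rfl⟩
  | succ q ih => exact TensorProduct.map_surjective hs ih

lemma cmp_zero (hs : Function.Surjective π) (hε : ∀ a, εB (π a) = εA a) {N : Type}
    [AddCommGroup N] [Module R N] (ρ : B →ₐ[R] Module.End R N) :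
    IsIso (HomologicalComplex.homologyMap (cmp εA εB π hε ρ) 0) := by
  have hepi : ∀ j, Epi ((cmp εA εB π hε ρ).f j) := fun j =>
    (ModuleCat.epi_iff_surjective _).2 (Xmap_surj' π hs j)
  have hm : Mono ((cmp εA εB π hε ρ).f 0) :=
    (ModuleCat.mono_iff_injective _).2 (fun x y h => h)
  have hi : IsIso ((cmp εA εB π hε ρ).f 0) := by
    have := hepi 0
    exact isIso_of_mono_of_epi _
  have hm' : Mono ((cmp εA εB π hε ρ).f ((ComplexShape.down ℕ).next 0)) := by
    rw [ChainComplex.next_nat_zero]; exact hm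
  exact ShortComplex.isIso_homologyMap_of_epi_of_isIso_of_mono' (φ :=
    (HomologicalComplex.shortComplexFunctor (ModuleCat R) (ComplexShape.down ℕ) 0).map
      (cmp εA εB π hε ρ)) (hepi _) hi hm'

lemma Xmap_comm {M₁ M₂ : Type} [AddCommGroup M₁] [Module R M₁] [AddCommGroup M₂] [Module R M₂]
    (f : M₁ →ₗ[R] M₂) (q : ℕ) (x : XC R A M₁ q) :
    Xmap π LinearMap.id q (Xmap (AlgHom.id R A) f q x) =
      Xmap (AlgHom.id R B) f q (Xmap π LinearMap.id q x) := by
  induction q with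
  | zero => rfl
  | succ q ih =>
    have : ∀ x : A ⊗[R] (XC R A M₁ q : Type), TensorProduct.map π.toLinearMap
      (Xmap π LinearMap.id q) (TensorProduct.map (AlgHom.id R A).toLinearMap
        (Xmap (AlgHom.id R A) f q) x) = TensorProduct.map (AlgHom.id R B).toLinearMap
        (Xmap (AlgHom.id R B) f q) (TensorProduct.map π.toLinearMap (Xmap π LinearMap.id q) x) := by
      intro x
      induction x using TensorProduct.induction_on with
      | zero => simp
      | tmul a y => simp [ih]
      | add x y hx hy => simp only [map_add, hx, hy]
    exact this x

section step
variable {M₁ M₂ M₃ : Type} [AddCommGroup M₁] [Module R M₁] [AddCommGroup M₂] [Module R M₂]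
  [AddCommGroup M₃] [Module R M₃]
  (ρ₁ : B →ₐ[R] Module.End R M₁) (ρ₂ : B →ₐ[R] Module.End R M₂) (ρ₃ : B →ₐ[R] Module.End R M₃)

/-- The map of short complexes induced by a change of algebra. -/
def SESmap (hε : ∀ a, εB (π a) = εA a) (f : M₁ →ₗ[R] M₂) (g : M₂ →ₗ[R] M₃)
    (hf : ∀ a m, f (ρ₁ a m) = ρ₂ a (f m)) (hg : ∀ a m, g (ρ₂ a m) = ρ₃ a (g m))
    (hfg : Function.Exact f g) (hs : Function.Surjective g) :
    SES (ρ₁.comp π) (ρ₂.comp π) (ρ₃.comp π) εA f (fun a m => hf (π a) m) g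
      (fun a m => hg (π a) m) hfg hs ⟶ SES ρ₁ ρ₂ ρ₃ εB f hf g hg hfg hs where
  τ₁ := cmp εA εB π hε ρ₁
  τ₂ := cmp εA εB π hε ρ₂
  τ₃ := cmp εA εB π hε ρ₃
  comm₁₂ := by
    ext j x
    exact (Xmap_comm π f j x).symm
  comm₂₃ := by
    ext j x
    exact (Xmap_comm π g j x).symm

variable [Module.Flat R A] [Module.Flat R B] (hε : ∀ a, εB (π a) = εA a)

lemma step_epi (f : M₁ →ₗ[R] M₂) (g : M₂ →ₗ[R] M₃)
    (hf : ∀ a m, f (ρ₁ a m) = ρ₂ a (f m)) (hg : ∀ a m, g (ρ₂ a m) = ρ₃ a (g m))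
    (hfg : Function.Exact f g) (hi : Function.Injective f) (hs : Function.Surjective g) (q : ℕ)
    (e1 : IsIso (HomologicalComplex.homologyMap (cmp εA εB π hε ρ₁) q))
    (e2 : IsIso (HomologicalComplex.homologyMap (cmp εA εB π hε ρ₂) q))
    (e3 : Epi (HomologicalComplex.homologyMap (cmp εA εB π hε ρ₂) (q+1))) :
    Epi (HomologicalComplex.homologyMap (cmp εA εB π hε ρ₃) (q+1)) := by
  refine HomologicalComplex.HomologySequence.epi_homologyMap_τ₃
    (SESmap εA εB π ρ₁ ρ₂ ρ₃ hε f g hf hg hfg hs)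
    (SES_shortExact _ _ _ _ _ _ _ _ hfg hi hs) (SES_shortExact _ _ _ _ _ _ _ _ hfg hi hs)
        (q+1) e3 ?_ ?_
  · intro j hj
    obtain rfl : j = q := by simpa using hj
    exact inferInstanceAs (Epi (HomologicalComplex.homologyMap (cmp εA εB π hε ρ₁) j))
  · intro j hj
    obtain rfl : j = q := by simpa using hj
    exact inferInstanceAs (Mono (HomologicalComplex.homologyMap (cmp εA εB π hε ρ₂) j))

lemma step_iso (f : M₁ →ₗ[R] M₂) (g : M₂ →ₗ[R] M₃)
    (hf : ∀ a m, f (ρ₁ a m) = ρ₂ a (f m)) (hg : ∀ a m, g (ρ₂ a m) = ρ₃ a (g m))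
    (hfg : Function.Exact f g) (hi : Function.Injective f) (hs : Function.Surjective g) (q : ℕ)
    (e1 : IsIso (HomologicalComplex.homologyMap (cmp εA εB π hε ρ₁) q))
    (e2 : IsIso (HomologicalComplex.homologyMap (cmp εA εB π hε ρ₂) q))
    (e0 : Epi (HomologicalComplex.homologyMap (cmp εA εB π hε ρ₁) (q+1)))
    (e3 : IsIso (HomologicalComplex.homologyMap (cmp εA εB π hε ρ₂) (q+1))) :
    IsIso (HomologicalComplex.homologyMap (cmp εA εB π hε ρ₃) (q+1)) := by
  refine HomologicalComplex.HomologySequence.isIso_homologyMap_τ₃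
    (SESmap εA εB π ρ₁ ρ₂ ρ₃ hε f g hf hg hfg hs)
    (SES_shortExact _ _ _ _ _ _ _ _ hfg hi hs) (SES_shortExact _ _ _ _ _ _ _ _ hfg hi hs)
        (q+1) e0 e3 ?_ ?_
  · intro j hj
    obtain rfl : j = q := by simpa using hj
    exact e1
  · intro j hj
    obtain rfl : j = q := by simpa using hj
    exact inferInstanceAs (Mono (HomologicalComplex.homologyMap (cmp εA εB π hε ρ₂) j))
end step

theorem cmp_iso [Module.Flat R A] [Module.Flat R B] (hs : Function.Surjective π)
    (hε : ∀ a, εB (π a) = εA a) (hI : ∀ q, Ex (kerRep π) εA q) (q : ℕ) :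
    ∀ (N : Type) [AddCommGroup N] [Module R N] (ρ : B →ₐ[R] Module.End R N),
    IsIso (HomologicalComplex.homologyMap (cmp εA εB π hε ρ) q) := by
  induction q with
  | zero => intro N _ _ ρ; exact cmp_zero εA εB π hs hε ρ
  | succ q ih =>
    have hV : ∀ (N : Type) [AddCommGroup N] [Module R N] (ρ : B →ₐ[R] Module.End R N),
      ∀ a, ∀ v ∈ LinearMap.ker (freeMap ρ), freeRep N (Algebra.lmul R B) a v ∈
        LinearMap.ker (freeMap ρ) := by
      intro N _ _ ρ a v hv
      rw [LinearMap.mem_ker] at hv ⊢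
      rw [freeMap_equi, hv, map_zero]
    have ex : ∀ (N : Type) [AddCommGroup N] [Module R N] (ρ : B →ₐ[R] Module.End R N),
        Function.Exact (LinearMap.ker (freeMap ρ)).subtype (freeMap ρ) := by
      intro N _ _ ρ x; simp
    have zB : ∀ N : Type, Limits.IsZero ((Bar (freeRep N (Algebra.lmul R B)) εB).homology (q+1)) :=
      fun N => (HomologicalComplex.exactAt_iff_isZero_homology _ _).1
        ((exactAt_iff _ _ _).2 (Ex_free εB N _ _ (Ex_self_succ εB q)))
    have zA : ∀ N : Type, Limits.IsZero
        ((Bar ((freeRep N (Algebra.lmul R B)).comp π) εA).homology (q+1)) :=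
      fun N => (HomologicalComplex.exactAt_iff_isZero_homology _ _).1
        ((exactAt_iff _ _ _).2 (Ex_free εA N _ _ (Ex_pi_succ εA π hs hI q)))
    have hep : ∀ (N : Type) [AddCommGroup N] [Module R N] (ρ : B →ₐ[R] Module.End R N),
        Epi (HomologicalComplex.homologyMap (cmp εA εB π hε ρ) (q+1)) := by
      intro N _ _ ρ
      exact step_epi (M₁ := ↥(LinearMap.ker (freeMap ρ))) εA εB π (subRep (freeRep N (Algebra.lmul R B))
        (LinearMap.ker (freeMap ρ)) (hV N ρ)) (freeRep N (Algebra.lmul R B)) ρ hε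
        (LinearMap.ker (freeMap ρ)).subtype (freeMap ρ) (fun _ _ => rfl) (freeMap_equi ρ)
        (ex N ρ) (Submodule.subtype_injective _) (freeMap_surj ρ) q (ih _ _) (ih _ _)
        ⟨fun u v _ => (zB N).eq_of_src u v⟩
    intro N _ _ ρ
    exact step_iso (M₁ := ↥(LinearMap.ker (freeMap ρ))) εA εB π (subRep (freeRep N (Algebra.lmul R B))
        (LinearMap.ker (freeMap ρ)) (hV N ρ)) (freeRep N (Algebra.lmul R B)) ρ hε
        (LinearMap.ker (freeMap ρ)).subtype (freeMap ρ) (fun _ _ => rfl) (freeMap_equi ρ)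
        (ex N ρ) (Submodule.subtype_injective _) (freeMap_surj ρ) q (ih _ _) (ih _ _)
        (hep _ _) (Limits.IsZero.isIso (zA N) (zB N) _)
end Comp
end GBH
end

section
namespace GBH
section Bridge
open CategoryTheory
variable {R : Type} [CommRing R] {B : Type} [Ring B] [Algebra R B] (ε : B →ₐ[R] R)

lemma homEquiv (S : ShortComplex (ModuleCat R)) {Y : Type} [AddCommGroup Y] [Module R Y]
    (Z Bd : Submodule R Y) (θ : S.X₂ ≃ₗ[R] Y) (hZ : ∀ x, S.g x = 0 ↔ θ x ∈ Z)
    (hB : ∀ x, (∃ w, S.f w = x) ↔ θ x ∈ Bd) :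
    Nonempty (S.homology ≃ₗ[R] (Z ⧸ Bd.comap Z.subtype)) := by
  have h1 : Submodule.map θ.toLinearMap (LinearMap.ker S.g.hom) = Z := by
    ext y
    rw [Submodule.mem_map]
    constructor
    · rintro ⟨x, hx, rfl⟩
      exact (hZ x).1 hx
    · intro hy
      refine ⟨θ.symm y, (hZ _).2 (by simpa using hy), by simp⟩
  refine ⟨S.moduleCatHomologyIso.toLinearEquiv.trans
    (Submodule.Quotient.equiv _ _ (LinearEquiv.ofSubmodules θ _ _ h1) ?_)⟩
  ext ⟨y, hy⟩
  rw [Submodule.mem_map, Submodule.mem_comap]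
  constructor
  · rintro ⟨x, ⟨w, rfl⟩, hx⟩
    have := (hB (S.f w)).1 ⟨w, rfl⟩
    rw [← hx]
    exact this
  · intro h
    have h2 : θ (θ.symm y) ∈ Bd := by simpa using h
    obtain ⟨w, hw⟩ := (hB _).2 h2
    refine ⟨⟨θ.symm y, (hZ _).2 (by simpa using hy)⟩, ⟨w, ?_⟩, ?_⟩
    · exact Subtype.ext hw
    · apply Subtype.ext
      exact θ.apply_symm_apply y

/-- The trivial module. -/
def triv : B →ₐ[R] Module.End R R := (Algebra.lmul R R).comp ε

def thetaX (R B : Type) [CommRing R] [Ring B] [Algebra R B] :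
    ∀ q, (XC R B R q : Type) ≃ₗ[R] (barC R B q : Type)
  | 0 => LinearEquiv.refl R R
  | (q + 1) => TensorProduct.congr (LinearEquiv.refl R B) (thetaX R B q)

lemma theta_stepAct {Y Y' : Type} [AddCommGroup Y] [Module R Y] [AddCommGroup Y'] [Module R Y']
    (g : Y →ₗ[R] Y') (a : B) (x : B ⊗[R] Y) :
    TensorProduct.map (LinearMap.mulLeft R a) LinearMap.id (LinearMap.lTensor B g x)
     = LinearMap.lTensor B g (stepAct R B Y a x) := by
  induction x using TensorProduct.induction_on with
  | zero => simp
  | tmul b y => simp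
  | add x y hx hy => simp only [map_add, hx, hy]

lemma barB_succ (q : ℕ) (a : B) (x : B ⊗[R] (barC R B q : Type)) :
    barB R B ε (q+1) (a ⊗ₜ[R] x) =
      (-(TensorProduct.map (LinearMap.mulLeft R a) LinearMap.id x) - a ⊗ₜ[R] (barB R B ε q x) :
        B ⊗[R] (barC R B q : Type)) := rfl

lemma helperB {Z : Type} [AddCommGroup Z] (u v : Z) : -u + v = -(u - v) := by abel

lemma step_barB {Y Y' : Type} [AddCommGroup Y] [Module R Y] [AddCommGroup Y'] [Module R Y']
    (g : Y →ₗ[R] Y') (β : (B ⊗[R] Y) →ₗ[R] Y) (b' : (B ⊗[R] Y') →ₗ[R] Y')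
    (h : ∀ x, b' (LinearMap.lTensor B g x) = - g (β x))
    (F : (B ⊗[R] (B ⊗[R] Y')) →ₗ[R] (B ⊗[R] Y'))
    (hF : ∀ a x, F (a ⊗ₜ x) =
      -(TensorProduct.map (LinearMap.mulLeft R a) LinearMap.id x) - a ⊗ₜ[R] (b' x))
    (x : B ⊗[R] (B ⊗[R] Y)) :
    F (LinearMap.lTensor B (LinearMap.lTensor B g) x) = - LinearMap.lTensor B g (stepBeta β x) := by
  induction x using TensorProduct.induction_on with
  | zero => simp
  | tmul a y =>
    rw [LinearMap.lTensor_tmul, hF, h, theta_stepAct, stepBeta_tmul, map_sub,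
      LinearMap.lTensor_tmul, TensorProduct.tmul_neg, sub_neg_eq_add]
    exact helperB _ _
  | add x y hx hy => simp only [map_add, hx, hy]; abel

lemma theta_barB (q : ℕ) (x : B ⊗[R] (XC R B R q : Type)) :
    barB R B ε q (LinearMap.lTensor B (thetaX R B q).toLinearMap x) =
      - thetaX R B q (beta (triv ε) q x) := by
  induction q with
  | zero =>
    induction x using TensorProduct.induction_on with
    | zero => simp
    | tmul a y => rfl
    | add x y hx hy => simp only [map_add, hx, hy]; abel
  | succ q ih => exact step_barB (thetaX R B q).toLinearMap _ _ ih _ (barB_succ ε q) x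

lemma theta_augE {Y Y' : Type} [AddCommGroup Y] [Module R Y] [AddCommGroup Y'] [Module R Y']
    (g : Y →ₗ[R] Y') (x : B ⊗[R] Y) :
    TensorProduct.lift ((LinearMap.lsmul R Y').comp ε.toLinearMap) (LinearMap.lTensor B g x)
      = g (augE ε Y x) := by
  induction x using TensorProduct.induction_on with
  | zero => simp
  | tmul a y => simp
  | add x y hx hy => simp only [map_add, hx, hy]

lemma theta_bard (q : ℕ) (x : B ⊗[R] (XC R B R q : Type)) :
    bard R B ε q (LinearMap.lTensor B (thetaX R B q).toLinearMap x) =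
      thetaX R B q (dd (triv ε) ε q x) := by
  rw [bard, dd, LinearMap.add_apply, LinearMap.sub_apply, theta_barB, theta_augE, map_sub,
    sub_eq_add_neg]
  rfl

lemma theta_range (q : ℕ) (x : XC R B R q) :
    (∃ w, dd (triv ε) ε q w = x) ↔ thetaX R B q x ∈ LinearMap.range (bard R B ε q) := by
  constructor
  · rintro ⟨w, rfl⟩
    exact ⟨_, theta_bard ε q w⟩
  · rintro ⟨w, hw⟩
    obtain ⟨v, rfl⟩ := (LinearEquiv.lTensor B (thetaX R B q)).surjective w
    refine ⟨v, ?_⟩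
    apply (thetaX R B q).injective
    rw [← theta_bard]
    exact hw

theorem bridge (q : ℕ) :
    Nonempty ((Bar (triv ε) ε).homology q ≃ₗ[R] barTor R B ε q) := by
  cases q with
  | zero =>
    let i := (Bar (triv ε) ε).homologyIsoSc' 1 0 0 (by simp) (by simp)
    obtain ⟨e⟩ := homEquiv ((Bar (triv ε) ε).sc' 1 0 0) (barCycles R B ε 0)
      (LinearMap.range (bard R B ε 0)) (thetaX R B 0) (fun x => by
        have h0 : (Bar (triv ε) ε).d 0 0 = 0 := HomologicalComplex.shape _ _ _ (by simp)
        simp only [HomologicalComplex.shortComplexFunctor'_obj_g, HomologicalComplex.sc', h0]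
        exact ⟨fun _ => trivial, fun _ => rfl⟩) (fun x => by
        simp only [HomologicalComplex.shortComplexFunctor'_obj_f, HomologicalComplex.sc']
        rw [Bar_d]
        exact theta_range ε 0 x)
    exact ⟨i.toLinearEquiv.trans e⟩
  | succ q =>
    let i := (Bar (triv ε) ε).homologyIsoSc' (q+2) (q+1) q (by simp) (by simp)
    obtain ⟨e⟩ := homEquiv ((Bar (triv ε) ε).sc' (q+2) (q+1) q) (barCycles R B ε (q+1))
      (LinearMap.range (bard R B ε (q+1))) (thetaX R B (q+1)) (fun x => by
        simp only [HomologicalComplex.shortComplexFunctor'_obj_g, HomologicalComplex.sc']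
        rw [Bar_d]
        have h := theta_bard ε q x
        constructor
        · intro hx
          refine h.trans ?_
          exact (congrArg (thetaX R B q) hx).trans (map_zero _)
        · intro hx
          have h2 := h.symm.trans hx
          exact (map_eq_zero_iff _ (thetaX R B q).injective).1 h2) (fun x => by
        simp only [HomologicalComplex.shortComplexFunctor'_obj_f, HomologicalComplex.sc']
        rw [Bar_d]
        exact theta_range ε (q+1) x)
    exact ⟨i.toLinearEquiv.trans e⟩

theorem tor_iso {A : Type} [Ring A] [Algebra R A] (εA : A →ₐ[R] R) (π : A →ₐ[R] B)
    [Module.Flat R A] [Module.Flat R B] (hs : Function.Surjective π)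
    (hε : ∀ a, ε (π a) = εA a) (hI : ∀ q, Ex (kerRep π) εA q) (q : ℕ) :
    Nonempty (barTor R A εA q ≃ₗ[R] barTor R B ε q) := by
  have h := cmp_iso εA ε π hs hε hI q R (triv ε)
  have ht : (triv ε).comp π = triv εA := by
    ext a; simp [triv, hε]
  obtain ⟨e1⟩ := bridge ε q
  obtain ⟨e2⟩ := bridge εA q
  rw [← ht] at e2
  exact ⟨(e2.symm.trans (asIso (HomologicalComplex.homologyMap
    (cmp εA ε π hε (triv ε)) q)).toLinearEquiv).trans e1⟩
end Bridge
end GBH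
end

section
namespace GBH
section Boyde
open CategoryTheory
variable {R : Type} [CommRing R] {A : Type} [Ring A] [Algebra R A] (ε : A →ₐ[R] R)

lemma Ex_prod {M₁ M₃ : Type} [AddCommGroup M₁] [Module R M₁]
    [AddCommGroup M₃] [Module R M₃] [Module.Flat R A]
    (ρ₁ : A →ₐ[R] Module.End R M₁) (ρ₂ : A →ₐ[R] Module.End R (M₁ × M₃))
    (ρ₃ : A →ₐ[R] Module.End R M₃) (h : ∀ a m, ρ₂ a m = (ρ₁ a m.1, ρ₃ a m.2)) (q : ℕ)
    (h1 : Ex ρ₁ ε q) (h3 : Ex ρ₃ ε q) : Ex ρ₂ ε q := by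
  rw [← exactAt_iff] at h1 h3 ⊢
  have hS := SES_shortExact ρ₁ ρ₂ ρ₃ ε (LinearMap.inl R M₁ M₃) (fun a m => by simp [h])
    (LinearMap.snd R M₁ M₃) (fun a m => by simp [h]) Function.Exact.inl_snd LinearMap.inl_injective
    LinearMap.snd_surjective
  exact hS.exactAt_X₂ q h1 h3

variable {D : Type} (b : Module.Basis D R A)

/-- Span of a set of basis elements. -/
def VS (S : Set D) : Submodule R A := Submodule.span R (Set.image b S)

lemma mem_VS {S : Set D} {x : A} : x ∈ VS b S ↔ ↑(b.repr x).support ⊆ S := b.mem_span_image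

lemma VS_mono {S T : Set D} (h : S ⊆ T) : VS b S ≤ VS b T := Submodule.span_mono (Set.image_mono h)

lemma basis_mem_VS {S : Set D} {d : D} (h : d ∈ S) : b d ∈ VS b S :=
  Submodule.subset_span ⟨d, h, rfl⟩

/-- Closed under left multiplication. -/
def Cl (S : Set D) : Prop := ∀ a, ∀ x ∈ VS b S, a * x ∈ VS b S

lemma Cl_of {S : Set D} (h : ∀ d ∈ S, ∀ a, a * b d ∈ VS b S) : Cl b S := by
  intro a x hx
  induction hx using Submodule.span_induction with
  | mem x hx => obtain ⟨d, hd, rfl⟩ := hx; exact h d hd a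
  | zero => simp
  | add x y _ _ hx hy => rw [mul_add]; exact add_mem hx hy
  | smul c x _ hx => rw [mul_smul_comm]; exact Submodule.smul_mem _ _ hx

lemma Cl_inter {ι : Type} {S : ι → Set D} (h : ∀ i, Cl b (S i)) : Cl b (⋂ i, S i) := by
  intro a x hx
  rw [mem_VS] at hx ⊢
  refine Set.subset_iInter fun i => ?_
  exact (mem_VS b).1 (h i a x ((mem_VS b).2 (hx.trans (Set.iInter_subset _ i))))

lemma Cl_union {ι : Type} {S : ι → Set D} (h : ∀ i, Cl b (S i)) : Cl b (⋃ i, S i) := by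
  apply Cl_of
  intro d hd a
  obtain ⟨i, hi⟩ := Set.mem_iUnion.1 hd
  exact VS_mono b (Set.subset_iUnion S i) (h i a _ (basis_mem_VS b hi))

/-- The module spanned by `S`. -/
def rS {S : Set D} (hS : Cl b S) : A →ₐ[R] Module.End R (VS b S) :=
  subRep (Algebra.lmul R A) (VS b S) hS

@[simp] lemma rS_coe {S : Set D} (hS : Cl b S) (a : A) (x : VS b S) :
    (rS b hS a x : A) = a * x := rfl

section proj
open Classical in
def proj (T : Set D) : A →ₗ[R] A := b.constr R (fun d => if d ∈ T then b d else 0)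

lemma proj_mem_VS (T : Set D) (x : A) : proj b T x ∈ VS b T := by
  rw [← b.linearCombination_repr x, Finsupp.linearCombination_apply, Finsupp.sum, map_sum]
  refine sum_mem fun d _ => ?_
  rw [map_smul, proj, b.constr_basis]
  refine Submodule.smul_mem _ _ ?_
  split_ifs with h
  · exact basis_mem_VS b h
  · exact zero_mem _

lemma proj_basis_mem {T : Set D} {d : D} (h : d ∈ T) : proj b T (b d) = b d := by
  rw [proj, b.constr_basis, if_pos h]

lemma proj_basis_not_mem {T : Set D} {d : D} (h : d ∉ T) : proj b T (b d) = 0 := by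
  rw [proj, b.constr_basis, if_neg h]

lemma proj_of_mem {T : Set D} {x : A} (hx : x ∈ VS b T) : proj b T x = x := by
  induction hx using Submodule.span_induction with
  | mem x hx => obtain ⟨d, hd, rfl⟩ := hx; exact proj_basis_mem b hd
  | zero => simp
  | add x y _ _ hx hy => rw [map_add, hx, hy]
  | smul c x _ hx => rw [map_smul, hx]

lemma proj_of_disj {T S : Set D} (hd : Disjoint S T) {x : A} (hx : x ∈ VS b S) :
    proj b T x = 0 := by
  induction hx using Submodule.span_induction with
  | mem x hx => obtain ⟨d, h, rfl⟩ := hx; exact proj_basis_not_mem b (Set.disjoint_left.1 hd h)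
  | zero => simp
  | add x y _ _ hx hy => rw [map_add, hx, hy, add_zero]
  | smul c x _ hx => rw [map_smul, hx, smul_zero]
end proj

lemma Ex_disj {ι : Type} {S : ι → Set D} (h : ∀ i, Cl b (S i))
    (hd : ∀ i j, i ≠ j → Disjoint (S i) (S j)) {T : Set D} (hT : Cl b T) (hTS : T = ⋃ i, S i)
    (q : ℕ) (hE : ∀ i, Ex (rS b (h i)) ε q) : Ex (rS b hT) ε q := by
  classical
  have hle : ∀ i, S i ⊆ T := fun i => by rw [hTS]; exact Set.subset_iUnion S i
  have key : ∀ i, ∀ x ∈ VS b T, ∀ a, proj b (S i) (a * x) = a * proj b (S i) x := by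
    intro i x hx a
    induction hx using Submodule.span_induction with
    | mem x hx =>
      obtain ⟨d, hd', rfl⟩ := hx
      rw [hTS] at hd'
      obtain ⟨j, hj⟩ := Set.mem_iUnion.1 hd'
      have h1 := h j a _ (basis_mem_VS b hj)
      by_cases hij : j = i
      · subst hij
        rw [proj_of_mem b h1, proj_basis_mem b hj]
      · rw [proj_of_disj b (hd j i hij) h1, proj_basis_not_mem b
          (Set.disjoint_left.1 (hd j i hij) hj), mul_zero]
    | zero => simp
    | add x y _ _ hx hy => rw [mul_add, map_add, map_add, hx, hy, mul_add]
    | smul c x _ hx => rw [mul_smul_comm, map_smul, map_smul, hx, mul_smul_comm]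
  refine Ex_sum (rS b hT) ε (fun i => rS b (h i)) (fun i => Submodule.inclusion (VS_mono b (hle i)))
    (fun i => (((proj b (S i)).codRestrict (VS b (S i)) (proj_mem_VS b (S i))).comp
      (VS b T).subtype)) ?_ ?_ ?_ q hE
  · rintro ⟨x, hx⟩
    suffices ∃ s : Finset ι, ∀ t, s ⊆ t → ∑ i ∈ t, proj b (S i) x = x by
      obtain ⟨s, hs⟩ := this
      refine ⟨s, fun t ht => ?_⟩
      apply Subtype.ext
      rw [AddSubmonoidClass.coe_finset_sum]
      exact hs t ht
    induction hx using Submodule.span_induction with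
    | mem x hx =>
      obtain ⟨d, hd', rfl⟩ := hx
      rw [hTS] at hd'
      obtain ⟨j, hj⟩ := Set.mem_iUnion.1 hd'
      refine ⟨{j}, fun t ht => ?_⟩
      rw [Finset.sum_eq_single j, proj_basis_mem b hj]
      · intro i _ hij
        exact proj_basis_not_mem b (Set.disjoint_left.1 (hd j i hij.symm) hj)
      · intro h'; exact absurd (Finset.singleton_subset_iff.1 ht) h'
    | zero => exact ⟨∅, by simp⟩
    | add x y _ _ hx hy =>
      obtain ⟨s, hs⟩ := hx
      obtain ⟨s', hs'⟩ := hy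
      refine ⟨s ∪ s', fun t ht => ?_⟩
      simp only [map_add, Finset.sum_add_distrib]
      rw [hs t (Finset.subset_union_left.trans ht), hs' t (Finset.subset_union_right.trans ht)]
    | smul c x _ hx =>
      obtain ⟨s, hs⟩ := hx
      refine ⟨s, fun t ht => ?_⟩
      simp only [map_smul, ← Finset.smul_sum, hs t ht]
  · intro i a m; rfl
  · intro i a m
    apply Subtype.ext
    exact key i m m.2 a

/-- Product representation. -/
def prodRep {M₁ M₃ : Type} [AddCommGroup M₁] [Module R M₁] [AddCommGroup M₃] [Module R M₃]
    (ρ₁ : A →ₐ[R] Module.End R M₁) (ρ₃ : A →ₐ[R] Module.End R M₃) :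
    A →ₐ[R] Module.End R (M₁ × M₃) where
  toFun a := (ρ₁ a).prodMap (ρ₃ a)
  map_one' := by ext <;> simp
  map_mul' a b := by ext <;> simp
  map_zero' := by ext <;> simp
  map_add' a b := by ext <;> simp
  commutes' r := by ext <;> simp [Algebra.algebraMap_eq_smul_one]

lemma Ex_MV [Module.Flat R A] {S T : Set D} (hS : Cl b S) (hT : Cl b T) (hI : Cl b (S ∩ T))
    (hU : Cl b (S ∪ T))
    (eS : ∀ q, Ex (rS b hS) ε q) (eT : ∀ q, Ex (rS b hT) ε q) (eI : ∀ q, Ex (rS b hI) ε q) (q : ℕ) :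
    Ex (rS b hU) ε q := by
  have l1 := VS_mono b (Set.inter_subset_left : S ∩ T ⊆ S)
  have l2 := VS_mono b (Set.inter_subset_right : S ∩ T ⊆ T)
  have l3 := VS_mono b (Set.subset_union_left : S ⊆ S ∪ T)
  have l4 := VS_mono b (Set.subset_union_right : T ⊆ S ∪ T)
  refine Ex_X₃ (rS b hI) (prodRep (rS b hS) (rS b hT)) (rS b hU) ε
    ((Submodule.inclusion l1).prod (Submodule.inclusion l2))
    ((Submodule.inclusion l3).comp (LinearMap.fst R _ _) -
      (Submodule.inclusion l4).comp (LinearMap.snd R _ _)) ?_ ?_ ?_ ?_ ?_ eI q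
      (Ex_prod ε _ _ _ (fun _ _ => rfl) q (eS q) (eT q))
  · rintro ⟨⟨x, hx⟩, ⟨y, hy⟩⟩
    constructor
    · intro h
      have h' : x - y = 0 := congrArg Subtype.val h
      obtain rfl := sub_eq_zero.1 h'
      refine ⟨⟨x, ?_⟩, rfl⟩
      rw [mem_VS] at hx hy ⊢
      exact Set.subset_inter hx hy
    · rintro ⟨⟨z, hz⟩, h⟩
      have h1 : z = x := congrArg (fun p => (p.1 : A)) h
      have h2 : z = y := congrArg (fun p => (p.2 : A)) h
      subst h1; subst h2
      apply Subtype.ext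
      exact sub_self z
  · intro x y h
    have := congrArg Prod.fst h
    exact Submodule.inclusion_injective l1 this
  · rintro ⟨x, hx⟩
    have hx' : x ∈ VS b S ⊔ VS b T := by
      rw [VS, Set.image_union, Submodule.span_union] at hx
      exact hx
    obtain ⟨y, hy, z, hz, rfl⟩ := Submodule.mem_sup.1 hx'
    refine ⟨(⟨y, hy⟩, ⟨-z, neg_mem hz⟩), ?_⟩
    apply Subtype.ext
    exact sub_neg_eq_add y z
  · intro a m; rfl
  · intro a m
    apply Subtype.ext
    exact (mul_sub a (m.1 : A) (m.2 : A)).symm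

variable {Λ : Type} (c : Λ → ℕ) (Rt : D → Set Λ) (e : Λ → A)
  (h0 : ∀ l, ε (e l) = 0) (h1 : ∀ d, ∀ l ∈ Rt d, b d * e l = b d)
  (h2 : ∀ x l, x * e l ∈ VS b {d | l ∈ Rt d})
  (h3 : ∀ d, ∀ l ∈ Rt d, ∀ m ∈ Rt d, e l * e m = e m * e l)
  (h4 : ∀ d, ∀ l ∈ Rt d, ∀ m ∈ Rt d, c l = c m → l = m)

include h1 h2 in
lemma Cl_single (l : Λ) : Cl b {d | l ∈ Rt d} := by
  apply Cl_of
  intro d hd a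
  have := h2 (a * b d) l
  rwa [mul_assoc, h1 d l hd] at this

/-- Basis elements whose right arcs contain `F`. -/
def SF (F : Finset Λ) : Set D := {d | ↑F ⊆ Rt d}

lemma SF_eq (F : Finset Λ) : SF Rt F = ⋂ l : F, {d | l.1 ∈ Rt d} := by
  ext d
  simp [SF, Set.subset_def]

include h1 h2 in
lemma Cl_SF (F : Finset Λ) : Cl b (SF Rt F) := by
  rw [SF_eq]
  exact Cl_inter b fun l => Cl_single b Rt e h1 h2 l.1

include h0 h3 in
lemma Ex_SF (F : Finset Λ) (hF : F.Nonempty) (q : ℕ) : Ex (rS b (Cl_SF b Rt e h1 h2 F)) ε q := by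
  classical
  by_cases hne : ∃ d, d ∈ SF Rt F
  · obtain ⟨d₀, hd₀⟩ := hne
    have hcomm : (F : Set Λ).Pairwise (Function.onFun Commute e) := fun l hl m hm _ =>
      h3 d₀ l (hd₀ hl) m (hd₀ hm)
    let E := F.noncommProd e hcomm
    have hE : ∀ l ∈ F, ∃ y, E = y * e l := fun l hl =>
      ⟨_, (Finset.noncommProd_erase_mul F hl e hcomm).symm⟩
    have hEm : E ∈ VS b (SF Rt F) := by
      rw [mem_VS, SF_eq]
      refine Set.subset_iInter fun l => ?_
      obtain ⟨y, hy⟩ := hE l.1 l.2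
      rw [hy]
      exact (mem_VS b).1 (h2 y l.1)
    have hEx : ∀ x ∈ VS b (SF Rt F), x * E = x := by
      intro x hx
      induction hx using Submodule.span_induction with
      | mem x hx =>
        obtain ⟨d, hd, rfl⟩ := hx
        refine Finset.noncommProd_induction F e hcomm (fun z => b d * z = b d) ?_ ?_ ?_
        · intro u v hu hv
          show b d * (u * v) = b d
          rw [← mul_assoc, hu, hv]
        · exact mul_one _
        · intro l hl
          exact h1 d l (hd hl)
      | zero => simp
      | add x y _ _ hx hy => rw [add_mul, hx, hy]
      | smul c x _ hx => rw [smul_mul_assoc, hx]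
    refine Ex_contr _ ε (VS b (SF Rt F)).subtype ⟨E, hEm⟩ (fun _ _ => rfl) ?_ ?_ q
    · rintro ⟨x, hx⟩
      exact Subtype.ext (hEx x hx)
    · rintro ⟨x, hx⟩
      obtain ⟨l, hl⟩ := hF
      obtain ⟨y, hy⟩ := hE l hl
      show ε x = 0
      rw [← hEx x hx, hy, map_mul, map_mul, h0, mul_zero, mul_zero]
  · refine Ex_disj ε b (ι := Empty) (S := fun i => i.elim) (fun i => i.elim) (fun i => i.elim) _ ?_ q
      (fun i => i.elim)
    ext d
    simp only [Set.iUnion_of_empty, Set.mem_empty_iff_false, iff_false]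
    exact fun h => hne ⟨d, h⟩

/-- Basis elements with right arcs containing `F` and having a right arc of colour `< j`. -/
def UF (F : Finset Λ) (j : ℕ) : Set D := {d | ↑F ⊆ Rt d ∧ ∃ m ∈ Rt d, c m < j}

include h1 h2 in
lemma Cl_UF (F : Finset Λ) (j : ℕ) : Cl b (UF c Rt F j) := by
  classical
  have : UF c Rt F j = ⋃ m : {m : Λ // c m < j}, SF Rt (insert m.1 F) := by
    ext d
    simp only [UF, Set.mem_setOf_eq, SF, Set.mem_iUnion, Finset.coe_insert, Set.insert_subset_iff,
      Subtype.exists, exists_prop]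
    tauto
  rw [this]
  exact Cl_union b fun m => Cl_SF b Rt e h1 h2 _

include h0 h3 h4 in
lemma Ex_UF [Module.Flat R A] (j : ℕ) : ∀ (F : Finset Λ) (q : ℕ),
    Ex (rS b (Cl_UF b c Rt e h1 h2 F j)) ε q := by
  classical
  induction j with
  | zero =>
    intro F q
    refine Ex_disj ε b (ι := Empty) (S := fun i => i.elim) (fun i => i.elim) (fun i => i.elim) _ ?_ q
      (fun i => i.elim)
    ext d
    simp [UF]
  | succ j ih =>
    intro F q
    let T : Set D := ⋃ m : {m : Λ // c m = j}, SF Rt (insert m.1 F)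
    have hTm : ∀ d, d ∈ T ↔ ↑F ⊆ Rt d ∧ ∃ m ∈ Rt d, c m = j := by
      intro d
      simp only [T, Set.mem_setOf_eq, SF, Set.mem_iUnion, Finset.coe_insert, Set.insert_subset_iff,
        Subtype.exists, exists_prop]
      tauto
    have hT : Cl b T := Cl_union b fun m => Cl_SF b Rt e h1 h2 _
    have eT : ∀ q, Ex (rS b hT) ε q := by
      intro q
      refine Ex_disj ε b (S := fun m : {m : Λ // c m = j} => SF Rt (insert m.1 F))
        (fun m => Cl_SF b Rt e h1 h2 _) ?_ hT rfl q
        (fun m => Ex_SF ε b Rt e h0 h1 h2 h3 _ (Finset.insert_nonempty _ _) q)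
      intro l m hlm
      rw [Set.disjoint_left]
      intro d hl hm
      have hl' := hl (Finset.mem_coe.2 (Finset.mem_insert_self l.1 F))
      have hm' := hm (Finset.mem_coe.2 (Finset.mem_insert_self m.1 F))
      exact hlm (Subtype.ext (h4 d _ hl' _ hm' (l.2.trans m.2.symm)))
    have hIeq : UF c Rt F j ∩ T = ⋃ m : {m : Λ // c m = j}, UF c Rt (insert m.1 F) j := by
      ext d
      rw [Set.mem_inter_iff, hTm]
      simp only [UF, Set.mem_setOf_eq, Set.mem_iUnion, Finset.coe_insert, Set.insert_subset_iff,
        Subtype.exists, exists_prop]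
      constructor
      · rintro ⟨⟨hF, m, hm, hc⟩, -, l, hl, hcl⟩
        exact ⟨l, hcl, ⟨hl, hF⟩, m, hm, hc⟩
      · rintro ⟨l, hcl, ⟨hl, hF⟩, m, hm, hc⟩
        exact ⟨⟨hF, m, hm, hc⟩, hF, l, hl, hcl⟩
    have hI : Cl b (UF c Rt F j ∩ T) := by
      rw [hIeq]
      exact Cl_union b fun m => Cl_UF b c Rt e h1 h2 _ j
    have eI : ∀ q, Ex (rS b hI) ε q := by
      intro q
      refine Ex_disj ε b (S := fun m : {m : Λ // c m = j} => UF c Rt (insert m.1 F) j)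
        (fun m => Cl_UF b c Rt e h1 h2 _ j) ?_ hI hIeq q
        (fun m => ih _ q)
      intro l m hlm
      rw [Set.disjoint_left]
      intro d hl hm
      have hl' := hl.1 (Finset.mem_coe.2 (Finset.mem_insert_self l.1 F))
      have hm' := hm.1 (Finset.mem_coe.2 (Finset.mem_insert_self m.1 F))
      exact hlm (Subtype.ext (h4 d _ hl' _ hm' (l.2.trans m.2.symm)))
    have hU : UF c Rt F (j+1) = UF c Rt F j ∪ T := by
      ext d
      rw [Set.mem_union, hTm]
      simp only [UF, Set.mem_setOf_eq]
      constructor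
      · rintro ⟨hF, m, hm, hc⟩
        rcases Nat.lt_succ_iff_lt_or_eq.1 hc with hc | hc
        · exact Or.inl ⟨hF, m, hm, hc⟩
        · exact Or.inr ⟨hF, m, hm, hc⟩
      · rintro (⟨hF, m, hm, hc⟩ | ⟨hF, m, hm, hc⟩)
        · exact ⟨hF, m, hm, by omega⟩
        · exact ⟨hF, m, hm, by omega⟩
    have key : ∀ (S : Set D) (hS : Cl b S), S = UF c Rt F j ∪ T → Ex (rS b hS) ε q := by
      rintro S hS rfl
      exact Ex_MV ε b (Cl_UF b c Rt e h1 h2 F j) hT hI hS (ih F) eT eI q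
    exact key _ _ hU

include h0 h1 h2 h3 h4 in
theorem Ex_ker {B : Type} [Ring B] [Algebra R B] [Module.Flat R A] (n : ℕ) (h5 : ∀ l, c l < n)
    (π : A →ₐ[R] B) (hker : LinearMap.ker π.toLinearMap = VS b {d | (Rt d).Nonempty}) (q : ℕ) :
    Ex (kerRep π) ε q := by
  have h := Ex_UF ε b c Rt e h0 h1 h2 h3 h4 n ∅ q
  have hU : UF c Rt ∅ n = {d | (Rt d).Nonempty} := by
    ext d
    simp only [UF, Finset.coe_empty, Set.empty_subset, true_and, Set.mem_setOf_eq]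
    exact ⟨fun ⟨m, hm, _⟩ => ⟨m, hm⟩, fun ⟨m, hm⟩ => ⟨m, hm, h5 m⟩⟩
  have key : ∀ (V W : Submodule R A) (hV : ∀ a, ∀ v ∈ V, Algebra.lmul R A a v ∈ V)
      (hW : ∀ a, ∀ v ∈ W, Algebra.lmul R A a v ∈ W), V = W →
      Ex (subRep (Algebra.lmul R A) V hV) ε q → Ex (subRep (Algebra.lmul R A) W hW) ε q := by
    rintro V W hV hW rfl h
    exact h
  exact key _ _ _ _ (by rw [hU, hker]) h
end Boyde
end GBH
end

section
namespace GBH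
section Coxeter
variable {M : Type} [Monoid M] (z : ℕ → M) (N : ℕ)

/-- Coxeter relations of type A for the first `N` elements of a sequence. -/
structure Cox : Prop where
  sq : ∀ i < N, z i * z i = 1
  braid : ∀ i, i + 1 < N → z i * z (i+1) * z i = z (i+1) * z i * z (i+1)
  comm : ∀ i j, i + 1 < j → j < N → z i * z j = z j * z i

/-- Descending products. -/
def CC (j : ℕ) : ℕ → M
  | 0 => 1
  | k+1 => z (j+k) * CC j k

variable {z N}

lemma CC_succ (j k : ℕ) : CC z j (k+1) = CC z (j+1) k * z j := by
  induction k with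
  | zero => simp [CC]
  | succ k ih =>
    rw [CC, ih, CC, ← mul_assoc, show j + (k+1) = j + 1 + k by ring]

lemma CC_comm_low (hz : Cox z N) (i j k : ℕ) (h : i + 1 < j) (hN : j + k ≤ N) :
    CC z j k * z i = z i * CC z j k := by
  induction k with
  | zero => simp [CC]
  | succ k ih =>
    rw [CC, mul_assoc, ih (by omega), ← mul_assoc, ← hz.comm i (j+k) (by omega) (by omega), mul_assoc]

lemma CC_comm_high (hz : Cox z N) (i j k : ℕ) (h : j + k < i) (hN : i < N) :
    CC z j k * z i = z i * CC z j k := by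
  induction k with
  | zero => simp [CC]
  | succ k ih =>
    rw [CC, mul_assoc, ih (by omega), ← mul_assoc, hz.comm (j+k) i (by omega) (by omega), mul_assoc]

lemma CC_mid (hz : Cox z N) (j a b : ℕ) (hN : j + (a + 2 + b) ≤ N) :
    CC z j (a+2+b) * z (j+a+1) = z (j+a) * CC z j (a+2+b) := by
  induction b with
  | zero =>
    have h1 : CC z j (a+2) = z (j+a+1) * (z (j+a) * CC z j a) := rfl
    rw [add_zero, h1, mul_assoc, mul_assoc, CC_comm_high hz _ _ _ (by omega) (by omega)]
    have := hz.braid (j+a) (by omega)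
    calc z (j+a+1) * (z (j+a) * (z (j+a+1) * CC z j a))
      = (z (j+a+1) * z (j+a) * z (j+a+1)) * CC z j a := by simp only [mul_assoc]
      _ = _ := by rw [← this]; simp only [mul_assoc]
  | succ b ih =>
    have h1 : CC z j (a+2+(b+1)) = z (j+(a+2+b)) * CC z j (a+2+b) := rfl
    rw [h1, mul_assoc, ih (by omega), ← mul_assoc, ← mul_assoc,
      hz.comm (j+a) (j+(a+2+b)) (by omega) (by omega)]

variable (z) in
/-- Submonoid generated by the first `m` elements. -/
def ZZ (m : ℕ) : Submonoid M := Submonoid.closure {x | ∃ i < m, x = z i}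

lemma z_mem {i m : ℕ} (h : i < m) : z i ∈ ZZ z m := Submonoid.subset_closure ⟨i, h, rfl⟩

lemma ZZ_succ (hz : Cox z N) (m : ℕ) (hm : m + 1 ≤ N) (x : M) (hx : x ∈ ZZ z (m+1)) :
    ∃ y ∈ ZZ z m, ∃ j k, j + k = m + 1 ∧ x = y * CC z j k := by
  induction hx using Submonoid.closure_induction_right with
  | one => exact ⟨1, one_mem _, m+1, 0, rfl, by simp [CC]⟩
  | mul_right x _ w hw ih =>
    obtain ⟨i, hi, rfl⟩ := hw
    obtain ⟨y, hy, j, k, hjk, rfl⟩ := ih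
    rcases lt_trichotomy (i+1) j with h | h | h
    · exact ⟨y * z i, mul_mem hy (z_mem (by omega)), j, k, hjk, by
        rw [mul_assoc, CC_comm_low hz i j k h (by omega), mul_assoc]⟩
    · subst h
      exact ⟨y, hy, i, k+1, by omega, by rw [CC_succ, mul_assoc]⟩
    · rcases Nat.lt_or_ge j i with h' | h'
      · obtain ⟨a, rfl⟩ := Nat.exists_eq_add_of_lt h'
        obtain ⟨b, rfl⟩ := Nat.exists_eq_add_of_le (show a + 2 ≤ k by omega)
        exact ⟨y * z (j+a), mul_mem hy (z_mem (by omega)), j, _, hjk, by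
          rw [mul_assoc, CC_mid hz j a b (by omega), mul_assoc]⟩
      · obtain rfl : i = j := by omega
        obtain ⟨k, rfl⟩ := Nat.exists_eq_succ_of_ne_zero (show k ≠ 0 by omega)
        exact ⟨y, hy, i+1, k, by omega, by
          rw [Nat.succ_eq_add_one, CC_succ, mul_assoc, mul_assoc, hz.sq i (by omega), mul_one]⟩

/-- Adjacent transposition. -/
def sg (n i : ℕ) : Equiv.Perm (Fin n) :=
  if h : i + 1 < n then Equiv.swap ⟨i, by omega⟩ ⟨i+1, h⟩ else 1

lemma sg_left {n i : ℕ} (h : i + 1 < n) : sg n i ⟨i, by omega⟩ = ⟨i+1, h⟩ := by simp [sg, h]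
lemma sg_right {n i : ℕ} (h : i + 1 < n) : sg n i ⟨i+1, h⟩ = ⟨i, by omega⟩ := by simp [sg, h]
lemma sg_other {n i : ℕ} (x : Fin n) (h1 : (x:ℕ) ≠ i) (h2 : (x:ℕ) ≠ i+1) : sg n i x = x := by
  unfold sg; split
  · apply Equiv.swap_apply_of_ne_of_ne <;> (intro h; apply_fun Fin.val at h; simp at h; omega)
  · rfl

variable {n : ℕ} (ψ : M →* Equiv.Perm (Fin n)) (hψ : ∀ i, i + 1 < n → ψ (z i) = sg n i)

include hψ in
lemma psi_CC (j k : ℕ) (h : j + k < n) : ψ (CC z j k) ⟨j, by omega⟩ = ⟨j+k, h⟩ := by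
  induction k with
  | zero => simp [CC]
  | succ k ih =>
    rw [CC, map_mul, Equiv.Perm.mul_apply, ih (by omega), hψ _ (by omega), sg_left]; rfl

include hψ in
lemma psi_fix (m : ℕ) (h : m < n) (x : M) (hx : x ∈ ZZ z m) (v : Fin n) (hv : m < v) : ψ x v = v := by
  induction hx using Submonoid.closure_induction with
  | mem x hx => obtain ⟨i, hi, rfl⟩ := hx; rw [hψ _ (by omega)]; apply sg_other <;> omega
  | one => simp
  | mul x y _ _ hx hy => simp [hx, hy]

include hψ in
lemma ZZ_trivial (hz : Cox z N) (m : ℕ) (hm : m ≤ N) (hmn : m < n ∨ m = 0) (x : M)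
    (hx : x ∈ ZZ z m) (h1 : ψ x = 1) : x = 1 := by
  induction m generalizing x with
  | zero =>
    have : {x | ∃ i < 0, x = z i} = ∅ := by ext; simp
    rwa [ZZ, this, Submonoid.closure_empty, Submonoid.mem_bot] at hx
  | succ m ih =>
    obtain ⟨y, hy, j, k, hjk, rfl⟩ := ZZ_succ hz m hm x hx
    have hk : k = 0 := by
      have hc := psi_CC ψ hψ j k (by omega)
      have := congrArg (fun π => π ⟨j, by omega⟩) h1
      simp only [map_mul, Equiv.Perm.mul_apply, hc, Equiv.Perm.one_apply] at this
      rw [psi_fix ψ hψ m (by omega) y hy _ (by simp; omega)] at this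
      simpa using this
    subst hk
    simp only [CC, mul_one] at h1 ⊢
    exact ih (by omega) (by omega) y hy h1
end Coxeter

section Gen
variable {n : ℕ}
/-- Permutations fixing the first `a` points are generated by the adjacent transpositions
of the remaining points. -/
lemma perm_gen (a : ℕ) (π : Equiv.Perm (Fin n)) (h : ∀ x : Fin n, (x:ℕ) < a → π x = x) :
    π ∈ Submonoid.closure {σ | ∃ i, a ≤ i ∧ i + 1 < n ∧ σ = sg n i} := by
  obtain ⟨d, hd⟩ : ∃ d, n ≤ a + d := ⟨n, by omega⟩
  induction d generalizing a π with
  | zero =>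
    have : π = 1 := by ext x; rw [h x (by omega)]; rfl
    rw [this]; exact one_mem _
  | succ d ih =>
    by_cases ha : n ≤ a
    · exact ih a π h (by omega)
    push Not at ha
    -- bring the image of `a` down to `a`
    obtain ⟨c, hc⟩ : ∃ c, ((π ⟨a, ha⟩ : Fin n) : ℕ) ≤ a + c := ⟨n, by omega⟩
    induction c generalizing π with
    | zero =>
      have hge : a ≤ (π ⟨a, ha⟩ : Fin n) := by
        by_contra hlt
        push Not at hlt
        have h1 := h _ hlt
        have := π.injective h1
        rw [this] at hlt; simp at hlt
      have := ih (a+1) π (by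
        intro x hx
        rcases Nat.lt_or_ge x a with h' | h'
        · exact h x h'
        · have : x = ⟨a, ha⟩ := by ext; simp; omega
          subst this; ext; simp; omega) (by omega)
      refine Submonoid.closure_mono ?_ this
      rintro σ ⟨i, h1, h2, rfl⟩; exact ⟨i, by omega, h2, rfl⟩
    | succ c ihc =>
      by_cases hle : ((π ⟨a, ha⟩ : Fin n) : ℕ) ≤ a + c
      · exact ihc π h hle
      have hlt := (π ⟨a, ha⟩).2
      have hs : a + c + 1 < n := by omega
      have hval : π ⟨a, ha⟩ = ⟨a+c+1, hs⟩ := by ext; simp; omega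
      have hsq : sg n (a+c) * sg n (a+c) = 1 := by simp [sg, hs]
      have hm := ihc (sg n (a+c) * π) (by
        intro x hx
        rw [Equiv.Perm.mul_apply, h x hx]; apply sg_other <;> omega) (by
        rw [Equiv.Perm.mul_apply, hval, sg_right])
      have : π = sg n (a+c) * (sg n (a+c) * π) := by rw [← mul_assoc, hsq, one_mul]
      rw [this]
      exact mul_mem (Submonoid.subset_closure ⟨_, by omega, hs, rfl⟩) hm
end Gen

section Pres
variable {A : Type} [Monoid A] {s : ℕ → A} {n : ℕ}

lemma sw_braid {α : Type} [DecidableEq α] (a b c : α)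
    (hab : a ≠ b) (hac : a ≠ c) (hbc : b ≠ c) :
    Equiv.swap a b * Equiv.swap b c * Equiv.swap a b
      = Equiv.swap b c * Equiv.swap a b * Equiv.swap b c := by
  ext x; simp only [Equiv.Perm.mul_apply, Equiv.swap_apply_def]; grind

lemma sw_comm {α : Type} [DecidableEq α] (a b c d : α)
    (hac : a ≠ c) (had : a ≠ d) (hbc : b ≠ c) (hbd : b ≠ d) :
    Equiv.swap a b * Equiv.swap c d = Equiv.swap c d * Equiv.swap a b := by
  ext x; simp only [Equiv.Perm.mul_apply, Equiv.swap_apply_def]; grind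

lemma sg_cox : Cox (sg n) (n-1) where
  sq i hi := by simp [sg, show i + 1 < n by omega]
  braid i hi := by
    simp only [sg, show i + 1 < n by omega, show i + 1 + 1 < n by omega, dite_true]
    apply sw_braid <;> simp <;> omega
  comm i j h hj := by
    simp only [sg, show i + 1 < n by omega, show j + 1 < n by omega, dite_true]
    apply sw_comm <;> (simp <;> omega)

variable (hs : Cox s (n-1))
include hs

lemma prod_cox : Cox (fun i => (s i, sg n i)) (n-1) where
  sq i hi := by simp [hs.sq i hi, sg_cox.sq i hi]
  braid i hi := by simp [hs.braid i hi, sg_cox.braid i hi]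
  comm i j h hj := by simp [hs.comm i j h hj, sg_cox.comm i j h hj]

lemma graph_triv (a : A) (h : (a, (1 : Equiv.Perm (Fin n))) ∈ ZZ (fun i => (s i, sg n i)) (n-1)) :
    a = 1 := by
  have := ZZ_trivial (MonoidHom.snd A (Equiv.Perm (Fin n))) (fun i _ => rfl) (prod_cox hs) (n-1) le_rfl
    (by omega) (a, 1) h rfl
  simpa using this

omit hs in
lemma graph_ex (π : Equiv.Perm (Fin n)) : ∃ a, (a, π) ∈ ZZ (fun i => (s i, sg n i)) (n-1) := by
  have := perm_gen 0 π (by simp)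
  induction this using Submonoid.closure_induction with
  | mem x hx => obtain ⟨i, _, hi, rfl⟩ := hx; exact ⟨s i, z_mem (z := fun i => (s i, sg n i)) (by omega)⟩
  | one => exact ⟨1, one_mem _⟩
  | mul x y _ _ hx hy =>
    obtain ⟨a, ha⟩ := hx; obtain ⟨b, hb⟩ := hy
    exact ⟨a * b, mul_mem ha hb⟩

lemma graph_uniq (π : Equiv.Perm (Fin n)) (a b : A)
    (ha : (a, π) ∈ ZZ (fun i => (s i, sg n i)) (n-1))
    (hb : (b, π) ∈ ZZ (fun i => (s i, sg n i)) (n-1)) : a = b := by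
  obtain ⟨c, hc⟩ := graph_ex (s := s) π⁻¹
  have h1 := graph_triv hs (a * c) (by simpa using mul_mem ha hc)
  have h2 := graph_triv hs (c * b) (by simpa using mul_mem hc hb)
  calc a = a * (c * b) := by rw [h2, mul_one]
    _ = b := by rw [← mul_assoc, h1, one_mul]

/-- The homomorphism from the symmetric group given by elements satisfying
the Coxeter relations. -/
def permHom : Equiv.Perm (Fin n) →* A where
  toFun π := (graph_ex (s := s) π).choose
  map_one' := graph_uniq hs 1 _ _ (graph_ex (s := s) 1).choose_spec (one_mem _)
  map_mul' x y := graph_uniq hs (x*y) _ _ (graph_ex (s := s) _).choose_spec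
    (mul_mem (graph_ex (s := s) x).choose_spec (graph_ex (s := s) y).choose_spec)

lemma permHom_sg (i : ℕ) (hi : i + 1 < n) : permHom hs (sg n i) = s i :=
  graph_uniq hs _ _ _ (graph_ex (s := s) _).choose_spec
    (z_mem (z := fun i => (s i, sg n i)) (by omega))
end Pres
end GBH
end

section
namespace GBH

/-- The group `G ≀ Σ_n`. -/
abbrev Gam (G : Type) [CommGroup G] (n : ℕ) : Type :=
  (Fin n → G) ⋊[permMulAut G n] Equiv.Perm (Fin n)

lemma permMulAut_apply (G : Type) [Group G] (n : ℕ) (π : Equiv.Perm (Fin n)) (f : Fin n → G)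
    (i : Fin n) : permMulAut G n π f i = f (π⁻¹ i) := rfl

/-- Algebras with elements satisfying the relations of the Brauer algebra (those we need). -/
structure GBD (k : Type) [CommRing k] (G : Type) [CommGroup G] (n : ℕ) (φ : G → k) (δ : k)
    (A : Type) [Ring A] [Algebra k A] where
  s : ℕ → A
  e : ℕ → A
  t : G → Fin n → A
  cox : Cox s (n-1)
  e_sq : ∀ i, i + 1 < n → e i * e i = δ • e i
  ee_comm : ∀ i j, i + 1 < j → j + 1 < n → e i * e j = e j * e i
  se_absorb : ∀ i, i + 1 < n → s i * e i = e i
  es_absorb : ∀ i, i + 1 < n → e i * s i = e i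
  se_comm : ∀ i j, i + 1 < n → j + 1 < n → (i + 1 < j ∨ j + 1 < i) → s i * e j = e j * s i
  sse : ∀ i j, i + 1 < n → j + 1 < n → (j = i + 1 ∨ i = j + 1) → s i * s j * e i = e j * e i
  ess : ∀ i j, i + 1 < n → j + 1 < n → (j = i + 1 ∨ i = j + 1) → e i * s j * s i = e i * e j
  t_mul : ∀ g h j, t g j * t h j = t (g * h) j
  t_one : ∀ j, t 1 j = 1
  tt_comm : ∀ g h j l, j ≠ l → t g j * t h l = t h l * t g j
  st : ∀ g i l, i + 1 < n → s i * t g l = t g (sg n i l) * s i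
  et_comm : ∀ g i (l : Fin n), i + 1 < n → (l:ℕ) ≠ i → (l:ℕ) ≠ i + 1 → e i * t g l = t g l * e i
  slide_l : ∀ g i (h : i + 1 < n), t g ⟨i, by omega⟩ * e i = t g ⟨i+1, h⟩ * e i
  slide_r : ∀ g i (h : i + 1 < n), e i * t g ⟨i, by omega⟩ = e i * t g ⟨i+1, h⟩
  loop : ∀ g i (h : i + 1 < n), e i * t g ⟨i, by omega⟩ * e i = φ g • e i
  gen : Algebra.adjoin k ({x | (∃ i, i + 1 < n ∧ (x = s i ∨ x = e i)) ∨ ∃ g j, x = t g j}) = ⊤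

namespace GBD
variable {k : Type} [CommRing k] {G : Type} [CommGroup G] {n : ℕ} {φ : G → k} {δ : k}
  {A : Type} [Ring A] [Algebra k A] (X : GBD k G n φ δ A)

/-- Permutations in the algebra. -/
def P : Equiv.Perm (Fin n) →* A := permHom X.cox

lemma P_sg (i : ℕ) (hi : i + 1 < n) : X.P (sg n i) = X.s i := permHom_sg _ i hi

/-- Labels at one node. -/
def t1 (j : Fin n) : G →* A where
  toFun g := X.t g j
  map_one' := X.t_one j
  map_mul' g h := (X.t_mul g h j).symm

lemma t1_comm : Pairwise fun i j : Fin n => ∀ (x y : G), Commute (X.t1 i x) (X.t1 j y) :=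
  fun i j hij x y => X.tt_comm x y i j hij

/-- Labels in the algebra. -/
def T : (Fin n → G) →* A := MonoidHom.noncommPiCoprod X.t1 X.t1_comm

lemma T_single (j : Fin n) (g : G) : X.T (Pi.mulSingle j g) = X.t g j :=
  MonoidHom.noncommPiCoprod_mulSingle X.t1 j g

lemma sT (i : ℕ) (hi : i + 1 < n) (f : Fin n → G) :
    X.s i * X.T f = X.T (permMulAut G n (sg n i) f) * X.s i := by
  induction f using Pi.mulSingle_induction with
  | one => simp
  | mul f g hf hg => rw [map_mul, ← mul_assoc, hf, mul_assoc, hg, map_mul, map_mul, mul_assoc]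
  | mulSingle j g =>
    have : permMulAut G n (sg n i) (Pi.mulSingle j g) = Pi.mulSingle (sg n i j) g := by
      funext l
      rw [permMulAut_apply]
      simp only [Pi.mulSingle_apply, Equiv.Perm.inv_eq_iff_eq]
    rw [this, T_single, T_single, X.st g i j hi]

lemma PT (π : Equiv.Perm (Fin n)) (f : Fin n → G) :
    X.P π * X.T f = X.T (permMulAut G n π f) * X.P π := by
  have := perm_gen 0 π (by simp)
  induction this using Submonoid.closure_induction generalizing f with
  | mem x hx => obtain ⟨i, _, hi, rfl⟩ := hx; rw [P_sg _ _ hi]; exact X.sT i hi f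
  | one => simp
  | mul x y _ _ hx hy =>
    rw [map_mul, mul_assoc, hy, ← mul_assoc, hx, mul_assoc, map_mul]; rfl

/-- The wreath product in the algebra. -/
def w : Gam G n →* A where
  toFun u := X.T u.left * X.P u.right
  map_one' := by simp
  map_mul' u v := by
    simp only [SemidirectProduct.mul_left, SemidirectProduct.mul_right, map_mul]
    rw [mul_assoc, mul_assoc, ← mul_assoc (X.P u.right), X.PT, mul_assoc]

lemma w_inr (π : Equiv.Perm (Fin n)) : X.w (SemidirectProduct.inr π) = X.P π := by simp [w]
lemma w_inl (f : Fin n → G) : X.w (SemidirectProduct.inl f) = X.T f := by simp [w]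
lemma w_eq (u : Gam G n) : X.w u = X.T u.left * X.P u.right := rfl

lemma w_mul_inv (u : Gam G n) : X.w u * X.w u⁻¹ = 1 := by rw [← map_mul]; simp
lemma w_inv_mul (u : Gam G n) : X.w u⁻¹ * X.w u = 1 := by rw [← map_mul]; simp
end GBD

/-- Labelled (oriented) arcs. -/
@[ext] structure Arc (n : ℕ) (G : Type) where
  i : Fin n
  j : Fin n
  ne : i ≠ j
  g : G

section
variable {G : Type} [CommGroup G] {n : ℕ}
instance : MulAction (Gam G n) (Arc n G) where
  smul u a := ⟨u.right a.i, u.right a.j, u.right.injective.ne a.ne,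
    a.g * (u.left (u.right a.i))⁻¹ * (u.left (u.right a.j))⁻¹⟩
  one_smul a := by
    ext <;> simp [HSMul.hSMul]
  mul_smul u v a := by
    simp only [HSMul.hSMul]
    ext
    · simp
    · simp
    · simp only [SemidirectProduct.mul_left, SemidirectProduct.mul_right, Pi.mul_apply,
        permMulAut_apply, Equiv.Perm.mul_apply, show ∀ y, u.right⁻¹ (u.right y) = y from u.right.symm_apply_apply, mul_inv]
      simp only [mul_assoc, mul_comm, mul_left_comm]

lemma smul_i (u : Gam G n) (a : Arc n G) : (u • a).i = u.right a.i := rfl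
lemma smul_j (u : Gam G n) (a : Arc n G) : (u • a).j = u.right a.j := rfl
lemma smul_g (u : Gam G n) (a : Arc n G) :
    (u • a).g = a.g * (u.left (u.right a.i))⁻¹ * (u.left (u.right a.j))⁻¹ := rfl

/-- The basic arcs. -/
def bArc (G : Type) [CommGroup G] {n : ℕ} (l : ℕ) (h : l + 1 < n) : Arc n G :=
  ⟨⟨l, by omega⟩, ⟨l+1, h⟩, by simp, 1⟩

lemma exists_perm {m : ℕ} (p q : Fin m → Fin n) (hp : Function.Injective p)
    (hq : Function.Injective q) : ∃ π : Equiv.Perm (Fin n), ∀ x, π (p x) = q x := by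
  have := Equiv.Perm.isMultiplyPretransitive (Fin n) m
  obtain ⟨π, h⟩ := this.exists_smul_eq ⟨p, hp⟩ ⟨q, hq⟩
  exact ⟨π, fun x => by simpa using congrArg (fun f => f x) h⟩

lemma exists_smul_bArc (a : Arc n G) (h : 0 + 1 < n) : ∃ u : Gam G n, u • bArc G 0 h = a := by
  obtain ⟨π, hπ⟩ := exists_perm ![⟨0, by omega⟩, ⟨1, h⟩] ![a.i, a.j]
    (by intro x y; fin_cases x <;> fin_cases y <;> simp)
    (by have := a.ne; intro x y; fin_cases x <;> fin_cases y <;> simp [this, this.symm])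
  have h0 := hπ 0
  have h1 := hπ 1
  simp at h0 h1
  refine ⟨⟨Pi.mulSingle a.i a.g⁻¹, π⟩, ?_⟩
  ext
  · simp [smul_i, bArc, h0]
  · simp [smul_j, bArc, h1]
  · simp [smul_g, bArc, h0, h1, a.ne.symm]
end

namespace GBD
variable {k : Type} [CommRing k] {G : Type} [CommGroup G] {n : ℕ} {φ : G → k} {δ : k}
  {A : Type} [Ring A] [Algebra k A] (X : GBD k G n φ δ A)

lemma P_comm_e (h : 0 + 1 < n) (π : Equiv.Perm (Fin n)) (h0 : π ⟨0, by omega⟩ = ⟨0, by omega⟩)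
    (h1 : π ⟨1, h⟩ = ⟨1, h⟩) : X.P π * X.e 0 = X.e 0 * X.P π := by
  have := perm_gen 2 π (by
    intro x hx
    obtain ⟨x, hx'⟩ := x
    simp only at hx
    interval_cases x
    exacts [h0, h1])
  clear h0 h1
  induction this using Submonoid.closure_induction with
  | mem x hx =>
    obtain ⟨i, hi2, hi, rfl⟩ := hx
    rw [P_sg _ _ hi]; exact X.se_comm i 0 hi h (by omega)
  | one => simp
  | mul x y _ _ hx hy => rw [map_mul, mul_assoc, hy, ← mul_assoc, hx, mul_assoc]

lemma T_comm_e (h : 0 + 1 < n) (f : Fin n → G) :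
    X.T (fun i => if (i:ℕ) < 2 then 1 else f i) * X.e 0
      = X.e 0 * X.T (fun i => if (i:ℕ) < 2 then 1 else f i) := by
  induction f using Pi.mulSingle_induction with
  | one =>
    have : (fun i : Fin n => if (i:ℕ) < 2 then (1:G) else (1 : Fin n → G) i) = 1 := by
      funext i; simp
    rw [this]; simp
  | mul f g hf hg =>
    have : (fun i : Fin n => if (i:ℕ) < 2 then (1:G) else (f * g) i)
      = (fun i : Fin n => if (i:ℕ) < 2 then 1 else f i) * (fun i : Fin n => if (i:ℕ) < 2 then 1 else g i) := by
      funext i; simp only [Pi.mul_apply]; split <;> simp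
    rw [this, map_mul, mul_assoc, hg, ← mul_assoc, hf, mul_assoc]
  | mulSingle j g =>
    by_cases hj : (j:ℕ) < 2
    · have : (fun i : Fin n => if (i:ℕ) < 2 then (1:G) else (Pi.mulSingle j g : Fin n → G) i) = 1 := by
        funext i; simp only [Pi.mulSingle_apply]; split
        · rfl
        · rw [if_neg (by rintro rfl; omega)]; rfl
      rw [this]; simp
    · have : (fun i : Fin n => if (i:ℕ) < 2 then (1:G) else (Pi.mulSingle j g : Fin n → G) i)
          = Pi.mulSingle j g := by
        funext i; simp only [Pi.mulSingle_apply]; split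
        · rw [if_neg (by rintro rfl; omega)]
        · rfl
      rw [this, T_single, X.et_comm g 0 j h (by omega) (by omega)]

lemma tt_e (h : 0 + 1 < n) (x : G) : X.t x ⟨0, by omega⟩ * X.t x⁻¹ ⟨1, h⟩ * X.e 0 = X.e 0 := by
  rw [mul_assoc, ← X.slide_l _ _ h, ← mul_assoc, X.t_mul]; simp [X.t_one]

lemma e_tt (h : 0 + 1 < n) (x : G) : X.e 0 * (X.t x ⟨0, by omega⟩ * X.t x⁻¹ ⟨1, h⟩) = X.e 0 := by
  rw [← mul_assoc, X.slide_r _ _ h, mul_assoc, X.t_mul]; simp [X.t_one]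

lemma stab_e (h : 0 + 1 < n) (u : Gam G n) (hu : u • bArc G 0 h = bArc G 0 h) :
    X.w u * X.e 0 = X.e 0 * X.w u := by
  have h0 : u.right ⟨0, by omega⟩ = ⟨0, by omega⟩ := congrArg Arc.i hu
  have h1 : u.right ⟨1, h⟩ = ⟨1, h⟩ := congrArg Arc.j hu
  have hg := congrArg Arc.g hu
  simp only [smul_g, bArc, h0] at hg
  have h1' : u.right ⟨0+1, h⟩ = ⟨1, h⟩ := h1
  rw [h1', one_mul, inv_mul_eq_one] at hg
  set x := u.left ⟨0, by omega⟩ with hx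
  have hf : u.left = Pi.mulSingle ⟨0, by omega⟩ x * Pi.mulSingle ⟨1, h⟩ x⁻¹ *
      (fun i : Fin n => if (i:ℕ) < 2 then 1 else u.left i) := by
    funext i
    obtain ⟨i, hi⟩ := i
    simp only [Pi.mul_apply, Pi.mulSingle_apply, Fin.mk.injEq]
    by_cases hi0 : i = 0
    · subst hi0; simp [hx]
    by_cases hi1 : i = 1
    · subst hi1; simp; rw [hg]; simp
    have : ¬ i < 2 := by omega
    simp [hi0, hi1, this]
  rw [w_eq, mul_assoc, P_comm_e X h _ h0 h1, ← mul_assoc, ← mul_assoc]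
  congr 1
  rw [hf, map_mul, map_mul, T_single, T_single, mul_assoc, T_comm_e X h, ← mul_assoc, ← mul_assoc,
    tt_e, e_tt]

variable (di : k)

/-- The idempotent of an arc. -/
def a (α : Arc n G) : A :=
  if h : 0 + 1 < n then
    di • (X.w (exists_smul_bArc α h).choose * X.e 0 * X.w (exists_smul_bArc α h).choose⁻¹)
  else 0

lemma a_spec0 (h : 0 + 1 < n) (u : Gam G n) :
    X.a di (u • bArc G 0 h) = di • (X.w u * X.e 0 * X.w u⁻¹) := by
  set v := (exists_smul_bArc (u • bArc G 0 h) h).choose with hv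
  have h1 : v • bArc G 0 h = u • bArc G 0 h := (exists_smul_bArc (u • bArc G 0 h) h).choose_spec
  rw [a, dif_pos h, ← hv]
  congr 1
  have := X.stab_e h (u⁻¹ * v) (by rw [mul_smul, h1, inv_smul_smul])
  rw [map_mul] at this
  calc X.w v * X.e 0 * X.w v⁻¹ = X.w u * (X.w u⁻¹ * X.w v * X.e 0) * X.w v⁻¹ := by
        simp only [← mul_assoc, w_mul_inv, one_mul]
    _ = _ := by rw [this]; simp only [mul_assoc, w_mul_inv, mul_one]

lemma Arc_lt (α : Arc n G) : 0 + 1 < n := by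
  have := α.ne; have h1 := α.i.2; have h2 := α.j.2
  by_contra h
  exact this (by ext; omega)

/-- Equivariance. -/
lemma a_smul (u : Gam G n) (α : Arc n G) : X.a di (u • α) = X.w u * X.a di α * X.w u⁻¹ := by
  have h := Arc_lt α
  obtain ⟨v, rfl⟩ := exists_smul_bArc α h
  rw [← mul_smul, a_spec0, a_spec0, mul_inv_rev, map_mul, map_mul, mul_smul_comm, smul_mul_assoc]
  simp only [mul_assoc]

lemma w_a (u : Gam G n) (α : Arc n G) : X.w u * X.a di α = X.a di (u • α) * X.w u := by
  rw [a_smul, mul_assoc, w_inv_mul, mul_one]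

lemma a_bArc (l : ℕ) (h : l + 1 < n) : X.a di (bArc G l h) = di • X.e l := by
  induction l with
  | zero => simpa using X.a_spec0 di h 1
  | succ l ih =>
    set u : Gam G n := SemidirectProduct.inr (sg n l * sg n (l+1)) with hu
    have h1 : u • bArc G l (by omega) = bArc G (l+1) h := by
      ext
      · rw [smul_i]; simp only [hu, bArc, SemidirectProduct.right_inr, Equiv.Perm.mul_apply]
        rw [sg_other (i := l+1) ⟨l, _⟩ (by simp) (by simp; omega), sg_left (by omega)]
      · rw [smul_j]; simp only [hu, bArc, SemidirectProduct.right_inr, Equiv.Perm.mul_apply]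
        rw [sg_left h, sg_other _ (by simp; omega) (by simp)]
      · simp [smul_g, hu, bArc]
    rw [← h1, a_smul, ih (by omega), mul_smul_comm, smul_mul_assoc]
    congr 1
    have h2 : X.w u = X.s l * X.s (l+1) := by
      rw [hu, w_inr, map_mul, P_sg _ _ (by omega), P_sg _ _ (by omega)]
    rw [h2, X.sse l (l+1) (by omega) (by omega) (by omega),
      ← X.ess (l+1) l (by omega) (by omega) (by omega), mul_assoc (X.e (l+1)), ← h2, mul_assoc,
      w_mul_inv, mul_one]
end GBD
end GBH
end

section
namespace GBH

section
variable {G : Type} [CommGroup G] {n : ℕ}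
/-- Reverse the orientation of an arc. -/
def Arc.flip (α : Arc n G) : Arc n G := ⟨α.j, α.i, α.ne.symm, α.g⟩

/-- Disjointness of arcs. -/
def Arc.Disj (α β : Arc n G) : Prop := α.i ≠ β.i ∧ α.i ≠ β.j ∧ α.j ≠ β.i ∧ α.j ≠ β.j

lemma smul_flip (u : Gam G n) (α : Arc n G) : (u • α).flip = u • α.flip := by
  ext
  · rfl
  · rfl
  · simp only [Arc.flip, smul_g]; simp only [mul_assoc, mul_comm, mul_left_comm]

lemma flip_flip (α : Arc n G) : α.flip.flip = α := rfl

lemma pair_disj (α β : Arc n G) (h : α.Disj β) : ∃ h0 : 0 + 1 < n, ∃ h2 : 2 + 1 < n,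
    ∃ u : Gam G n, u • bArc G 0 h0 = α ∧ u • bArc G 2 h2 = β := by
  obtain ⟨h1, h2, h3, h4⟩ := h
  have ha := α.ne
  have hb := β.ne
  have hq : Function.Injective ![α.i, α.j, β.i, β.j] := by
    intro x y
    fin_cases x <;> fin_cases y <;> simp [*, Ne.symm h1, Ne.symm h2, Ne.symm h3, Ne.symm h4, ha.symm, hb.symm]
  have hn : 4 ≤ n := by simpa using Fintype.card_le_of_injective _ hq
  obtain ⟨π, hπ⟩ := exists_perm (fun x : Fin 4 => (⟨x, by omega⟩ : Fin n)) _
    (by intro x y hxy; simpa [Fin.ext_iff] using hxy) hq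
  have e0 := hπ 0
  have e1 := hπ 1
  have e2 := hπ 2
  have e3 := hπ 3
  simp at e0 e1 e2 e3
  refine ⟨by omega, by omega, ⟨Pi.mulSingle α.i α.g⁻¹ * Pi.mulSingle β.i β.g⁻¹, π⟩, ?_, ?_⟩
  · ext
    · simp [smul_i, bArc, e0]
    · simp [smul_j, bArc, e1]
    · simp [smul_g, bArc, e0, e1, Pi.mulSingle_apply, ha.symm, h1, h3]
  · ext
    · simp [smul_i, bArc, e2]
    · simp [smul_j, bArc, e3]
    · simp [smul_g, bArc, e2, e3, Pi.mulSingle_apply, hb.symm, h1.symm, h2.symm]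

lemma pair_chain (α β : Arc n G) (h : α.j = β.i) (h' : α.i ≠ β.j) : ∃ h0 : 0 + 1 < n, ∃ h1 : 1 + 1 < n,
    ∃ u : Gam G n, u • bArc G 0 h0 = α ∧ u • bArc G 1 h1 = β := by
  have ha := α.ne
  have hb := β.ne
  have hb' := hb
  rw [← h] at hb'
  have hq : Function.Injective ![α.i, α.j, β.j] := by
    intro x y
    fin_cases x <;> fin_cases y <;> simp [ha, hb', h', ha.symm, hb'.symm, h'.symm]
  have hn : 3 ≤ n := by simpa using Fintype.card_le_of_injective _ hq
  obtain ⟨π, hπ⟩ := exists_perm (fun x : Fin 3 => (⟨x, by omega⟩ : Fin n)) _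
    (by intro x y hxy; simpa [Fin.ext_iff] using hxy) hq
  have e0 := hπ 0
  have e1 := hπ 1
  have e2 := hπ 2
  simp at e0 e1 e2
  refine ⟨by omega, by omega, ⟨Pi.mulSingle α.i α.g⁻¹ * Pi.mulSingle β.j β.g⁻¹, π⟩, ?_, ?_⟩
  · ext
    · simp [smul_i, bArc, e0]
    · simp [smul_j, bArc, e1]
    · simp [smul_g, bArc, e0, e1, Pi.mulSingle_apply, ha.symm, hb', h']
  · ext
    · simp [smul_i, bArc, e1, h]
    · simp [smul_j, bArc, e2]
    · simp [smul_g, bArc, e1, e2, Pi.mulSingle_apply, ha.symm, hb', h'.symm]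
end

namespace GBD
variable {k : Type} [CommRing k] {G : Type} [CommGroup G] {n : ℕ} {φ : G → k} {δ : k}
  {A : Type} [Ring A] [Algebra k A] (X : GBD k G n φ δ A) (di : k)

lemma conj_mul (u : Gam G n) (x y : A) :
    (X.w u * x * X.w u⁻¹) * (X.w u * y * X.w u⁻¹) = X.w u * (x * y) * X.w u⁻¹ := by
  have : X.w u⁻¹ * (X.w u * (y * X.w u⁻¹)) = y * X.w u⁻¹ := by rw [← mul_assoc, w_inv_mul, one_mul]
  simp only [mul_assoc, this]

lemma a_idem (hdi : di * δ = 1) (α : Arc n G) : X.a di α * X.a di α = X.a di α := by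
  have h := Arc_lt α
  obtain ⟨u, rfl⟩ := exists_smul_bArc α h
  rw [a_smul, conj_mul, a_bArc, smul_mul_smul_comm, X.e_sq 0 h, smul_smul, mul_assoc di di δ, hdi, mul_one]

lemma w_sg (i : ℕ) (h : i + 1 < n) : X.w (SemidirectProduct.inr (sg n i)) = X.s i := by
  rw [w_inr, P_sg _ _ h]

lemma a_flip (α : Arc n G) : X.a di α.flip = X.a di α := by
  have h := Arc_lt α
  obtain ⟨u, rfl⟩ := exists_smul_bArc α h
  rw [smul_flip, a_smul, a_smul]
  congr 2
  have : (bArc G 0 h).flip = (SemidirectProduct.inr (sg n 0) : Gam G n) • bArc G 0 h := by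
    ext
    · rw [smul_i]; simp only [SemidirectProduct.right_inr, bArc]; rw [sg_left h]; rfl
    · rw [smul_j]; simp only [SemidirectProduct.right_inr, bArc]; rw [sg_right h]; rfl
    · simp [Arc.flip, smul_g, bArc]
  have hinv : (SemidirectProduct.inr (sg n 0) : Gam G n)⁻¹ = SemidirectProduct.inr (sg n 0) := by
    rw [← map_inv]; congr 1; simp [sg, h]
  rw [this, a_smul, a_bArc, hinv, w_sg _ _ h, mul_smul_comm, X.se_absorb 0 h, smul_mul_assoc,
    X.es_absorb 0 h]

lemma a_comm (α β : Arc n G) (h : α.Disj β) : X.a di α * X.a di β = X.a di β * X.a di α := by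
  obtain ⟨h0, h2, u, rfl, rfl⟩ := pair_disj α β h
  rw [a_smul, a_smul, conj_mul, conj_mul, a_bArc, a_bArc, smul_mul_smul_comm, smul_mul_smul_comm,
    X.ee_comm 0 2 (by omega) h2]

lemma absorb_swap (α : Arc n G) : ∃ v : Gam G n, v.right = Equiv.swap α.i α.j ∧
    X.w v * X.a di α = X.a di α := by
  have h := Arc_lt α
  obtain ⟨u, rfl⟩ := exists_smul_bArc α h
  refine ⟨u * SemidirectProduct.inr (sg n 0) * u⁻¹, ?_, ?_⟩
  · rw [smul_i, smul_j, Equiv.swap_apply_apply]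
    simp only [SemidirectProduct.mul_right, SemidirectProduct.right_inr, SemidirectProduct.inv_right, bArc]
    simp [sg, h]
  · rw [a_smul, map_mul, map_mul, conj_mul, w_sg _ _ h, a_bArc, mul_smul_comm, X.se_absorb 0 h]

lemma absorb_label (α : Arc n G) (x : G) :
    X.w (SemidirectProduct.inl (Pi.mulSingle α.i x * Pi.mulSingle α.j x⁻¹)) * X.a di α = X.a di α := by
  have h := Arc_lt α
  obtain ⟨u, hu⟩ := exists_smul_bArc α h
  set v : Gam G n := SemidirectProduct.inl (Pi.mulSingle ⟨0, by omega⟩ x * Pi.mulSingle ⟨1, by omega⟩ x⁻¹) with hv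
  have hi := congrArg Arc.i hu
  have hj := congrArg Arc.j hu
  have key : (SemidirectProduct.inl (Pi.mulSingle α.i x * Pi.mulSingle α.j x⁻¹) : Gam G n) = u * v * u⁻¹ := by
    rw [eq_mul_inv_iff_mul_eq]
    rw [smul_i] at hi
    rw [smul_j] at hj
    rw [← hi, ← hj, hv]
    ext l
    · simp only [SemidirectProduct.mul_left, SemidirectProduct.left_inl, SemidirectProduct.right_inl,
        Pi.mul_apply, permMulAut_apply, map_one, MulAut.one_apply, Pi.mulSingle_apply, bArc]
      simp only [Equiv.Perm.inv_eq_iff_eq]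
      rw [mul_comm]
    · simp
  rw [key, ← hu, a_smul, map_mul, map_mul, conj_mul, a_bArc, hv, w_inl, map_mul, T_single, T_single,
    mul_smul_comm, X.tt_e h]

lemma chain_base (h0 : 0 + 1 < n) (h1 : 1 + 1 < n) :
    X.a di (bArc G 1 h1) * X.a di (bArc G 0 h0) =
      di • (X.w (SemidirectProduct.inr (sg n 0 * sg n 1)) * X.a di (bArc G 0 h0)) := by
  rw [a_bArc, a_bArc, smul_mul_smul_comm, ← X.sse 0 1 h0 h1 (by omega), w_inr, map_mul, P_sg _ _ h0,
    P_sg _ _ h1, mul_smul_comm, smul_smul]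

lemma X_chain (α β : Arc n G) (h : α.j = β.i) (h' : α.i ≠ β.j) :
    ∃ (c : k) (v : Gam G n), X.a di β * X.a di α = c • (X.w v * X.a di α) := by
  obtain ⟨h0, h1, u, rfl, rfl⟩ := pair_chain α β h h'
  refine ⟨di, u * SemidirectProduct.inr (sg n 0 * sg n 1) * u⁻¹, ?_⟩
  have := X.chain_base di h0 h1
  generalize (SemidirectProduct.inr (sg n 0 * sg n 1) : Gam G n) = y at *
  rw [a_smul, a_smul, conj_mul, this, map_mul, map_mul, conj_mul, mul_smul_comm, smul_mul_assoc]

lemma X_same (α β : Arc n G) (h : α.i = β.i) (h' : α.j = β.j) :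
    ∃ (c : k) (v : Gam G n), X.a di β * X.a di α = c • (X.w v * X.a di α) := by
  have hn := Arc_lt α
  obtain ⟨u, hu⟩ := exists_smul_bArc α hn
  obtain ⟨γ, rfl⟩ : ∃ γ, β = u • γ := ⟨u⁻¹ • β, by simp⟩
  rw [← hu] at h h' ⊢
  have hi : γ.i = ⟨0, by omega⟩ := by simpa [smul_i, bArc] using h.symm
  have hj : γ.j = ⟨1, by omega⟩ := by simpa [smul_j, bArc] using h'.symm
  set v : Gam G n := SemidirectProduct.inl (Pi.mulSingle ⟨0, by omega⟩ γ.g⁻¹) with hv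
  have hγ : γ = v • bArc G 0 hn := by
    ext
    · simp [smul_i, hv, bArc, hi]
    · simp [smul_j, hv, bArc, hj]
    · simp [smul_g, hv, bArc]
  refine ⟨di * φ γ.g, u * v * u⁻¹, ?_⟩
  rw [a_smul, a_smul, conj_mul, map_mul, map_mul, conj_mul, ← smul_mul_assoc, ← mul_smul_comm]
  congr 2
  have hvi : X.w v⁻¹ = X.t γ.g ⟨0, by omega⟩ := by
    rw [hv, ← map_inv, w_inl, ← Pi.mulSingle_inv, inv_inv, T_single]
  have e1 : X.a di γ = X.w v * X.a di (bArc G 0 hn) * X.w v⁻¹ := by rw [← a_smul, ← hγ]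
  rw [e1, a_bArc, hvi, mul_assoc, mul_assoc, ← mul_smul_comm]
  congr 1
  rw [mul_smul_comm, smul_mul_assoc, mul_smul_comm, ← mul_assoc, X.loop _ 0 hn, smul_smul, smul_smul, smul_smul]
  congr 1; ring

lemma X_meet (α β : Arc n G) (h : ¬ α.Disj β) :
    ∃ (c : k) (v : Gam G n), X.a di β * X.a di α = c • (X.w v * X.a di α) := by
  unfold Arc.Disj at h
  by_cases h1 : α.i = β.i
  · by_cases h2 : α.j = β.j
    · exact X.X_same di α β h1 h2
    · have := X.X_chain di α.flip β h1 h2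
      simpa [a_flip] using this
  by_cases h2 : α.j = β.j
  · have := X.X_chain di α β.flip h2 h1
    simpa [a_flip] using this
  by_cases h3 : α.i = β.j
  · by_cases h4 : α.j = β.i
    · have := X.X_same di α β.flip h3 h4
      simpa [a_flip] using this
    · have := X.X_chain di α.flip β.flip h3 h4
      simpa [a_flip] using this
  by_cases h4 : α.j = β.i
  · exact X.X_chain di α β h4 h3
  · exact absurd ⟨h1, h3, h4, h2⟩ h

lemma absorb_double (α β : Arc n G) (h : α.Disj β) : ∃ v : Gam G n,
    v.right = Equiv.swap α.i β.i * Equiv.swap α.j β.j ∧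
    X.w v * (X.a di α * X.a di β) = X.a di α * X.a di β := by
  obtain ⟨h0, h2, u, rfl, rfl⟩ := pair_disj α β h
  have h1 : 1 + 1 < n := by omega
  refine ⟨u * SemidirectProduct.inr (Equiv.swap ⟨0, by omega⟩ ⟨2, by omega⟩ *
    Equiv.swap ⟨1, by omega⟩ ⟨3, by omega⟩) * u⁻¹, ?_, ?_⟩
  · rw [smul_i, smul_j, smul_i, smul_j, Equiv.swap_apply_apply, Equiv.swap_apply_apply]
    simp only [SemidirectProduct.mul_right, SemidirectProduct.right_inr, SemidirectProduct.inv_right, bArc]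
    group
  · rw [a_smul, a_smul, conj_mul, map_mul, map_mul, conj_mul]
    congr 2
    rw [a_bArc, a_bArc, w_inr, smul_mul_smul_comm, mul_smul_comm]
    congr 1
    have e1 : (Equiv.swap ⟨0, by omega⟩ ⟨2, by omega⟩ : Equiv.Perm (Fin n)) = sg n 0 * sg n 1 * sg n 0 := by
      simp only [sg, h0, h1, dite_true]
      ext x; simp only [Equiv.Perm.mul_apply, Equiv.swap_apply_def]; grind
    have e2 : (Equiv.swap ⟨1, by omega⟩ ⟨3, by omega⟩ : Equiv.Perm (Fin n)) = sg n 2 * sg n 1 * sg n 2 := by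
      simp only [sg, h2, h1, dite_true]
      ext x; simp only [Equiv.Perm.mul_apply, Equiv.swap_apply_def]; grind
    have ec := X.ee_comm 0 2 (by omega) h2
    have f1 : X.s 0 * X.s 1 * X.s 0 * (X.e 0 * X.e 2) = X.e 1 * (X.e 0 * X.e 2) := by
      rw [mul_assoc, ← mul_assoc (X.s 0) (X.e 0), X.se_absorb 0 h0, ← mul_assoc, X.sse 0 1 h0 h1 (by omega),
        mul_assoc]
    have f2 : X.s 2 * X.s 1 * X.s 2 * (X.e 0 * X.e 2) = X.e 1 * (X.e 0 * X.e 2) := by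
      rw [ec, mul_assoc, ← mul_assoc (X.s 2) (X.e 2), X.se_absorb 2 h2, ← mul_assoc, X.sse 2 1 h2 h1 (by omega),
        mul_assoc]
    have e3 : X.P (Equiv.swap ⟨0, by omega⟩ ⟨2, by omega⟩) = X.s 0 * X.s 1 * X.s 0 := by
      rw [e1, map_mul, map_mul, P_sg _ _ h0, P_sg _ _ h1]
    have e4 : X.P (Equiv.swap ⟨1, by omega⟩ ⟨3, by omega⟩) = X.s 2 * X.s 1 * X.s 2 := by
      rw [e2, map_mul, map_mul, P_sg _ _ h2, P_sg _ _ h1]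
    rw [map_mul, mul_assoc, e4, f2, ← f1, ← e3, ← mul_assoc, ← map_mul, Equiv.swap_mul_self, map_one, one_mul]
end GBD
end GBH
end

section
namespace GBH

lemma Arc.Disj.symm {n : ℕ} {G : Type} {α β : Arc n G} (h : α.Disj β) : β.Disj α :=
  ⟨h.1.symm, h.2.2.1.symm, h.2.1.symm, h.2.2.2.symm⟩

namespace GBD
variable {k : Type} [CommRing k] {G : Type} [CommGroup G] {n : ℕ} {φ : G → k} {δ : k}
  {A : Type} [Ring A] [Algebra k A] (X : GBD k G n φ δ A) (di : k)

/-- Product of the idempotents of a list of arcs. -/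
def EL (L : List (Arc n G)) : A := (L.map (X.a di)).prod

@[simp] lemma EL_nil : X.EL di [] = 1 := rfl
lemma EL_cons (α : Arc n G) (L : List (Arc n G)) : X.EL di (α :: L) = X.a di α * X.EL di L := by
  simp [EL]

lemma EL_comm (α : Arc n G) (L : List (Arc n G)) (h : ∀ β ∈ L, α.Disj β) :
    X.EL di L * X.a di α = X.a di α * X.EL di L := by
  induction L with
  | nil => simp
  | cons β L ih =>
    simp only [List.mem_cons, forall_eq_or_imp] at h
    rw [EL_cons, mul_assoc, ih h.2, ← mul_assoc, ← X.a_comm di α β h.1, mul_assoc]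

lemma a_EL (hdi : di * δ = 1) (L : List (Arc n G)) (hL : L.Pairwise Arc.Disj) (β : Arc n G) (hβ : β ∈ L) :
    X.a di β * X.EL di L = X.EL di L := by
  induction L with
  | nil => simp at hβ
  | cons α L ih =>
    rw [List.pairwise_cons] at hL
    rw [EL_cons]
    rcases List.mem_cons.1 hβ with rfl | h
    · rw [← mul_assoc, X.a_idem di hdi]
    · rw [← mul_assoc, ← X.a_comm di α β (hL.1 β h), mul_assoc, ih hL.2 h]

lemma EL_a (hdi : di * δ = 1) (L : List (Arc n G)) (hL : L.Pairwise Arc.Disj) (β : Arc n G) (hβ : β ∈ L) :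
    X.EL di L * X.a di β = X.EL di L := by
  induction L with
  | nil => simp at hβ
  | cons α L ih =>
    rw [List.pairwise_cons] at hL
    rw [EL_cons]
    rcases List.mem_cons.1 hβ with rfl | h
    · rw [mul_assoc, X.EL_comm di _ _ hL.1, ← mul_assoc, X.a_idem di hdi]
    · rw [mul_assoc, ih hL.2 h]

lemma a_mul_EL (hdi : di * δ = 1) (L : List (Arc n G)) (hL : L.Pairwise Arc.Disj) (β : Arc n G) :
    ∃ (c : k) (v : Gam G n) (L' : List (Arc n G)), L'.Pairwise Arc.Disj ∧ L ⊆ L' ∧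
      X.a di β * X.EL di L = c • (X.w v * X.EL di L') := by
  by_cases h : ∀ α ∈ L, β.Disj α
  · exact ⟨1, 1, β :: L, List.pairwise_cons.2 ⟨h, hL⟩, by simp, by simp [EL_cons]⟩
  · push Not at h
    obtain ⟨α, hα, hd⟩ := h
    obtain ⟨c, v, hc⟩ := X.X_meet di α β (fun h => hd h.symm)
    refine ⟨c, v, L, hL, fun _ h => h, ?_⟩
    rw [← X.a_EL di hdi L hL α hα, ← mul_assoc, hc, smul_mul_assoc, mul_assoc, ]

/-- Standard elements. -/
def std (B : List (Arc n G)) : Set A :=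
  {x | ∃ (u : Gam G n) (L : List (Arc n G)), L.Pairwise Arc.Disj ∧ B ⊆ L ∧ x = X.w u * X.EL di L}

lemma w_mul_span (B : List (Arc n G)) (u : Gam G n) (x : A) (hx : x ∈ Submodule.span k (X.std di B)) :
    X.w u * x ∈ Submodule.span k (X.std di B) := by
  induction hx using Submodule.span_induction with
  | mem x hx =>
    obtain ⟨v, L, h1, h2, rfl⟩ := hx
    exact Submodule.subset_span ⟨u * v, L, h1, h2, by rw [map_mul, mul_assoc]⟩
  | zero => simp
  | add x y _ _ hx hy => rw [mul_add]; exact add_mem hx hy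
  | smul c x _ hx => rw [mul_smul_comm]; exact Submodule.smul_mem _ _ hx

lemma a_mul_span (hdi : di * δ = 1) (B : List (Arc n G)) (α : Arc n G) (x : A) (hx : x ∈ Submodule.span k (X.std di B)) :
    X.a di α * x ∈ Submodule.span k (X.std di B) := by
  induction hx using Submodule.span_induction with
  | mem x hx =>
    obtain ⟨v, L, h1, h2, rfl⟩ := hx
    have : X.a di α * X.w v = X.w v * X.a di (v⁻¹ • α) := by rw [w_a, smul_inv_smul]
    rw [← mul_assoc, this, mul_assoc]
    obtain ⟨c, v', L', h1', h2', h3⟩ := X.a_mul_EL di hdi L h1 (v⁻¹ • α)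
    rw [h3]
    apply X.w_mul_span
    apply Submodule.smul_mem
    exact Submodule.subset_span ⟨v', L', h1', fun _ h => h2' (h2 h), rfl⟩
  | zero => simp
  | add x y _ _ hx hy => rw [mul_add]; exact add_mem hx hy
  | smul c x _ hx => rw [mul_smul_comm]; exact Submodule.smul_mem _ _ hx

lemma mul_span (hdi : di * δ = 1) (B : List (Arc n G)) (a x : A) (hx : x ∈ Submodule.span k (X.std di B)) :
    a * x ∈ Submodule.span k (X.std di B) := by
  have ha : a ∈ Algebra.adjoin k ({x | (∃ i, i + 1 < n ∧ (x = X.s i ∨ x = X.e i)) ∨ ∃ g j, x = X.t g j}) := by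
    rw [X.gen]; trivial
  induction ha using Algebra.adjoin_induction generalizing x with
  | mem y hy =>
    rcases hy with ⟨i, hi, rfl | rfl⟩ | ⟨g, j, rfl⟩
    · rw [← X.w_sg i hi]; exact X.w_mul_span di B _ _ hx
    · have : X.e i = δ • X.a di (bArc G i hi) := by rw [a_bArc, smul_smul, mul_comm, hdi, one_smul]
      rw [this, smul_mul_assoc]
      exact Submodule.smul_mem _ _ (X.a_mul_span di hdi B _ _ hx)
    · rw [← T_single, ← w_inl]; exact X.w_mul_span di B _ _ hx
  | algebraMap r => rw [← Algebra.smul_def]; exact Submodule.smul_mem _ _ hx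
  | add y z _ _ hy hz => rw [add_mul]; exact add_mem (hy _ hx) (hz _ hx)
  | mul y z _ _ hy hz => rw [mul_assoc]; exact hy _ (hz _ hx)

lemma span_top (hdi : di * δ = 1) : Submodule.span k (X.std di []) = ⊤ := by
  rw [eq_top_iff]
  rintro x -
  rw [← mul_one x]
  exact X.mul_span di hdi _ _ _ (Submodule.subset_span ⟨1, [], by simp, by simp, by simp⟩)

lemma mul_a_mem (hdi : di * δ = 1) (x : A) (β : Arc n G) :
    x * X.a di β ∈ Submodule.span k (X.std di [β]) :=
  X.mul_span di hdi _ _ _ (Submodule.subset_span ⟨1, [β], by simp, by simp, by simp [EL_cons]⟩)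
end GBD
end GBH
end

section
namespace GBH

/-- Labelled perfect matchings on a set. -/
structure Dg (V G : Type) where
  τ : V → V
  l : V → G
  inv : ∀ x, τ (τ x) = x
  nf : ∀ x, τ x ≠ x
  hl : ∀ x, l (τ x) = l x

namespace Dg
variable {V G : Type} [DecidableEq V] [CommGroup G]

@[ext] lemma ext' {d e : Dg V G} (h1 : ∀ x, d.τ x = e.τ x) (h2 : ∀ x, d.l x = e.l x) : d = e := by
  cases d; cases e; congr
  · exact funext h1
  · exact funext h2

/-- Relabelling of nodes. -/
def cj (σ : Equiv.Perm V) (d : Dg V G) : Dg V G where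
  τ x := σ (d.τ (σ.symm x))
  l x := d.l (σ.symm x)
  inv x := by simp [d.inv]
  nf x h := d.nf (σ.symm x) (by rw [Equiv.eq_symm_apply]; exact h)
  hl x := by simp [d.hl]

/-- Multiplication of labels. -/
def lab (f : V → G) (d : Dg V G) : Dg V G where
  τ := d.τ
  l x := f x * f (d.τ x) * d.l x
  inv := d.inv
  nf := d.nf
  hl x := by rw [d.inv, d.hl, mul_comm (f x)]

/-- Multiplication by a cup-cap. -/
def kp (a b : V) (hab : a ≠ b) (d : Dg V G) : Dg V G where
  τ x := if x = a then b else if x = b then a else if x = d.τ a then d.τ b else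
    if x = d.τ b then d.τ a else d.τ x
  l x := if x = a then 1 else if x = b then 1 else if x = d.τ a then d.l a * d.l b else
    if x = d.τ b then d.l a * d.l b else d.l x
  inv x := by have := d.inv; have := d.nf; grind
  nf x := by have := d.inv; have := d.nf; grind
  hl x := by have := d.inv; have := d.nf; have := d.hl; grind

variable {k : Type} [CommRing k] (φ : G → k)
/-- The scalar of a closed loop. -/
def ch (a b : V) (d : Dg V G) : k := if d.τ a = b then φ (d.l a) else 1

lemma kp_cj (σ : Equiv.Perm V) (a b : V) (h : a ≠ b) (h' : σ a ≠ σ b) (d : Dg V G) :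
    kp (σ a) (σ b) h' (cj σ d) = cj σ (kp a b h d) := by
  have e (x y) : x = σ y ↔ σ.symm x = y := by rw [Equiv.symm_apply_eq]
  ext x
  · simp only [kp, cj, Equiv.symm_apply_apply, e]; split_ifs <;> simp
  · simp only [kp, cj, Equiv.symm_apply_apply, e]

lemma ch_cj (σ : Equiv.Perm V) (a b : V) (d : Dg V G) : ch φ (σ a) (σ b) (cj σ d) = ch φ a b d := by
  simp [ch, cj]

lemma kp_sym (a b : V) (h : a ≠ b) (d : Dg V G) : kp a b h d = kp b a h.symm d := by
  have h1 := d.inv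
  ext x
  · simp only [kp]; grind
  · simp only [kp, mul_comm]; grind

lemma ch_sym (a b : V) (d : Dg V G) : ch φ a b d = ch φ b a d := by
  have h1 := d.inv
  have h2 := d.hl
  simp only [ch]; grind

lemma kp_swap (a b : V) (h : a ≠ b) (d : Dg V G) : cj (Equiv.swap a b) (kp a b h d) = kp a b h d := by
  have h1 := d.inv
  have h2 := d.nf
  ext x
  · simp only [kp, cj, Equiv.symm_swap, Equiv.swap_apply_def]; grind
  · simp only [kp, cj, Equiv.symm_swap, Equiv.swap_apply_def]; grind

lemma kp_kp (a b c : V) (h : a ≠ b) (h' : b ≠ c) (hac : a ≠ c) (d : Dg V G) :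
    kp b c h' (kp a b h d) = cj (Equiv.swap a c) (kp a b h d) := by
  obtain ⟨d', hd⟩ : ∃ d', d' = kp a b h d := ⟨_, rfl⟩
  have e1 : d'.τ a = b := by simp [hd, kp]
  have e2 : d'.τ b = a := by simp [hd, kp, h.symm]
  have e3 : d'.l a = 1 := by simp [hd, kp]
  have e4 : d'.l b = 1 := by simp [hd, kp, h.symm]
  rw [← hd]; clear hd
  have h1 := d'.inv
  have h2 := d'.nf
  have h3 := d'.hl
  ext x
  · simp only [kp, cj, Equiv.symm_swap, Equiv.swap_apply_def]; grind
  · simp only [kp, cj, Equiv.symm_swap, Equiv.swap_apply_def, e4, one_mul]; grind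

lemma ch_kp (a b c : V) (h : a ≠ b) (hac : a ≠ c) (d : Dg V G) :
    ch φ b c (kp a b h d) = 1 := by
  simp [ch, kp, h.symm, hac]

lemma kp_comm (a b c e : V) (h : a ≠ b) (h' : c ≠ e) (h1 : a ≠ c) (h2 : a ≠ e) (h3 : b ≠ c) (h4 : b ≠ e)
    (d : Dg V G) : kp a b h (kp c e h' d) = kp c e h' (kp a b h d) := by
  have i1 := d.inv
  have i2 := d.nf
  have i3 := d.hl
  ext x
  · simp only [kp]; grind (splits := 40)
  · simp only [kp]; grind (splits := 40)

lemma ch_comm (a b c e : V) (h : a ≠ b) (h' : c ≠ e) (h1 : a ≠ c) (h2 : a ≠ e) (h3 : b ≠ c) (h4 : b ≠ e)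
    (d : Dg V G) : ch φ a b (kp c e h' d) * ch φ c e d = ch φ c e (kp a b h d) * ch φ a b d := by
  have i1 := d.inv
  have i2 := d.nf
  have i3 := d.hl
  simp only [kp, ch]; grind

lemma kp_lab (a b c : V) (h : a ≠ b) (h1 : c ≠ a) (h2 : c ≠ b) (g : G) (d : Dg V G) :
    kp a b h (lab (Pi.mulSingle c g) d) = lab (Pi.mulSingle c g) (kp a b h d) := by
  have i1 := d.inv
  have i2 := d.nf
  have i3 := d.hl
  ext x
  · rfl
  · simp only [kp, lab, Pi.mulSingle_apply]; grind

lemma ch_lab (a b c : V) (h : a ≠ b) (h1 : c ≠ a) (h2 : c ≠ b) (g : G) (d : Dg V G) :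
    ch φ a b (lab (Pi.mulSingle c g) d) = ch φ a b d := by
  simp only [ch, lab, Pi.mulSingle_apply]; split_ifs <;> simp_all

lemma slide_l (a b : V) (h : a ≠ b) (g : G) (d : Dg V G) :
    lab (Pi.mulSingle a g) (kp a b h d) = lab (Pi.mulSingle b g) (kp a b h d) := by
  have i1 := d.inv
  have i2 := d.nf
  have i3 := d.hl
  ext x
  · rfl
  · simp only [kp, lab, Pi.mulSingle_apply]; grind

lemma slide_r (a b : V) (h : a ≠ b) (g : G) (d : Dg V G) :
    kp a b h (lab (Pi.mulSingle a g) d) = kp a b h (lab (Pi.mulSingle b g) d) := by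
  have i1 := d.inv
  have i2 := d.nf
  have i3 := d.hl
  ext x
  · rfl
  · simp only [kp, lab, Pi.mulSingle_apply]; grind

lemma ch_slide (a b : V) (h : a ≠ b) (g : G) (d : Dg V G) :
    ch φ a b (lab (Pi.mulSingle a g) d) = ch φ a b (lab (Pi.mulSingle b g) d) := by
  have i2 := d.nf
  simp only [ch, lab, Pi.mulSingle_apply]; grind

lemma loop (a b : V) (h : a ≠ b) (g : G) (d : Dg V G) :
    kp a b h (lab (Pi.mulSingle a g) (kp a b h d)) = kp a b h d := by
  have i1 := d.inv
  have i2 := d.nf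
  have i3 := d.hl
  ext x
  · simp only [kp, lab]; grind
  · simp only [kp, lab, Pi.mulSingle_apply]; grind

lemma ch_loop (a b : V) (h : a ≠ b) (g : G) (d : Dg V G) :
    ch φ a b (lab (Pi.mulSingle a g) (kp a b h d)) = φ g := by
  simp [ch, lab, kp, h.symm, Pi.mulSingle_apply]
end Dg
end GBH
end

section
namespace GBH
namespace Dg
variable {V G : Type} [DecidableEq V] [CommGroup G]

lemma cj_cj (σ σ' : Equiv.Perm V) (d : Dg V G) : cj σ (cj σ' d) = cj (σ * σ') d := by
  ext x <;> rfl
lemma cj_one (d : Dg V G) : cj 1 d = d := by ext x <;> rfl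
lemma lab_one (d : Dg V G) : lab 1 d = d := by ext x <;> simp [lab]
lemma lab_lab (f f' : V → G) (d : Dg V G) : lab f (lab f' d) = lab (f * f') d := by
  ext x
  · rfl
  · simp only [lab, Pi.mul_apply]; ac_rfl
lemma cj_lab (σ : Equiv.Perm V) (f : V → G) (d : Dg V G) :
    cj σ (lab f d) = lab (f ∘ σ.symm) (cj σ d) := by
  ext x
  · rfl
  · simp [lab, cj]

variable (k : Type) [CommRing k] (φ : G → k)

/-- The operator of a relabelling. -/
def C (σ : Equiv.Perm V) : Module.End k (Dg V G →₀ k) := Finsupp.lmapDomain k k (cj σ)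
/-- The operator of a label. -/
def Lb (f : V → G) : Module.End k (Dg V G →₀ k) := Finsupp.lmapDomain k k (lab f)
/-- The operator of a cup-cap. -/
def K (a b : V) : Module.End k (Dg V G →₀ k) :=
  if h : a ≠ b then Finsupp.linearCombination k (fun d => Finsupp.single (kp a b h d) (ch φ a b d))
  else 0

variable {k}
lemma op_ext {D : Type} {M : Type} [AddCommGroup M] [Module k M] {F F' : (D →₀ k) →ₗ[k] M}
    (h : ∀ d, F (Finsupp.single d 1) = F' (Finsupp.single d 1)) : F = F' := by
  refine Finsupp.lhom_ext' fun d => ?_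
  ext
  exact h d

@[simp] lemma C_single (σ : Equiv.Perm V) (d : Dg V G) (r : k) :
    C k σ (Finsupp.single d r) = Finsupp.single (cj σ d) r := by simp [C]
@[simp] lemma Lb_single (f : V → G) (d : Dg V G) (r : k) :
    Lb k f (Finsupp.single d r) = Finsupp.single (lab f d) r := by simp [Lb]
lemma K_single (a b : V) (h : a ≠ b) (d : Dg V G) (r : k) :
    K k φ a b (Finsupp.single d r) = Finsupp.single (kp a b h d) (r * ch φ a b d) := by
  simp [K, h, Finsupp.linearCombination_single]

lemma C_mul (σ σ' : Equiv.Perm V) : C (G := G) k σ * C k σ' = C k (σ * σ') :=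
  op_ext fun d => by simp [cj_cj]
lemma C_one : C (V := V) (G := G) k 1 = 1 := op_ext fun d => by simp [cj_one]
lemma Lb_mul (f f' : V → G) : Lb k f * Lb k f' = Lb k (f * f') :=
  op_ext fun d => by simp [lab_lab]
lemma Lb_one : Lb k (1 : V → G) = 1 := op_ext fun d => by simp [lab_one]
lemma C_Lb (σ : Equiv.Perm V) (f : V → G) : C k σ * Lb k f = Lb k (f ∘ σ.symm) * C k σ :=
  op_ext fun d => by simp [cj_lab]

lemma C_K (σ : Equiv.Perm V) (a b : V) (h : a ≠ b) :
    C k σ * K k φ a b = K k φ (σ a) (σ b) * C k σ := by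
  have h' : σ a ≠ σ b := fun e => h (σ.injective e)
  refine op_ext fun d => ?_
  simp [K_single φ a b h, K_single φ _ _ h', kp_cj σ a b h h', ch_cj]

lemma K_sym (a b : V) (h : a ≠ b) : K k φ a b = K k φ b a := by
  refine op_ext fun d => ?_
  rw [K_single φ a b h, K_single φ b a h.symm, kp_sym, ch_sym]

lemma C_swap_K (a b : V) (h : a ≠ b) : C k (Equiv.swap a b) * K k φ a b = K k φ a b :=
  op_ext fun d => by simp [K_single φ a b h, kp_swap]

lemma K_C_swap (a b : V) (h : a ≠ b) : K k φ a b * C k (Equiv.swap a b) = K k φ a b := by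
  have := C_K (k := k) φ (Equiv.swap a b) a b h
  rw [Equiv.swap_apply_left, Equiv.swap_apply_right, C_swap_K φ a b h, ← K_sym φ a b h] at this
  exact this.symm

lemma KK (a b c : V) (h : a ≠ b) (h' : b ≠ c) (hac : a ≠ c) :
    K k φ b c * K k φ a b = C k (Equiv.swap a c) * K k φ a b :=
  op_ext fun d => by simp [K_single φ a b h, K_single φ b c h', kp_kp a b c h h' hac, ch_kp φ a b c h hac]

lemma swap_sq (a b : V) : C (G := G) k (Equiv.swap a b) * C k (Equiv.swap a b) = 1 := by
  rw [C_mul, Equiv.swap_mul_self, C_one]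

lemma hook (a b c : V) (h : a ≠ b) (h' : b ≠ c) (hac : a ≠ c) :
    K k φ a b * K k φ b c * K k φ a b = K k φ a b := by
  have e := C_K (k := k) φ (Equiv.swap a c) c b h'.symm
  rw [Equiv.swap_apply_right, Equiv.swap_apply_of_ne_of_ne h.symm h'] at e
  rw [mul_assoc, KK φ a b c h h' hac, ← mul_assoc, ← e, mul_assoc, K_sym φ c b h'.symm,
    KK φ a b c h h' hac, ← mul_assoc, swap_sq, one_mul]

lemma ese (a b c : V) (h : a ≠ b) (h' : b ≠ c) (hac : a ≠ c) :
    K k φ a b * C k (Equiv.swap b c) * K k φ a b = K k φ a b := by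
  have e := C_K (k := k) φ (Equiv.swap b c) a c hac
  rw [Equiv.swap_apply_right, Equiv.swap_apply_of_ne_of_ne h hac] at e
  rw [← e, K_sym φ a b h, mul_assoc, KK φ b a c h.symm hac h', ← mul_assoc, swap_sq, one_mul]

lemma sse (a b c : V) (h : a ≠ b) (h' : b ≠ c) (hac : a ≠ c) :
    C k (Equiv.swap a b) * C k (Equiv.swap b c) * K k φ a b = K k φ b c * K k φ a b := by
  have e : Equiv.swap a b * Equiv.swap b c = Equiv.swap a c * Equiv.swap a b := by
    ext x; simp only [Equiv.Perm.mul_apply, Equiv.swap_apply_def]; grind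
  rw [KK φ a b c h h' hac, C_mul, e, ← C_mul, mul_assoc, C_swap_K φ a b h]

lemma ess (a b c : V) (h : a ≠ b) (h' : b ≠ c) (hac : a ≠ c) :
    K k φ a b * C k (Equiv.swap b c) * C k (Equiv.swap a b) = K k φ a b * K k φ b c := by
  have e : Equiv.swap b c * Equiv.swap a b = Equiv.swap c a * Equiv.swap b c := by
    ext x; simp only [Equiv.Perm.mul_apply, Equiv.swap_apply_def]; grind
  have e2 := C_K (k := k) φ (Equiv.swap c a * Equiv.swap b c) b c h'
  have e3 : (Equiv.swap c a * Equiv.swap b c) b = a := by simp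
  have e4 : (Equiv.swap c a * Equiv.swap b c) c = b := by
    simp [Equiv.swap_apply_of_ne_of_ne h' h.symm]
  rw [e3, e4] at e2
  rw [K_sym φ b c h', K_sym φ a b h, KK φ c b a h'.symm h.symm hac.symm, mul_assoc, C_mul, e,
    K_sym φ b a h.symm, ← e2, ← C_mul, mul_assoc, C_swap_K φ b c h', K_sym φ b c h']

lemma K_comm (a b c e : V) (h : a ≠ b) (h' : c ≠ e) (h1 : a ≠ c) (h2 : a ≠ e) (h3 : b ≠ c) (h4 : b ≠ e) :
    K k φ a b * K k φ c e = K k φ c e * K k φ a b := by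
  refine op_ext fun d => ?_
  have := ch_comm φ a b c e h h' h1 h2 h3 h4 d
  simp only [Module.End.mul_apply, K_single φ a b h, K_single φ c e h', one_mul,
    kp_comm a b c e h h' h1 h2 h3 h4]
  rw [mul_comm, this, mul_comm]

lemma K_Lb (a b c : V) (h : a ≠ b) (h1 : c ≠ a) (h2 : c ≠ b) (g : G) :
    K k φ a b * Lb k (Pi.mulSingle c g) = Lb k (Pi.mulSingle c g) * K k φ a b := by
  refine op_ext fun d => ?_
  simp [K_single φ a b h, kp_lab a b c h h1 h2, ch_lab φ a b c h h1 h2]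

lemma Lb_slide (a b : V) (h : a ≠ b) (g : G) :
    Lb k (Pi.mulSingle a g) * K k φ a b = Lb k (Pi.mulSingle b g) * K k φ a b := by
  refine op_ext fun d => ?_
  simp [K_single φ a b h, slide_l a b h]

lemma Lb_slide' (a b : V) (h : a ≠ b) (g : G) :
    K k φ a b * Lb k (Pi.mulSingle a g) = K k φ a b * Lb k (Pi.mulSingle b g) := by
  refine op_ext fun d => ?_
  simp [K_single φ a b h, slide_r a b h, ch_slide φ a b h]

lemma K_loop (a b : V) (h : a ≠ b) (g : G) :
    K k φ a b * Lb k (Pi.mulSingle a g) * K k φ a b = φ g • K k φ a b := by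
  refine op_ext fun d => ?_
  simp [K_single φ a b h, loop a b h, ch_loop φ a b h, mul_comm]

end Dg
end GBH
end

section
namespace GBH
section
variable (k G : Type) [CommRing k] [CommGroup G] (ρ : G →* RingAut k) (n : ℕ) (δ : k)

/-- The lower node of a generator. -/
abbrev nd0 {n : ℕ} (i : Fin (n-1)) : Fin n := ⟨i, by have := i.2; omega⟩
/-- The upper node of a generator. -/
abbrev nd1 {n : ℕ} (i : Fin (n-1)) : Fin n := ⟨i+1, by have := i.2; omega⟩

lemma nd_ne {n : ℕ} (i : Fin (n-1)) : nd0 i ≠ nd1 i := by simp [nd0, nd1]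

/-- The quotient map. -/
def mkq : FreeAlgebra k (GBGen n G) →ₐ[k] GBAlg k G ρ n δ := RingQuot.mkAlgHom k _

variable {k G ρ n δ}
lemma mkq_rel {x y : FreeAlgebra k (GBGen n G)} (h : GBRel k G ρ n δ x y) :
    mkq k G ρ n δ x = mkq k G ρ n δ y := RingQuot.mkAlgHom_rel k h
lemma mkq_surj : Function.Surjective (mkq k G ρ n δ) := RingQuot.mkAlgHom_surjective k _

variable (k G ρ n δ)
/-- The Brauer algebra satisfies its relations. -/
def XG : GBD k G n (fun g => ρ g δ) δ (GBAlg k G ρ n δ) where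
  s i := if h : i < n - 1 then mkq k G ρ n δ (GBs k G n ⟨i, h⟩) else 1
  e i := if h : i < n - 1 then mkq k G ρ n δ (GBe k G n ⟨i, h⟩) else 0
  t g j := mkq k G ρ n δ (GBt k G n g j)
  cox := by
    constructor
    · intro i hi
      simp only [hi, dif_pos]
      simpa using mkq_rel (GBRel.s_sq (k := k) (G := G) (ρ := ρ) (δ := δ) (⟨i, hi⟩ : Fin (n-1)))
    · intro i hi
      have h1 : i < n - 1 := by omega
      simp only [hi, h1, dif_pos]
      simpa using mkq_rel (GBRel.s_braid (k := k) (G := G) (ρ := ρ) (δ := δ) (⟨i, h1⟩ : Fin (n-1)) ⟨i+1, hi⟩ rfl)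
    · intro i j hij hj
      have h1 : i < n - 1 := by omega
      simp only [hj, h1, dif_pos]
      simpa using mkq_rel (GBRel.ss_comm (k := k) (G := G) (ρ := ρ) (δ := δ) (⟨i, h1⟩ : Fin (n-1)) ⟨j, hj⟩ hij)
  e_sq i hi := by
    have h1 : i < n - 1 := by omega
    simp only [h1, dif_pos]
    simpa using mkq_rel (GBRel.e_sq (k := k) (G := G) (ρ := ρ) (δ := δ) (⟨i, h1⟩ : Fin (n-1)))
  ee_comm i j hij hj := by
    have h1 : i < n - 1 := by omega
    have h2 : j < n - 1 := by omega
    simp only [h1, h2, dif_pos]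
    simpa using mkq_rel (GBRel.ee_comm (k := k) (G := G) (ρ := ρ) (δ := δ) (⟨i, h1⟩ : Fin (n-1)) ⟨j, h2⟩ hij)
  se_absorb i hi := by
    have h1 : i < n - 1 := by omega
    simp only [h1, dif_pos]
    simpa using mkq_rel (GBRel.se_absorb (k := k) (G := G) (ρ := ρ) (δ := δ) (⟨i, h1⟩ : Fin (n-1)))
  es_absorb i hi := by
    have h1 : i < n - 1 := by omega
    simp only [h1, dif_pos]
    simpa using mkq_rel (GBRel.es_absorb (k := k) (G := G) (ρ := ρ) (δ := δ) (⟨i, h1⟩ : Fin (n-1)))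
  se_comm i j hi hj hij := by
    have h1 : i < n - 1 := by omega
    have h2 : j < n - 1 := by omega
    simp only [h1, h2, dif_pos]
    simpa using mkq_rel (GBRel.se_comm (k := k) (G := G) (ρ := ρ) (δ := δ) (⟨i, h1⟩ : Fin (n-1)) ⟨j, h2⟩ hij)
  sse i j hi hj hij := by
    have h1 : i < n - 1 := by omega
    have h2 : j < n - 1 := by omega
    simp only [h1, h2, dif_pos]
    simpa using mkq_rel (GBRel.sse (k := k) (G := G) (ρ := ρ) (δ := δ) (⟨i, h1⟩ : Fin (n-1)) ⟨j, h2⟩ hij)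
  ess i j hi hj hij := by
    have h1 : i < n - 1 := by omega
    have h2 : j < n - 1 := by omega
    simp only [h1, h2, dif_pos]
    simpa using mkq_rel (GBRel.ess (k := k) (G := G) (ρ := ρ) (δ := δ) (⟨i, h1⟩ : Fin (n-1)) ⟨j, h2⟩ hij)
  t_mul g h j := by simpa using mkq_rel (GBRel.t_mul (k := k) (G := G) (ρ := ρ) (δ := δ) g h j)
  t_one j := by simpa using mkq_rel (GBRel.t_one (k := k) (G := G) (ρ := ρ) (δ := δ) j)
  tt_comm g h j l hjl := by
    simpa using mkq_rel (GBRel.tt_comm (k := k) (G := G) (ρ := ρ) (δ := δ) g h j l hjl)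
  st g i l hi := by
    have h1 : i < n - 1 := by omega
    simp only [h1, dif_pos]
    by_cases c1 : (l : ℕ) = i
    · have : l = ⟨i, by omega⟩ := Fin.ext c1
      rw [this, sg_left hi]
      simpa using mkq_rel (GBRel.st_slide (k := k) (G := G) (ρ := ρ) (δ := δ) g (⟨i, h1⟩ : Fin (n-1)) ⟨i, by omega⟩
        ⟨i+1, hi⟩ rfl rfl)
    · by_cases c2 : (l : ℕ) = i + 1
      · have : l = ⟨i+1, by omega⟩ := Fin.ext c2
        rw [this, sg_right hi]
        simpa using mkq_rel (GBRel.st_slide' (k := k) (G := G) (ρ := ρ) (δ := δ) g (⟨i, h1⟩ : Fin (n-1)) ⟨i, by omega⟩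
          ⟨i+1, hi⟩ rfl rfl)
      · rw [sg_other l c1 c2]
        simpa using mkq_rel (GBRel.st_comm (k := k) (G := G) (ρ := ρ) (δ := δ) g (⟨i, h1⟩ : Fin (n-1)) l ⟨c1, c2⟩)
  et_comm g i l hi c1 c2 := by
    have h1 : i < n - 1 := by omega
    simp only [h1, dif_pos]
    simpa using mkq_rel (GBRel.et_comm (k := k) (G := G) (ρ := ρ) (δ := δ) g (⟨i, h1⟩ : Fin (n-1)) l ⟨c1, c2⟩)
  slide_l g i h := by
    have h1 : i < n - 1 := by omega
    simp only [h1, dif_pos]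
    simpa using mkq_rel (GBRel.cap_slide_l (k := k) (G := G) (ρ := ρ) (δ := δ) g (⟨i, h1⟩ : Fin (n-1)) ⟨i, by omega⟩
        ⟨i+1, h⟩ rfl rfl)
  slide_r g i h := by
    have h1 : i < n - 1 := by omega
    simp only [h1, dif_pos]
    simpa using mkq_rel (GBRel.cap_slide_r (k := k) (G := G) (ρ := ρ) (δ := δ) g (⟨i, h1⟩ : Fin (n-1)) ⟨i, by omega⟩
        ⟨i+1, h⟩ rfl rfl)
  loop g i h := by
    have h1 : i < n - 1 := by omega
    simp only [h1, dif_pos]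
    simpa using mkq_rel (GBRel.loop (k := k) (G := G) (ρ := ρ) (δ := δ) g (⟨i, h1⟩ : Fin (n-1)) ⟨i, by omega⟩ rfl)
  gen := by
    rw [eq_top_iff, ← (AlgHom.range_eq_top (mkq k G ρ n δ)).2 mkq_surj, ← Algebra.map_top,
      ← FreeAlgebra.adjoin_range_ι, AlgHom.map_adjoin]
    refine Algebra.adjoin_mono ?_
    rintro _ ⟨_, ⟨x, rfl⟩, rfl⟩
    cases x with
    | s i =>
      refine Or.inl ⟨i, by have := i.2; omega, Or.inl ?_⟩
      simp
    | e i =>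
      refine Or.inl ⟨i, by have := i.2; omega, Or.inr ?_⟩
      simp
    | t g j => exact Or.inr ⟨g, j, rfl⟩

lemma XG_s (i : ℕ) (h : i < n - 1) : (XG k G ρ n δ).s i = mkq k G ρ n δ (GBs k G n ⟨i, h⟩) := dif_pos h
lemma XG_e (i : ℕ) (h : i < n - 1) : (XG k G ρ n δ).e i = mkq k G ρ n δ (GBe k G n ⟨i, h⟩) := dif_pos h
lemma XG_t (g : G) (j : Fin n) : (XG k G ρ n δ).t g j = mkq k G ρ n δ (GBt k G n g j) := rfl

end
end GBH
end

section
namespace GBH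
open Dg
section
variable (k G : Type) [CommRing k] [CommGroup G] (ρ : G →* RingAut k) (n : ℕ) (δ : k)

/-- Brauer diagrams. -/
abbrev DD (n : ℕ) (G : Type) := Dg (Fin n ⊕ Fin n) G

/-- The operators of the generators. -/
def θ0 (φ : G → k) : GBGen n G → Module.End k (DD n G →₀ k)
  | .s i => C k (Equiv.swap (Sum.inl (nd0 i)) (Sum.inl (nd1 i)))
  | .e i => K k φ (Sum.inl (nd0 i)) (Sum.inl (nd1 i))
  | .t g j => Lb k (Pi.mulSingle (Sum.inl j) g)

lemma inl_ne {n : ℕ} {a b : Fin n} (h : (a:ℕ) ≠ b) : (Sum.inl a : Fin n ⊕ Fin n) ≠ Sum.inl b := by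
  intro h'; exact h (congrArg Fin.val (Sum.inl_injective h'))

lemma C_Lb_single {V : Type} [DecidableEq V] (σ : Equiv.Perm V) (c : V) (g : G) :
    C k σ * Lb k (Pi.mulSingle c g) = Lb k (Pi.mulSingle (σ c) g) * C k σ := by
  rw [C_Lb]
  congr 2
  funext x
  simp only [Function.comp, Pi.mulSingle_apply, Equiv.symm_apply_eq]

lemma θ_rel (x y : FreeAlgebra k (GBGen n G)) (h : GBRel k G ρ n δ x y) :
    FreeAlgebra.lift k (θ0 k G n (fun g => ρ g δ)) x = FreeAlgebra.lift k (θ0 k G n (fun g => ρ g δ)) y := by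
  have N0 : ∀ i : Fin (n-1), (Sum.inl (nd0 i) : Fin n ⊕ Fin n) ≠ Sum.inl (nd1 i) :=
    fun i => inl_ne (by simp)
  have E : ∀ i j : Fin (n-1), (j:ℕ) = i + 1 → nd0 j = nd1 i := fun i j h => Fin.ext h
  have N1 : ∀ i j : Fin (n-1), (j:ℕ) = i + 1 → (Sum.inl (nd0 i) : Fin n ⊕ Fin n) ≠ Sum.inl (nd1 j) :=
    fun i j h => inl_ne (by simp; omega)
  cases h <;> simp only [map_mul, map_one, map_smul, FreeAlgebra.lift_ι_apply, θ0]
  case s_sq i => exact swap_sq _ _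
  case s_braid i j h =>
    rw [E i j h, C_mul, C_mul, C_mul, C_mul, sw_braid _ _ _ (N0 i) (N1 i j h) (E i j h ▸ N0 j)]
  case ss_comm i j h =>
    rw [C_mul, C_mul, sw_comm]
    all_goals exact inl_ne (by simp; omega)
  case e_sq i =>
    have := K_loop (k := k) (fun g => ρ g δ) _ _ (N0 i) 1
    simpa [Lb_one] using this
  case e_hook i j h =>
    rcases h with h | h
    · rw [E i j h]
      exact hook _ _ _ _ (N0 i) (E i j h ▸ N0 j) (N1 i j h)
    · rw [K_sym _ _ _ (N0 i), K_sym _ _ _ (N0 j), ← E j i h]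
      exact hook _ _ _ _ (N0 i).symm (E j i h ▸ (N0 j).symm) (N1 j i h).symm
  case ee_comm i j h =>
    refine K_comm _ _ _ _ _ (N0 i) (N0 j) ?_ ?_ ?_ ?_
    all_goals exact inl_ne (by simp; omega)
  case se_absorb i => exact C_swap_K _ _ _ (N0 i)
  case es_absorb i => exact K_C_swap _ _ _ (N0 i)
  case se_comm i j h =>
    rw [C_K _ _ _ _ (N0 j), Equiv.swap_apply_of_ne_of_ne, Equiv.swap_apply_of_ne_of_ne]
    all_goals exact inl_ne (by simp; omega)
  case ese i j h =>
    rcases h with h | h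
    · rw [E i j h]
      exact ese _ _ _ _ (N0 i) (E i j h ▸ N0 j) (N1 i j h)
    · rw [K_sym _ _ _ (N0 i), Equiv.swap_comm, ← E j i h]
      exact ese _ _ _ _ (N0 i).symm (E j i h ▸ (N0 j).symm) (N1 j i h).symm
  case sse i j h =>
    rcases h with h | h
    · rw [E i j h]
      exact sse _ _ _ _ (N0 i) (E i j h ▸ N0 j) (N1 i j h)
    · rw [K_sym _ _ _ (N0 i), Equiv.swap_comm, Equiv.swap_comm (Sum.inl (nd0 j)), K_sym _ _ _ (N0 j), ← E j i h]
      exact sse _ _ _ _ (N0 i).symm (E j i h ▸ (N0 j).symm) (N1 j i h).symm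
  case ess i j h =>
    rcases h with h | h
    · rw [E i j h]
      exact ess _ _ _ _ (N0 i) (E i j h ▸ N0 j) (N1 i j h)
    · rw [K_sym _ _ _ (N0 i), Equiv.swap_comm, Equiv.swap_comm (Sum.inl (nd0 i)), K_sym _ _ _ (N0 j), ← E j i h]
      exact ess _ _ _ _ (N0 i).symm (E j i h ▸ (N0 j).symm) (N1 j i h).symm
  case t_mul g h j => rw [Lb_mul, Pi.mulSingle_mul]
  case t_one j => rw [Pi.mulSingle_one, Lb_one]
  case tt_comm g h j l hh => rw [Lb_mul, Lb_mul, mul_comm]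
  case st_comm g i l h =>
    rw [C_Lb_single, Equiv.swap_apply_of_ne_of_ne]
    all_goals exact inl_ne (by simp; omega)
  case st_slide g i j j' h h' =>
    obtain rfl : j = nd0 i := Fin.ext h
    obtain rfl : j' = nd1 i := Fin.ext h'
    rw [C_Lb_single, Equiv.swap_apply_left]
  case st_slide' g i j j' h h' =>
    obtain rfl : j = nd0 i := Fin.ext h
    obtain rfl : j' = nd1 i := Fin.ext h'
    rw [C_Lb_single, Equiv.swap_apply_right]
  case et_comm g i l h =>
    exact K_Lb _ _ _ _ (N0 i) (inl_ne (by simp; omega)) (inl_ne (by simp; omega)) g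
  case cap_slide_l g i j j' h h' =>
    obtain rfl : j = nd0 i := Fin.ext h
    obtain rfl : j' = nd1 i := Fin.ext h'
    exact Lb_slide _ _ _ (N0 i) g
  case cap_slide_r g i j j' h h' =>
    obtain rfl : j = nd0 i := Fin.ext h
    obtain rfl : j' = nd1 i := Fin.ext h'
    exact Lb_slide' _ _ _ (N0 i) g
  case loop g i j h =>
    obtain rfl : j = nd0 i := Fin.ext h
    exact K_loop _ _ _ (N0 i) g

/-- The representation on diagrams. -/
def θ : GBAlg k G ρ n δ →ₐ[k] Module.End k (DD n G →₀ k) :=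
  RingQuot.liftAlgHom k ⟨FreeAlgebra.lift k (θ0 k G n (fun g => ρ g δ)), θ_rel k G ρ n δ⟩

lemma θ_mkq (x : FreeAlgebra k (GBGen n G)) :
    θ k G ρ n δ (mkq k G ρ n δ x) = FreeAlgebra.lift k (θ0 k G n (fun g => ρ g δ)) x :=
  RingQuot.liftAlgHom_mkAlgHom_apply ..

lemma θ_s (i : ℕ) (h : i + 1 < n) : θ k G ρ n δ ((XG k G ρ n δ).s i) =
    C k (Equiv.swap (Sum.inl ⟨i, by omega⟩) (Sum.inl ⟨i+1, h⟩)) := by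
  rw [XG_s _ _ _ _ _ _ (by omega), θ_mkq, FreeAlgebra.lift_ι_apply]; rfl
lemma θ_e (i : ℕ) (h : i + 1 < n) : θ k G ρ n δ ((XG k G ρ n δ).e i) =
    K k (fun g => ρ g δ) (Sum.inl ⟨i, by omega⟩) (Sum.inl ⟨i+1, h⟩) := by
  rw [XG_e _ _ _ _ _ _ (by omega), θ_mkq, FreeAlgebra.lift_ι_apply]; rfl
lemma θ_t (g : G) (j : Fin n) : θ k G ρ n δ ((XG k G ρ n δ).t g j) =
    Lb k (Pi.mulSingle (Sum.inl j) g) := by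
  rw [XG_t, θ_mkq, FreeAlgebra.lift_ι_apply]; rfl

end
end GBH
end

section
namespace GBH
open Dg
section
variable {G : Type} [CommGroup G] {n : ℕ}

instance : MulAction (Gam G n) (DD n G) where
  smul u d := lab (Sum.elim u.left 1) (cj (Equiv.Perm.sumCongr u.right 1) d)
  one_smul d := by
    change lab (Sum.elim (1 : Fin n → G) 1) (cj (Equiv.Perm.sumCongr 1 1) d) = d
    rw [Sum.elim_one_one, Equiv.Perm.sumCongr_one, cj_one, lab_one]
  mul_smul u v d := by
    change lab (Sum.elim (u.left * permMulAut G n u.right v.left) 1) (cj (Equiv.Perm.sumCongr (u.right * v.right) 1) d)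
      = lab (Sum.elim u.left 1) (cj (Equiv.Perm.sumCongr u.right 1) (lab (Sum.elim v.left 1) (cj (Equiv.Perm.sumCongr v.right 1) d)))
    rw [cj_lab, lab_lab, cj_cj, Equiv.Perm.sumCongr_mul, one_mul]
    congr 1
    funext x
    rcases x with x | x
    · rfl
    · simp [Equiv.Perm.sumCongr]

lemma smul_def (u : Gam G n) (d : DD n G) :
    u • d = lab (Sum.elim u.left 1) (cj (Equiv.Perm.sumCongr u.right 1) d) := rfl

lemma one_symm' {α : Type} : Equiv.symm (1 : Equiv.Perm α) = 1 := rfl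

lemma smul_l_r (u : Gam G n) (d : DD n G) (x : Fin n) (y : Fin n) (h : d.τ (Sum.inr x) = Sum.inr y) :
    (u • d).l (Sum.inr x) = d.l (Sum.inr x) := by
  simp [smul_def, lab, cj, h, one_symm']
lemma smul_t_r (u : Gam G n) (d : DD n G) (x : Fin n) (y : Fin n) :
    (u • d).τ (Sum.inr x) = Sum.inr y ↔ d.τ (Sum.inr x) = Sum.inr y := by
  simp only [smul_def, lab, cj]
  rcases h : d.τ (Sum.inr x) with z | z <;> simp [h, one_symm']
lemma smul_t_l (u : Gam G n) (d : DD n G) (x : Fin n) :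
    (u • d).τ (Sum.inl (u.right x)) = Equiv.Perm.sumCongr u.right 1 (d.τ (Sum.inl x)) := by
  simp [smul_def, lab, cj]
lemma smul_l_l (u : Gam G n) (d : DD n G) (x : Fin n) :
    (u • d).l (Sum.inl (u.right x)) = u.left (u.right x) * Sum.elim (u.left ∘ u.right) 1 (d.τ (Sum.inl x)) *
      d.l (Sum.inl x) := by
  simp only [smul_def, lab, cj]
  rcases h : d.τ (Sum.inl x) with z | z <;> simp [h]

/-- The identity diagram. -/
def idD (n : ℕ) (G : Type) [CommGroup G] : DD n G where
  τ := Sum.swap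
  l _ := 1
  inv x := by simp
  nf x := by rcases x with x | x <;> simp
  hl _ := rfl

variable {k : Type} [CommRing k] {φ : G → k} {δ : k}
  {A : Type} [Ring A] [Algebra k A] (X : GBD k G n φ δ A) (Θ : A →ₐ[k] Module.End k (DD n G →₀ k))

/-- A representation on diagrams by the expected operators. -/
structure IsRep : Prop where
  s : ∀ i (h : i + 1 < n), Θ (X.s i) = C k (Equiv.swap (Sum.inl ⟨i, by omega⟩) (Sum.inl ⟨i+1, h⟩))
  e : ∀ i (h : i + 1 < n), Θ (X.e i) = K k φ (Sum.inl ⟨i, by omega⟩) (Sum.inl ⟨i+1, h⟩)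
  t : ∀ g j, Θ (X.t g j) = Lb k (Pi.mulSingle (Sum.inl j) g)

variable {X Θ} (hΘ : IsRep X Θ)
include hΘ

lemma IsRep.P (π : Equiv.Perm (Fin n)) : Θ (X.P π) = C k (Equiv.Perm.sumCongr π 1) := by
  have := perm_gen 0 π (by simp)
  induction this using Submonoid.closure_induction with
  | mem x hx =>
    obtain ⟨i, _, hi, rfl⟩ := hx
    rw [X.P_sg _ hi, hΘ.s i hi]
    simp [sg, hi]
  | one => simp [C_one]
  | mul x y _ _ hx hy =>
    rw [map_mul, map_mul, hx, hy, C_mul, Equiv.Perm.sumCongr_mul, one_mul]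

lemma IsRep.T (f : Fin n → G) : Θ (X.T f) = Lb k (Sum.elim f 1) := by
  induction f using Pi.mulSingle_induction with
  | one => simp [Sum.elim_one_one, Lb_one]
  | mul f g hf hg => rw [map_mul, map_mul, hf, hg, Lb_mul, ← Sum.elim_mul_mul, one_mul]
  | mulSingle j g =>
    rw [X.T_single, hΘ.t, Sum.elim_mulSingle_one]

lemma IsRep.w (u : Gam G n) (d : DD n G) (r : k) :
    Θ (X.w u) (Finsupp.single d r) = Finsupp.single (u • d) r := by
  rw [X.w_eq, map_mul, hΘ.T, hΘ.P]
  simp [smul_def]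

lemma IsRep.a (di : k) (α : Arc n G) : Θ (X.a di α) = di • (Lb k (Pi.mulSingle (Sum.inl α.i) α.g⁻¹) *
    K k φ (Sum.inl α.i) (Sum.inl α.j) * Lb k (Pi.mulSingle (Sum.inl α.i) α.g)) := by
  have h := GBD.Arc_lt α
  obtain ⟨π, hπ⟩ := exists_perm ![⟨0, by omega⟩, ⟨1, h⟩] ![α.i, α.j]
    (by intro x y; fin_cases x <;> fin_cases y <;> simp)
    (by have := α.ne; intro x y; fin_cases x <;> fin_cases y <;> simp [this, this.symm])
  have h0 := hπ 0
  have h1 := hπ 1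
  simp at h0 h1
  set u : Gam G n := SemidirectProduct.inl (Pi.mulSingle α.i α.g⁻¹) * SemidirectProduct.inr π with hu
  have e : u • bArc G 0 h = α := by
    ext
    · simp [smul_i, bArc, h0, hu]
    · simp [smul_j, bArc, h1, hu]
    · simp [smul_g, bArc, h0, h1, α.ne.symm, hu]
  have e2 : X.a di α = di • (X.w u * X.e 0 * X.w u⁻¹) := by rw [← X.a_spec0 di h u, e]
  have e3 : X.w u⁻¹ = X.P π⁻¹ * X.T (Pi.mulSingle α.i α.g) := by
    rw [hu, mul_inv_rev, map_mul, ← map_inv, ← map_inv, X.w_inr, X.w_inl, ← Pi.mulSingle_inv, inv_inv]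
  rw [e2, e3, hu, map_mul X.w, X.w_inr, X.w_inl]
  simp only [map_smul, map_mul, hΘ.T, hΘ.P, Sum.elim_mulSingle_one, hΘ.e 0 h]
  congr 1
  have := C_K (k := k) φ (Equiv.Perm.sumCongr π 1) (Sum.inl ⟨0, by omega⟩) (Sum.inl ⟨1, h⟩) (inl_ne (by simp))
  rw [mul_assoc (Lb k _) (C k _), this]
  have e5 : C (V := Fin n ⊕ Fin n) (G := G) k (Equiv.Perm.sumCongr π 1) * C k (Equiv.Perm.sumCongr π⁻¹ 1) = 1 := by
    rw [C_mul, Equiv.Perm.sumCongr_mul]; simp [C_one]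
  simp only [mul_assoc]
  rw [← mul_assoc (C k _), e5, one_mul]
  simp [Equiv.Perm.sumCongr, h0, h1]
omit hΘ

/-- The diagram of a list of disjoint arcs. -/
structure Desc (L : List (Arc n G)) (d : DD n G) : Prop where
  tl : ∀ α ∈ L, d.τ (Sum.inl α.i) = Sum.inl α.j
  tr : ∀ α ∈ L, d.τ (Sum.inr α.i) = Sum.inr α.j
  ll : ∀ α ∈ L, d.l (Sum.inl α.i) = α.g⁻¹
  lr : ∀ α ∈ L, d.l (Sum.inr α.i) = α.g
  t0 : ∀ x, (∀ α ∈ L, x ≠ α.i ∧ x ≠ α.j) → d.τ (Sum.inl x) = Sum.inr x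
  l0 : ∀ x, (∀ α ∈ L, x ≠ α.i ∧ x ≠ α.j) → d.l (Sum.inl x) = 1

lemma Desc.cons {L : List (Arc n G)} {d : DD n G} (hd : Desc L d) (α : Arc n G) (h : ∀ β ∈ L, α.Disj β)
    (hne : (Sum.inl α.i : Fin n ⊕ Fin n) ≠ Sum.inl α.j) :
    Desc (α :: L) (lab (Pi.mulSingle (Sum.inl α.i) α.g⁻¹) (kp (Sum.inl α.i) (Sum.inl α.j) hne
      (lab (Pi.mulSingle (Sum.inl α.i) α.g) d))) ∧
    ch φ (Sum.inl α.i) (Sum.inl α.j) (lab (Pi.mulSingle (Sum.inl α.i) α.g) d) = 1 := by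
  have hi := hd.t0 α.i (fun β hβ => ⟨(h β hβ).1, (h β hβ).2.1⟩)
  have hj := hd.t0 α.j (fun β hβ => ⟨(h β hβ).2.2.1, (h β hβ).2.2.2⟩)
  have li := hd.l0 α.i (fun β hβ => ⟨(h β hβ).1, (h β hβ).2.1⟩)
  have lj := hd.l0 α.j (fun β hβ => ⟨(h β hβ).2.2.1, (h β hβ).2.2.2⟩)
  have hnn := α.ne
  refine ⟨⟨?_, ?_, ?_, ?_, ?_, ?_⟩, ?_⟩
  · intro β hβ
    rcases List.mem_cons.1 hβ with rfl | hβ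
    · simp [lab, kp]
    · obtain ⟨a1, a2, a3, a4⟩ := h β hβ
      simp [lab, kp, a1.symm, a2.symm, a3.symm, a4.symm, hi, hj, hd.tl β hβ]
  · intro β hβ
    rcases List.mem_cons.1 hβ with rfl | hβ
    · simp [lab, kp, hi, hj]
    · obtain ⟨a1, a2, a3, a4⟩ := h β hβ
      simp [lab, kp, a1.symm, a2.symm, a3.symm, a4.symm, hi, hj, hd.tr β hβ]
  · intro β hβ
    rcases List.mem_cons.1 hβ with rfl | hβ
    · simp [lab, kp, hnn.symm]
    · obtain ⟨a1, a2, a3, a4⟩ := h β hβ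
      simp [lab, kp, a1.symm, a2.symm, a3.symm, a4.symm, hi, hj, hd.tl β hβ, hd.ll β hβ]
  · intro β hβ
    rcases List.mem_cons.1 hβ with rfl | hβ
    · simp [lab, kp, hi, hj, hnn, hnn.symm, li, lj]
    · obtain ⟨a1, a2, a3, a4⟩ := h β hβ
      simp [lab, kp, a1.symm, a2.symm, a3.symm, a4.symm, hi, hj, hd.tr β hβ, hd.lr β hβ]
  · intro x hx
    have h1 := hx α (by simp)
    have h2 := hd.t0 x (fun β hβ => hx β (by simp [hβ]))
    simp [lab, kp, h1.1, h1.2, hi, hj, h2]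
  · intro x hx
    have h1 := hx α (by simp)
    have h2 := hd.t0 x (fun β hβ => hx β (by simp [hβ]))
    have h3 := hd.l0 x (fun β hβ => hx β (by simp [hβ]))
    simp [lab, kp, h1.1, h1.2, hi, hj, h2, h3]
  · simp [ch, lab, hi]

lemma Desc.uniq {L : List (Arc n G)} {d d' : DD n G} (hd : Desc L d) (hd' : Desc L d') : d = d' := by
  have key : ∀ x, d.τ (Sum.inl x) = d'.τ (Sum.inl x) ∧ d.τ (Sum.inr x) = d'.τ (Sum.inr x) ∧
      d.l (Sum.inl x) = d'.l (Sum.inl x) ∧ d.l (Sum.inr x) = d'.l (Sum.inr x) := by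
    intro x
    have a1 := d.inv
    have a2 := d'.inv
    have a3 := d.hl
    have a4 := d'.hl
    by_cases h : ∀ α ∈ L, x ≠ α.i ∧ x ≠ α.j
    · have := hd.t0 x h
      have := hd'.t0 x h
      have := hd.l0 x h
      have := hd'.l0 x h
      grind
    · push Not at h
      obtain ⟨α, hα, h⟩ := h
      have := hd.tl α hα
      have := hd'.tl α hα
      have := hd.tr α hα
      have := hd'.tr α hα
      have := hd.ll α hα
      have := hd'.ll α hα
      have := hd.lr α hα
      have := hd'.lr α hα
      grind
  ext x
  · rcases x with x | x
    · exact (key x).1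
    · exact (key x).2.1
  · rcases x with x | x
    · exact (key x).2.2.1
    · exact (key x).2.2.2

include hΘ in
lemma ev_EL (di : k) (L : List (Arc n G)) (hL : L.Pairwise Arc.Disj) : ∃ d, Desc L d ∧
    Θ (X.EL di L) (Finsupp.single (idD n G) 1) = Finsupp.single d (di ^ L.length) := by
  induction L with
  | nil =>
    refine ⟨idD n G, ⟨by simp, by simp, by simp, by simp, fun x _ => rfl, fun x _ => rfl⟩, by simp⟩
  | cons α L ih =>
    rw [List.pairwise_cons] at hL
    obtain ⟨d, hd, e⟩ := ih hL.2
    have hne : (Sum.inl α.i : Fin n ⊕ Fin n) ≠ Sum.inl α.j := by simpa using α.ne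
    obtain ⟨h1, h2⟩ := hd.cons (φ := φ) α hL.1 hne
    refine ⟨_, h1, ?_⟩
    rw [X.EL_cons, map_mul, Module.End.mul_apply, e, hΘ.a]
    simp only [LinearMap.smul_apply, Module.End.mul_apply, Lb_single, K_single φ _ _ hne, h2,
      Finsupp.smul_single, smul_eq_mul, mul_one, List.length_cons, pow_succ']

end
lemma θ_isRep (k G : Type) [CommRing k] [CommGroup G] (ρ : G →* RingAut k) (n : ℕ) (δ : k) :
    IsRep (XG k G ρ n δ) (θ k G ρ n δ) := ⟨θ_s k G ρ n δ, θ_e k G ρ n δ, θ_t k G ρ n δ⟩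
end GBH
end

section
namespace GBH
open Dg
section
variable {G : Type} [CommGroup G] {n : ℕ}

/-- Membership up to orientation. -/
def MemF (α : Arc n G) (L : List (Arc n G)) : Prop := α ∈ L ∨ α.flip ∈ L

lemma Desc.tl' {L : List (Arc n G)} {d : DD n G} (hd : Desc L d) (α : Arc n G) (h : MemF α L) :
    d.τ (Sum.inl α.i) = Sum.inl α.j := by
  rcases h with h | h
  · exact hd.tl α h
  · have : d.τ (Sum.inl α.j) = Sum.inl α.i := hd.tl _ h
    rw [← this, d.inv]

lemma Desc.tr' {L : List (Arc n G)} {d : DD n G} (hd : Desc L d) (α : Arc n G) (h : MemF α L) :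
    d.τ (Sum.inr α.i) = Sum.inr α.j := by
  rcases h with h | h
  · exact hd.tr α h
  · have : d.τ (Sum.inr α.j) = Sum.inr α.i := hd.tr _ h
    rw [← this, d.inv]

lemma Desc.lr' {L : List (Arc n G)} {d : DD n G} (hd : Desc L d) (α : Arc n G) (h : MemF α L) :
    d.l (Sum.inr α.i) = α.g := by
  rcases h with h | h
  · exact hd.lr α h
  · have h1 : d.τ (Sum.inr α.j) = Sum.inr α.i := hd.tr _ h
    have h2 : d.l (Sum.inr α.j) = α.g := hd.lr _ h
    rw [← h1, d.hl, h2]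

lemma exists_memF {L : List (Arc n G)} {x : Fin n} (h : ¬ ∀ α ∈ L, x ≠ α.i ∧ x ≠ α.j) :
    ∃ α, MemF α L ∧ α.i = x := by
  push Not at h
  obtain ⟨α, hα, h⟩ := h
  by_cases hx : x = α.i
  · exact ⟨α, Or.inl hα, hx.symm⟩
  · exact ⟨α.flip, Or.inr hα, (h hx).symm⟩

lemma Desc.exists_l {L : List (Arc n G)} {d : DD n G} (hd : Desc L d) (x y : Fin n)
    (h : d.τ (Sum.inl x) = Sum.inl y) : ∃ α, MemF α L ∧ α.i = x ∧ α.j = y := by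
  obtain ⟨α, h1, rfl⟩ := exists_memF (L := L) (x := x) (fun h0 => by rw [hd.t0 x h0] at h; simp at h)
  refine ⟨α, h1, rfl, ?_⟩
  rw [hd.tl' α h1] at h
  exact Sum.inl_injective h

lemma Desc.exists_r {L : List (Arc n G)} {d : DD n G} (hd : Desc L d) (x y : Fin n)
    (h : d.τ (Sum.inr x) = Sum.inr y) : ∃ α, MemF α L ∧ α.i = x ∧ α.j = y ∧ α.g = d.l (Sum.inr x) := by
  obtain ⟨α, h1, rfl⟩ := exists_memF (L := L) (x := x) (fun h0 => by
    have := hd.t0 x h0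
    rw [← this, d.inv] at h; simp at h)
  refine ⟨α, h1, rfl, ?_, (hd.lr' α h1).symm⟩
  rw [hd.tr' α h1] at h
  exact Sum.inr_injective h

variable {k : Type} [CommRing k] {φ : G → k} {δ : k}
  {A : Type} [Ring A] [Algebra k A] {X : GBD k G n φ δ A} {di : k} {Θ : A →ₐ[k] Module.End k (DD n G →₀ k)}

lemma aF_EL (hdi : di * δ = 1) {L : List (Arc n G)} (hL : L.Pairwise Arc.Disj) {β : Arc n G} (hβ : MemF β L) :
    X.a di β * X.EL di L = X.EL di L := by
  rcases hβ with h | h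
  · exact X.a_EL di hdi L hL β h
  · rw [← X.a_flip]; exact X.a_EL di hdi L hL _ h

lemma EL_aF (hdi : di * δ = 1) {L : List (Arc n G)} (hL : L.Pairwise Arc.Disj) {β : Arc n G} (hβ : MemF β L) :
    X.EL di L * X.a di β = X.EL di L := by
  rcases hβ with h | h
  · exact X.EL_a di hdi L hL β h
  · rw [← X.a_flip]; exact X.EL_a di hdi L hL _ h

lemma abs_of_one (hdi : di * δ = 1) {L : List (Arc n G)} (hL : L.Pairwise Arc.Disj) {β : Arc n G}
    (hβ : MemF β L) (v : A) (h : v * X.a di β = X.a di β) : v * X.EL di L = X.EL di L := by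
  rw [← aF_EL hdi hL hβ, ← mul_assoc, h]

lemma abs_of_two (hdi : di * δ = 1) {L : List (Arc n G)} (hL : L.Pairwise Arc.Disj) {β γ : Arc n G}
    (hβ : MemF β L) (hγ : MemF γ L) (v : A) (h : v * (X.a di β * X.a di γ) = X.a di β * X.a di γ) :
    v * X.EL di L = X.EL di L := by
  have : X.EL di L = X.a di β * X.a di γ * X.EL di L := by rw [mul_assoc, aF_EL hdi hL hγ, aF_EL hdi hL hβ]
  rw [this, ← mul_assoc, h]

lemma ev_EL' (hΘ : IsRep X Θ) {L : List (Arc n G)} (hL : L.Pairwise Arc.Disj) {d : DD n G}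
    (hd : Desc L d) : Θ (X.EL di L) (Finsupp.single (idD n G) 1) = Finsupp.single d (di ^ L.length) := by
  obtain ⟨d', hd', e⟩ := ev_EL hΘ di L hL
  rw [e, hd.uniq hd']

lemma stab_of_abs [Nontrivial k] (hΘ : IsRep X Θ) (hdi : di * δ = 1) {L : List (Arc n G)}
    (hL : L.Pairwise Arc.Disj) {d : DD n G}
    (hd : Desc L d) (v : Gam G n) (hv : X.w v * X.EL di L = X.EL di L) : v • d = d := by
  have h := congrArg (fun x => Θ x (Finsupp.single (idD n G) 1)) hv
  simp only [map_mul, Module.End.mul_apply, ev_EL' hΘ hL hd, hΘ.w] at h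
  have hu : (di ^ L.length) ≠ 0 := ((IsUnit.of_mul_eq_one _ hdi).pow _).ne_zero
  exact Finsupp.single_left_injective hu h

/-- Reduction step for stabilizers. -/
lemma abs_red {L : List (Arc n G)} (u v : Gam G n) (hu : X.w u * X.EL di L = X.EL di L)
    (hv : X.w (u * v) * X.EL di L = X.EL di L) : X.w v * X.EL di L = X.EL di L := by
  have h1 : X.w u⁻¹ * X.EL di L = X.EL di L := by
    conv_lhs => rw [← hu, ← mul_assoc, X.w_inv_mul, one_mul]
  calc X.w v * X.EL di L = X.w u⁻¹ * (X.w (u * v) * X.EL di L) := by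
        rw [← mul_assoc, ← map_mul, inv_mul_cancel_left]
    _ = _ := by rw [hv, h1]

open Classical in
lemma stab_label [Nontrivial k] (hΘ : IsRep X Θ) (hdi : di * δ = 1) {L : List (Arc n G)}
    (hL : L.Pairwise Arc.Disj) {d : DD n G}
    (hd : Desc L d) (N : ℕ) (f : Fin n → G) (hN : (Finset.univ.filter (fun x => f x ≠ 1)).card = N)
    (hv : (SemidirectProduct.inl f : Gam G n) • d = d) :
    X.w (SemidirectProduct.inl f) * X.EL di L = X.EL di L := by
  induction N using Nat.strong_induction_on generalizing f with
  | _ N ih =>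
    by_cases h : ∀ x, f x = 1
    · have : f = 1 := funext h
      subst this; simp
    · push Not at h
      obtain ⟨x, hx⟩ := h
      have e : ∀ x, d.l (Sum.inl x) = f x * Sum.elim f 1 (d.τ (Sum.inl x)) * d.l (Sum.inl x) := by
        intro x
        have := smul_l_l (SemidirectProduct.inl f) d x
        simp only [SemidirectProduct.right_inl, Equiv.Perm.one_apply, SemidirectProduct.left_inl] at this
        rw [hv] at this
        exact this
      have e' : ∀ x, f x * Sum.elim f 1 (d.τ (Sum.inl x)) = 1 := by
        intro x
        have := e x
        exact (mul_eq_right.1 this.symm)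
      obtain ⟨α, h1, rfl⟩ := exists_memF (L := L) (x := x) (fun h0 => by
        have := e' x
        rw [hd.t0 x h0] at this
        simp at this
        exact hx this)
      have e2 := e' α.i
      rw [hd.tl' α h1] at e2
      simp only [Sum.elim_inl] at e2
      have hu := abs_of_one hdi hL h1 _ (X.absorb_label di α (f α.i)⁻¹)
      have hs := stab_of_abs hΘ hdi hL hd _ hu
      refine abs_red _ _ hu ?_
      rw [← map_mul]
      have fj : f α.j = (f α.i)⁻¹ := (eq_inv_of_mul_eq_one_right e2)
      refine ih _ ?_ _ rfl (by rw [map_mul, mul_smul, hv, hs])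
      rw [← hN]
      refine Finset.card_lt_card ?_
      rw [Finset.ssubset_iff_of_subset]
      · refine ⟨α.i, by simpa using hx, ?_⟩
        simp [α.ne]
      · intro y hy
        simp only [Finset.mem_filter, Finset.mem_univ, true_and, Pi.mul_apply] at hy ⊢
        intro hy1
        have y1 : y ≠ α.i := fun h => hx (h ▸ hy1)
        have y2 : y ≠ α.j := fun h => by
          rw [h, fj] at hy1
          exact hx (inv_eq_one.1 hy1)
        simp [hy1, y1, y2] at hy

lemma stab [Nontrivial k] (hΘ : IsRep X Θ) (hdi : di * δ = 1) {L : List (Arc n G)}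
    (hL : L.Pairwise Arc.Disj) {d : DD n G}
    (hd : Desc L d) (N : ℕ) (v : Gam G n) (hN : v.right.support.card = N) (hv : v • d = d) :
    X.w v * X.EL di L = X.EL di L := by
  induction N using Nat.strong_induction_on generalizing v with
  | _ N ih =>
    by_cases h : ∀ x, v.right x = x
    · have h1 : v.right = 1 := Equiv.ext h
      have : v = SemidirectProduct.inl v.left := by
        ext
        · simp
        · simp [h1]
      rw [this] at hv ⊢
      exact stab_label hΘ hdi hL hd _ v.left rfl hv
    · push Not at h
      obtain ⟨x, hx⟩ := h
      have e : ∀ x, d.τ (Sum.inl (v.right x)) = Equiv.Perm.sumCongr v.right 1 (d.τ (Sum.inl x)) := by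
        intro x
        have := smul_t_l v d x
        rw [hv] at this
        exact this
      obtain ⟨α, h1, rfl⟩ := exists_memF (L := L) (x := x) (fun h0 => by
        have := e x
        rw [hd.t0 x h0] at this
        simp only [Equiv.Perm.sumCongr_apply, Sum.map_inr, Equiv.Perm.one_apply] at this
        have h2 := congrArg d.τ this
        rw [d.inv, ← hd.t0 x h0, d.inv] at h2
        exact hx (Sum.inl_injective h2))
      have hi : d.τ (Sum.inl (v.right α.i)) = Sum.inl (v.right α.j) := by
        rw [e, hd.tl' α h1]; rfl
      have hij := hd.tl' α h1
      have hji : d.τ (Sum.inl α.j) = Sum.inl α.i := by rw [← hij, d.inv]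
      have inj := v.right.injective
      -- the common end of the argument
      have fin : ∀ u : Gam G n, X.w u * X.EL di L = X.EL di L → u.right (v.right α.i) = α.i →
          (∀ y, v.right y = y → u.right y = y) → X.w v * X.EL di L = X.EL di L := by
        intro u hu hui huy
        refine abs_red _ _ hu ?_
        refine ih _ ?_ _ rfl (by rw [mul_smul, hv, stab_of_abs hΘ hdi hL hd _ hu])
        rw [← hN]
        refine Finset.card_lt_card ?_
        rw [Finset.ssubset_iff_of_subset]
        · refine ⟨α.i, by simpa using hx, ?_⟩
          simp [hui]
        · intro y hy
          rw [Equiv.Perm.mem_support] at hy ⊢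
          intro hy1
          apply hy
          rw [SemidirectProduct.mul_right, Equiv.Perm.mul_apply, hy1, huy y hy1]
      by_cases hc : v.right α.i = α.j
      · obtain ⟨u, hu, hu'⟩ := X.absorb_swap di α
        refine fin u (abs_of_one hdi hL h1 _ hu') (by rw [hu, hc, Equiv.swap_apply_right]) ?_
        intro y hy
        rw [hu]
        have hj : v.right α.j = α.i := by
          rw [hc, hji] at hi
          exact (Sum.inl_injective hi).symm
        refine Equiv.swap_apply_of_ne_of_ne ?_ ?_
        · rintro rfl; exact hx hy
        · rintro rfl; exact α.ne (hj.symm.trans hy)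
      · obtain ⟨β, h2, hbi, hbj⟩ := hd.exists_l _ _ hi
        have hd1 : α.i ≠ β.j := by
          intro h
          have := congrArg d.τ hi
          rw [d.inv, ← hbj, ← h, hij] at this
          exact hc (Sum.inl_injective this)
        have hd2 : α.j ≠ β.j := by
          intro h
          have := congrArg d.τ hi
          rw [d.inv, ← hbj, ← h, hji] at this
          exact hx (Sum.inl_injective this)
        have hdis : α.Disj β := ⟨fun h => hx (by rw [← hbi, ← h]), hd1, fun h => hc (by rw [← hbi, ← h]), hd2⟩
        obtain ⟨u, hu, hu'⟩ := X.absorb_double di α β hdis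
        refine fin u (abs_of_two hdi hL h1 h2 _ hu') ?_ ?_
        · rw [hu, ← hbi, Equiv.Perm.mul_apply, Equiv.swap_apply_of_ne_of_ne hdis.2.2.1.symm β.ne,
            Equiv.swap_apply_right]
        · intro y hy
          have y1 : y ≠ α.i := by rintro rfl; exact hx hy
          have y2 : y ≠ α.j := by rintro rfl; exact hd2 (by rw [hbj, hy])
          have y3 : y ≠ β.i := by
            intro h
            have : v.right y = v.right α.i := by rw [hy, h, hbi]
            exact y1 (inj this)
          have y4 : y ≠ β.j := by
            intro h
            have : v.right y = v.right α.j := by rw [hy, h, hbj]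
            exact y2 (inj this)
          rw [hu, Equiv.Perm.mul_apply, Equiv.swap_apply_of_ne_of_ne y2 y4, Equiv.swap_apply_of_ne_of_ne y1 y3]

/-- The standard elements only depend on their diagram. -/
lemma std_uniq [Nontrivial k] (hΘ : IsRep X Θ) (hdi : di * δ = 1) {L L' : List (Arc n G)}
    (hL : L.Pairwise Arc.Disj) (hL' : L'.Pairwise Arc.Disj) {d d' : DD n G}
    (hd : Desc L d) (hd' : Desc L' d') (u u' : Gam G n) (h : u • d = u' • d') :
    X.w u * X.EL di L = X.w u' * X.EL di L' := by
  have key : ∀ {L L' : List (Arc n G)} {d d' : DD n G} (hd : Desc L d) (hd' : Desc L' d') (u u' : Gam G n)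
      (h : u • d = u' • d'), ∀ α ∈ L, MemF α L' := by
    intro L L' d d' hd hd' u u' h α hα
    have h1 : d'.τ (Sum.inr α.i) = Sum.inr α.j := by
      rw [← smul_t_r u', ← h, smul_t_r]; exact hd.tr α hα
    have h2 : d'.l (Sum.inr α.i) = α.g := by
      rw [← smul_l_r u' _ _ _ h1, ← h, smul_l_r u _ _ _ (hd.tr α hα)]; exact hd.lr α hα
    obtain ⟨β, hb, b1, b2, b3⟩ := hd'.exists_r _ _ h1
    have : β = α := by ext; exacts [congrArg Fin.val b1, congrArg Fin.val b2, b3.trans h2]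
    exact this ▸ hb
  have a1 : ∀ M : List (Arc n G), (∀ α ∈ M, MemF α L') → X.EL di M * X.EL di L' = X.EL di L' := by
    intro M hM
    induction M with
    | nil => simp
    | cons α M ih =>
      rw [X.EL_cons, mul_assoc, ih (fun β hβ => hM β (by simp [hβ])), aF_EL hdi hL' (hM α (by simp))]
  have a2 : ∀ M : List (Arc n G), (∀ α ∈ M, MemF α L) → X.EL di L * X.EL di M = X.EL di L := by
    intro M hM
    induction M with
    | nil => simp
    | cons α M ih =>
      rw [X.EL_cons, ← mul_assoc, EL_aF hdi hL (hM α (by simp)), ih (fun β hβ => hM β (by simp [hβ]))]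
  have e : X.EL di L = X.EL di L' := by
    rw [← a1 L (key hd hd' u u' h), a2 L' (key hd' hd u' u h.symm)]
  have hdd : d = d' := by
    have t1 := ev_EL' (di := di) hΘ hL hd
    have t2 := ev_EL' (di := di) hΘ hL' hd'
    rw [e, t2] at t1
    have hu : (di ^ L'.length) ≠ 0 := ((IsUnit.of_mul_eq_one _ hdi).pow _).ne_zero
    rcases Finsupp.single_eq_single_iff _ _ _ _ |>.1 t1 with t | t
    · exact t.1.symm
    · exact absurd t.1 hu
  subst hdd
  rw [← e]
  have := stab hΘ hdi hL hd _ (u'⁻¹ * u) rfl (by rw [mul_smul, h, inv_smul_smul])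
  calc X.w u * X.EL di L = X.w u' * (X.w (u'⁻¹ * u) * X.EL di L) := by
        rw [← mul_assoc, ← map_mul, mul_inv_cancel_left]
    _ = _ := by rw [this]

end
end GBH
end

section
namespace GBH
open Dg
section
variable {G : Type} [CommGroup G] {n : ℕ}

/-- Diagrams of standard elements. -/
def StdD (d : DD n G) : Prop := ∃ p : Gam G n × List (Arc n G) × DD n G,
  p.2.1.Pairwise Arc.Disj ∧ Desc p.2.1 p.2.2 ∧ d = p.1 • p.2.2

/-- Right arcs of a diagram. -/
def RtD (d : {d : DD n G // StdD d}) : Set {α : Arc n G // α.i < α.j} :=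
  {α | d.1.τ (Sum.inr α.1.i) = Sum.inr α.1.j ∧ d.1.l (Sum.inr α.1.i) = α.1.g}

lemma RtD_eq (d : {d : DD n G // StdD d}) (l m) (hl : l ∈ RtD d) (hm : m ∈ RtD d) (h : l.1.i = m.1.i) :
    l = m := by
  obtain ⟨l1, l2⟩ := hl
  obtain ⟨m1, m2⟩ := hm
  rw [h] at l1 l2
  apply Subtype.ext
  ext
  · rw [h]
  · rw [l1] at m1; rw [Sum.inr_injective m1]
  · exact l2.symm.trans m2

lemma RtD_disj (d : {d : DD n G // StdD d}) (l m) (hl : l ∈ RtD d) (hm : m ∈ RtD d) (h : l.1.i ≠ m.1.i) :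
    l.1.Disj m.1 := by
  obtain ⟨l1, l2⟩ := hl
  obtain ⟨m1, m2⟩ := hm
  have l3 : d.1.τ (Sum.inr l.1.j) = Sum.inr l.1.i := by rw [← l1, d.1.inv]
  have m3 : d.1.τ (Sum.inr m.1.j) = Sum.inr m.1.i := by rw [← m1, d.1.inv]
  have l4 := l.2
  have m4 := m.2
  refine ⟨h, fun h1 => ?_, fun h1 => ?_, fun h1 => ?_⟩
  · rw [h1, m3] at l1
    have := Sum.inr_injective l1
    rw [← this, h1] at l4
    exact lt_asymm l4 m4
  · rw [h1, m1] at l3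
    have := Sum.inr_injective l3
    rw [← this, h1] at l4
    exact lt_asymm l4 m4
  · rw [h1, m3] at l3
    exact h (Sum.inr_injective l3).symm

lemma RtD_mem (d : {d : DD n G // StdD d}) (u : Gam G n) (L : List (Arc n G)) (d0 : DD n G)
    (hd : Desc L d0) (h : d.1 = u • d0) (l) : l ∈ RtD d ↔ MemF l.1 L := by
  simp only [RtD, Set.mem_setOf_eq, h, smul_t_r]
  constructor
  · rintro ⟨h1, h2⟩
    rw [smul_l_r u _ _ _ h1] at h2
    obtain ⟨β, hb, b1, b2, b3⟩ := hd.exists_r _ _ h1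
    have : β = l.1 := by ext; exacts [congrArg Fin.val b1, congrArg Fin.val b2, b3.trans h2]
    exact this ▸ hb
  · intro h1
    have := hd.tr' _ h1
    exact ⟨this, by rw [smul_l_r u _ _ _ this]; exact hd.lr' _ h1⟩

variable {k : Type} [CommRing k] {φ : G → k} {δ : k}
  {A : Type} [Ring A] [Algebra k A] (X : GBD k G n φ δ A) (di : k) (Θ : A →ₐ[k] Module.End k (DD n G →₀ k))

/-- The standard element of a diagram. -/
def be (d : {d : DD n G // StdD d}) : A := X.w d.2.choose.1 * X.EL di d.2.choose.2.1

variable {X di Θ}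
lemma be_eq [Nontrivial k] (hΘ : IsRep X Θ) (hdi : di * δ = 1) (d : {d : DD n G // StdD d})
    (u : Gam G n) (L : List (Arc n G)) (d0 : DD n G) (hL : L.Pairwise Arc.Disj)
    (hd : Desc L d0) (h : d.1 = u • d0) : be X di d = X.w u * X.EL di L := by
  obtain ⟨h1, h2, h3⟩ := d.2.choose_spec
  exact std_uniq hΘ hdi h1 hL h2 hd _ _ (h3.symm.trans h)

lemma be_rep (d : {d : DD n G // StdD d}) : ∃ (u : Gam G n) (L : List (Arc n G)) (d0 : DD n G),
    L.Pairwise Arc.Disj ∧ Desc L d0 ∧ d.1 = u • d0 ∧ be X di d = X.w u * X.EL di L := by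
  obtain ⟨h1, h2, h3⟩ := d.2.choose_spec
  exact ⟨_, _, _, h1, h2, h3, rfl⟩

lemma std_be [Nontrivial k] (hΘ : IsRep X Θ) (hdi : di * δ = 1) (u : Gam G n) (L : List (Arc n G))
    (hL : L.Pairwise Arc.Disj) : ∃ d : {d : DD n G // StdD d}, be X di d = X.w u * X.EL di L ∧
      ∀ l : {α : Arc n G // α.i < α.j}, l ∈ RtD d ↔ MemF l.1 L := by
  obtain ⟨d0, hd0, _⟩ := ev_EL hΘ di L hL
  refine ⟨⟨u • d0, (u, L, d0), hL, hd0, rfl⟩, be_eq hΘ hdi _ u L d0 hL hd0 rfl, ?_⟩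
  exact RtD_mem _ u L d0 hd0 rfl

lemma be_li (hΘ : IsRep X Θ) (hdi : di * δ = 1) : LinearIndependent k (be X di) := by
  have hu : IsUnit di := IsUnit.of_mul_eq_one _ hdi
  let ev : A →ₗ[k] (DD n G →₀ k) := (LinearMap.applyₗ (Finsupp.single (idD n G) (1:k))).comp Θ.toLinearMap
  have h0 : LinearIndependent k (fun d : {d : DD n G // StdD d} => (Finsupp.single d.1 (1:k) : DD n G →₀ k)) :=
    (Finsupp.basisSingleOne (R := k) (ι := DD n G)).linearIndependent.comp _ Subtype.val_injective
      |> fun h => by simpa [Function.comp_def] using h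
  have hv : ∀ d : {d : DD n G // StdD d}, ∃ c : kˣ, ev (be X di d) = c • Finsupp.single d.1 (1:k) := by
    intro d
    obtain ⟨u, L, d0, hL, hd, e1, e2⟩ := be_rep (X := X) (di := di) d
    refine ⟨(hu.pow L.length).unit, ?_⟩
    rw [e2, e1]
    simp only [ev, LinearMap.comp_apply, AlgHom.toLinearMap_apply, LinearMap.applyₗ_apply_apply, map_mul,
      Module.End.mul_apply, ev_EL' hΘ hL hd, hΘ.w]
    simp [Units.smul_def]
  choose c hc using hv
  refine LinearIndependent.of_comp ev ?_
  have : ev ∘ be X di = c • (fun d : {d : DD n G // StdD d} => (Finsupp.single d.1 (1:k) : DD n G →₀ k)) :=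
    funext hc
  rw [this]
  exact h0.units_smul c

lemma be_span [Nontrivial k] (hΘ : IsRep X Θ) (hdi : di * δ = 1) : ⊤ ≤ Submodule.span k (Set.range (be X di)) := by
  rw [← X.span_top di hdi]
  refine Submodule.span_mono ?_
  rintro _ ⟨u, L, hL, -, rfl⟩
  obtain ⟨d, hd, _⟩ := std_be hΘ hdi u L hL
  exact ⟨d, hd⟩

/-- The standard basis. -/
def bB [Nontrivial k] (hΘ : IsRep X Θ) (hdi : di * δ = 1) : Module.Basis {d : DD n G // StdD d} k A :=
  Module.Basis.mk (be_li hΘ hdi) (be_span hΘ hdi)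

lemma bB_apply [Nontrivial k] (hΘ : IsRep X Θ) (hdi : di * δ = 1) (d) : bB hΘ hdi d = be X di d :=
  Module.Basis.mk_apply ..

theorem final_iso [Nontrivial k] (hΘ : IsRep X Θ) (hdi : di * δ = 1) (ε : A →ₐ[k] k)
    (π : A →ₐ[k] MonoidAlgebra k (Gam G n))
    (hs : ∀ i, i + 1 < n → π (X.s i) = MonoidAlgebra.of k _ (SemidirectProduct.inr (sg n i)))
    (he : ∀ i, i + 1 < n → π (X.e i) = 0)
    (ht : ∀ g j, π (X.t g j) = MonoidAlgebra.of k _ (SemidirectProduct.inl (Pi.mulSingle j g)))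
    (hε : ∀ a, groupAug k (Gam G n) (π a) = ε a) (q : ℕ) :
    Nonempty (barTor k A ε q ≃ₗ[k] groupTor k (Gam G n) q) := by
  have hw : ∀ u, π (X.w u) = MonoidAlgebra.of k _ u := by
    intro u
    have hP : ∀ σ, π (X.P σ) = MonoidAlgebra.of k _ (SemidirectProduct.inr σ : Gam G n) := by
      intro σ
      have := perm_gen 0 σ (by simp)
      induction this using Submonoid.closure_induction with
      | mem x hx =>
        obtain ⟨i, _, hi, rfl⟩ := hx
        rw [X.P_sg _ hi, hs i hi]
      | one => simp only [map_one]
      | mul x y _ _ hx hy => simp only [map_mul, hx, hy]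
    have hT : ∀ f, π (X.T f) = MonoidAlgebra.of k _ (SemidirectProduct.inl f : Gam G n) := by
      intro f
      induction f using Pi.mulSingle_induction with
      | one => simp only [map_one]
      | mul f g hf hg => simp only [map_mul, hf, hg]
      | mulSingle j g => rw [X.T_single, ht]
    rw [X.w_eq, map_mul, hP, hT, ← map_mul, SemidirectProduct.inl_left_mul_inr_right]
  have ha : ∀ α, π (X.a di α) = 0 := by
    intro α
    have h := GBD.Arc_lt α
    obtain ⟨u, rfl⟩ := exists_smul_bArc α h
    rw [X.a_spec0, map_smul, map_mul, map_mul, he 0 h, mul_zero, zero_mul, smul_zero]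
  let sec : MonoidAlgebra k (Gam G n) →ₐ[k] A := MonoidAlgebra.lift k A (Gam G n) X.w
  have hsec : ∀ u : Gam G n, sec (MonoidAlgebra.of k (Gam G n) u) = X.w u := fun u => MonoidAlgebra.lift_of X.w u
  have hps : ∀ y, π (sec y) = y := by
    intro y
    have : π.comp sec = AlgHom.id k _ := by
      apply MonoidAlgebra.algHom_ext _ (by ext)
      intro u
      have h1 := hsec u
      have h2 := hw u
      simp only [MonoidAlgebra.of_apply] at h1 h2
      simp [h1, h2]
    exact congrArg (fun f => f y) this
  have hπs : Function.Surjective π := fun y => ⟨_, hps y⟩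
  set b := bB hΘ hdi with hb
  have bap : ∀ d, b d = be X di d := bB_apply hΘ hdi
  have h1 : ∀ d, ∀ l ∈ RtD d, b d * X.a di l.1 = b d := by
    intro d l hl
    obtain ⟨u, L, d0, hL, hd, e1, e2⟩ := be_rep (X := X) (di := di) d
    rw [bap, e2, mul_assoc, EL_aF hdi hL ((RtD_mem d u L d0 hd e1 l).1 hl)]
  have h2 : ∀ x (l : {α : Arc n G // α.i < α.j}), x * X.a di l.1 ∈ VS b {d | l ∈ RtD d} := by
    intro x l
    refine Submodule.span_mono ?_ (X.mul_a_mem di hdi x l.1)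
    rintro _ ⟨u, L, hL, hB, rfl⟩
    obtain ⟨d, hd, hd2⟩ := std_be hΘ hdi u L hL
    exact ⟨d, (hd2 l).2 (Or.inl (hB (by simp))), by rw [bap, hd]⟩
  have hker : LinearMap.ker π.toLinearMap = VS b {d | (RtD d).Nonempty} := by
    apply le_antisymm
    · intro x hx
      have key : ∀ x : A, x - sec (π x) ∈ VS b {d | (RtD d).Nonempty} := by
        intro x
        have hx : x ∈ Submodule.span k (X.std di []) := by rw [X.span_top di hdi]; trivial
        induction hx using Submodule.span_induction with
        | mem x hx =>
          obtain ⟨u, L, hL, -, rfl⟩ := hx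
          cases L with
          | nil => simp only [GBD.EL_nil, mul_one, hw, hsec, sub_self, Submodule.zero_mem]
          | cons β L =>
            have : π (X.w u * X.EL di (β :: L)) = 0 := by
              rw [X.EL_cons, map_mul, map_mul, ha, zero_mul, mul_zero]
            rw [this, map_zero, sub_zero]
            obtain ⟨d, hd, hd2⟩ := std_be hΘ hdi u _ hL
            rw [← hd, ← bap]
            refine basis_mem_VS b ?_
            rcases lt_or_gt_of_ne β.ne with h | h
            · exact ⟨⟨β, h⟩, (hd2 _).2 (Or.inl (by simp))⟩
            · exact ⟨⟨β.flip, h⟩, (hd2 _).2 (Or.inr (List.mem_cons_self ..))⟩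
        | zero => simp
        | add x y _ _ hx hy =>
          have := Submodule.add_mem _ hx hy
          rw [map_add, map_add]
          convert this using 1
          abel
        | smul c x _ hx =>
          have := Submodule.smul_mem _ c hx
          rw [map_smul, map_smul, ← smul_sub]
          exact this
      have hx0 : π x = 0 := hx
      have := key x
      rwa [hx0, map_zero, sub_zero] at this
    · refine Submodule.span_le.2 ?_
      rintro _ ⟨d, ⟨l, hl⟩, rfl⟩
      change π (b d) = 0
      rw [← h1 d l hl, map_mul, ha, mul_zero]
  haveI : Module.Free k A := Module.Free.of_basis b
  refine tor_iso (groupAug k (Gam G n)) ε π hπs hε (fun q => ?_) q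
  refine Ex_ker ε b (fun l : {α : Arc n G // α.i < α.j} => (l.1.i : ℕ)) RtD (fun l => X.a di l.1)
    ?_ h1 h2 ?_ ?_ n (fun l => l.1.i.2) π hker q
  · intro l
    rw [← hε, ha, map_zero]
  · intro d l hl m hm
    by_cases h : l.1.i = m.1.i
    · rw [RtD_eq d l m hl hm h]
    · exact X.a_comm di _ _ (RtD_disj d l m hl hm h)
  · intro d l hl m hm h
    exact RtD_eq d l m hl hm (Fin.ext h)
end

section
variable (k G : Type) [CommRing k] [CommGroup G] (ρ : G →* RingAut k) (n : ℕ) (δ : k)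

/-- Images of generators in the group algebra. -/
def π0 : GBGen n G → MonoidAlgebra k (Gam G n)
  | .s i => MonoidAlgebra.of k _ (SemidirectProduct.inr (sg n i))
  | .e i => 0
  | .t g j => MonoidAlgebra.of k _ (SemidirectProduct.inl (Pi.mulSingle j g))

lemma inr_inl_single (σ : Equiv.Perm (Fin n)) (j : Fin n) (g : G) :
    (SemidirectProduct.inr σ * SemidirectProduct.inl (Pi.mulSingle j g) : Gam G n) =
      SemidirectProduct.inl (Pi.mulSingle (σ j) g) * SemidirectProduct.inr σ := by
  have : permMulAut G n σ (Pi.mulSingle j g) = Pi.mulSingle (σ j) g := by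
    funext l
    rw [permMulAut_apply]
    simp only [Pi.mulSingle_apply, Equiv.Perm.inv_eq_iff_eq]
  rw [← this, SemidirectProduct.inl_aut, map_inv, inv_mul_cancel_right]

lemma π_rel (x y : FreeAlgebra k (GBGen n G)) (h : GBRel k G ρ n δ x y) :
    FreeAlgebra.lift k (π0 k G n) x = FreeAlgebra.lift k (π0 k G n) y := by
  have hc := sg_cox (n := n)
  cases h <;> simp only [map_mul, map_one, map_smul, FreeAlgebra.lift_ι_apply, π0, mul_zero, zero_mul, smul_zero]
  case s_sq i => rw [← map_mul, ← map_mul, hc.sq i i.2]; simp only [map_one]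
  case s_braid i j h =>
    have := hc.braid i (by have := j.2; omega)
    simp only [← map_mul, h, this]
  case ss_comm i j h =>
    simp only [← map_mul, hc.comm i j h j.2]
  case t_mul g h j => simp only [← map_mul, Pi.mulSingle_mul]
  case t_one j => simp only [Pi.mulSingle_one, map_one]
  case tt_comm g h j l hh => simp only [← map_mul, mul_comm]
  case st_comm g i l h =>
    simp only [← map_mul, inr_inl_single]; rw [sg_other l h.1 h.2]
  case st_slide g i j j' h h' =>
    obtain rfl : j = nd0 i := Fin.ext h
    obtain rfl : j' = nd1 i := Fin.ext h'
    simp only [← map_mul, inr_inl_single]; rw [sg_left (by have := i.2; omega)]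
  case st_slide' g i j j' h h' =>
    obtain rfl : j = nd0 i := Fin.ext h
    obtain rfl : j' = nd1 i := Fin.ext h'
    simp only [← map_mul, inr_inl_single]; rw [sg_right (by have := i.2; omega)]

/-- The projection to the group algebra. -/
def πG : GBAlg k G ρ n δ →ₐ[k] MonoidAlgebra k (Gam G n) :=
  RingQuot.liftAlgHom k ⟨FreeAlgebra.lift k (π0 k G n), π_rel k G ρ n δ⟩

lemma πG_mkq (x : FreeAlgebra k (GBGen n G)) :
    πG k G ρ n δ (mkq k G ρ n δ x) = FreeAlgebra.lift k (π0 k G n) x :=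
  RingQuot.liftAlgHom_mkAlgHom_apply ..

lemma πG_aug (a : GBAlg k G ρ n δ) : groupAug k (Gam G n) (πG k G ρ n δ a) = GBaug k G ρ n δ a := by
  obtain ⟨x, rfl⟩ := mkq_surj a
  have h : ((groupAug k (Gam G n)).comp (πG k G ρ n δ)).comp (mkq k G ρ n δ) =
      (GBaug k G ρ n δ).comp (mkq k G ρ n δ) := by
    refine FreeAlgebra.hom_ext ?_
    funext y
    have e : GBaug k G ρ n δ (mkq k G ρ n δ (FreeAlgebra.ι k y)) = _ :=
      RingQuot.liftAlgHom_mkAlgHom_apply ..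
    simp only [Function.comp, AlgHom.comp_apply, πG_mkq, FreeAlgebra.lift_ι_apply]
    rw [e, FreeAlgebra.lift_ι_apply]
    cases y <;> simp [π0, groupAug]
  exact congrArg (fun f => f x) h

theorem main_iso (hδ : IsUnit δ) (q : ℕ) :
    Nonempty (barTor k (GBAlg k G ρ n δ) (GBaug k G ρ n δ) q ≃ₗ[k] groupTor k (Gam G n) q) := by
  rcases subsingleton_or_nontrivial k with h | h
  · haveI := Module.subsingleton k (barTor k (GBAlg k G ρ n δ) (GBaug k G ρ n δ) q)
    haveI := Module.subsingleton k (groupTor k (Gam G n) q)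
    exact ⟨0⟩
  · obtain ⟨di, hdi⟩ := hδ.exists_left_inv
    refine final_iso (θ_isRep k G ρ n δ) hdi (GBaug k G ρ n δ) (πG k G ρ n δ) ?_ ?_ ?_ (πG_aug k G ρ n δ) q
    · intro i hi
      rw [XG_s _ _ _ _ _ i (by omega), πG_mkq, FreeAlgebra.lift_ι_apply]; rfl
    · intro i hi
      rw [XG_e _ _ _ _ _ i (by omega), πG_mkq, FreeAlgebra.lift_ι_apply]; rfl
    · intro g j
      rw [XG_t, πG_mkq, FreeAlgebra.lift_ι_apply]; rfl
end
end GBH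
end


/-- **Homology of `G`-equivariant Brauer algebras** (invertible parameter).
Let `G` be an abelian group, `k` a commutative `G`-ring, `n` a natural number, and
`δ ∈ k` invertible.  Then there is an isomorphism of graded `k`-modules
`Tor_*^{GB_n(δ)}(𝟙,𝟙) ≅ Tor_*^{k[G^n ⋊ Σ_n]}(k,k) = H_*(G^n ⋊ Σ_n; k)`. -/
theorem equivariant_brauer_homology (k G : Type) [CommRing k] [CommGroup G]
    (ρ : G →* RingAut k) (n : ℕ) (δ : k) (hδ : IsUnit δ) (q : ℕ) :
    Nonempty ((barTor k (GBAlg k G ρ n δ) (GBaug k G ρ n δ) q) ≃ₗ[k]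
      (groupTor k ((Fin n → G) ⋊[permMulAut G n] Equiv.Perm (Fin n)) q)) := by
  exact GBH.main_iso k G ρ n δ hδ q
end
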